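/- arXiv:2001.11566 — 9 statements merged into one kernel-verified Lean document; each statement's English description precedes it below -/
import Mathlib

section
/- Let G=(V,E) be a finite connected simple graph, S a finite set, and μ a fully supported, nearest-neighbor probability measure on functions f : V → S. Set α := max over v ∈ V of the sum over u ∈ V∖{v} of the influence I_{u→v}, and assume Dobrushin's uniqueness condition α < 1. Then μ satisfies strong spatial mixing with constants C = 1 and c = −log α: for any subsets B, U ⊆ V and any feasible τ₁, τ₂ : B → S, the total variation distance between μ^{τ₁}_U and μ^{τ₂}_U is at most |U|·α^{d_G(U, B_{τ₁,τ₂})}. Moreover, for any B ⊆ V and feasible τ₁, τ₂ : B → S there exists a coupling (f¹, f²) with f¹ distributed as μ^{τ₁} and f² distributed as μ^{τ₂} such that for every u ∈ V, the probability that f¹(u) ≠ f²(u) is at most α^{d_G(u, B_{τ₁,τ₂})}. -/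
/-! The theorem follows from a single well-chosen coupling of `μ^τ₁` and `μ^τ₂`. Writing `p_u` for
the probability that the two configurations disagree at `u`, the coupling is required to satisfy
Dobrushin's inequality `p_v ≤ ∑_{u ≠ v} I_{u→v} p_u` at every `v ∉ B`.

To obtain it without running Glauber dynamics to convergence, take a coupling minimising `∑ p_u`;
one exists because the couplings form a nonempty compact set (`exists_min_coupling`). Resampling
both spins at `v ∉ B` from the optimal coupling of their conditional distributions preserves the
two marginals (`IsCoupling.resample`, from `cond_stationary`), leaves `p_u` unchanged for `u ≠ v`,
and makes `p_v` at most `∑_{u ≠ v} I_{u→v} p_u` (`disProb_resample_self_le`, by changing boundary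
spins one at a time). Minimality then forces the inequality (`exists_dobrushin_coupling`).

Disagreement vanishes on `B` off the disagreement set `D`, and only neighbours influence `v`, so
induction on `k` gives `p_v ≤ α ^ k` whenever `d(v, D) ≥ k` (`exists_decay_coupling`). The bound on
the total variation distance is the coupling inequality with a union bound over `U`
(`tvDist_marg_le`). With `D = ∅` the convention is `setDist = 0`, and the bounds reduce to
`p_v ≤ 1`. -/

noncomputable section

namespace Stmt0

variable {V S : Type*}

/-- The probability of an event under a measure given by a weight function. -/
def prob (μ : (V → S) → ℝ) (E : Set (V → S)) : ℝ := ∑' f : V → S, E.indicator μ f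

/-- Agreement with `τ` on `B`. -/
def Agrees (B : Set V) (τ : V → S) (f : V → S) : Prop := ∀ v ∈ B, f v = τ v

/-- `τ` (viewed as a partial configuration on `B`) is feasible for `μ`. -/
def Feasible (μ : (V → S) → ℝ) (B : Set V) (τ : V → S) : Prop :=
  0 < prob μ {f | Agrees B τ f}

/-- `μ` conditioned on agreeing with `τ` on `B`. -/
def cond (μ : (V → S) → ℝ) (B : Set V) (τ : V → S) : (V → S) → ℝ :=
  fun f => {g | Agrees B τ g}.indicator μ f / prob μ {g | Agrees B τ g}

/-- The marginal of `ν` on `U`, as a measure on functions `U → S`. -/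
def marg (ν : (V → S) → ℝ) (U : Set V) : (↥U → S) → ℝ :=
  fun g => ∑' f : V → S, {f : V → S | ∀ u : ↥U, f u.1 = g u}.indicator ν f

/-- Total variation distance: the maximal value of `|ν₁(A) - ν₂(A)|` over events `A`. -/
def tvDist {X : Type*} (ν₁ ν₂ : X → ℝ) : ℝ :=
  ⨆ E : Set X, |(∑' x : X, E.indicator ν₁ x) - (∑' x : X, E.indicator ν₂ x)|

/-- The influence of `u` on `v`: the maximal total variation distance between the marginal
distributions at `v` conditioned on two configurations on `V \ {v}` differing only at `u`. -/
def influence (μ : (V → S) → ℝ) (u v : V) : ℝ :=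
  ⨆ p : {p : (V → S) × (V → S) // ∀ w, w ≠ v → w ≠ u → p.1 w = p.2 w},
    tvDist (marg (cond μ {v}ᶜ p.1.1) {v}) (marg (cond μ {v}ᶜ p.1.2) {v})

/-- Dobrushin's coefficient: `α = max_v ∑_{u ≠ v} I_{u→v}`. -/
def alpha [Fintype V] [DecidableEq V] (μ : (V → S) → ℝ) : ℝ :=
  ⨆ v : V, ∑ u ∈ Finset.univ.erase v, influence μ u v

/-- The graph distance between two sets of vertices. -/
def setDist (G : SimpleGraph V) (U D : Set V) : ℕ :=
  sInf {n | ∃ u ∈ U, ∃ w ∈ D, G.dist u w = n}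

/-- The disagreement set of two boundary conditions `τ₁, τ₂` on `B`. -/
def disag (B : Set V) (τ₁ τ₂ : V → S) : Set V := {v | v ∈ B ∧ τ₁ v ≠ τ₂ v}

set_option linter.unusedSectionVars false

/-! ### Optimal couplings on a finite set -/

/-- The mass `∑ (a - b)⁺`, which is the total variation distance of `a` and `b` when the two
have equal total mass. -/
def posDist [Fintype S] (a b : S → ℝ) : ℝ := ∑ x, max (a x - b x) 0

open Classical in
/-- The weight of `(x, y)` under the maximal coupling of `a` and `b`: the common part `min a b`
sits on the diagonal, the excesses `(a - b)⁺` and `(b - a)⁺` are coupled independently. When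
`posDist a b = 0` the division by zero gives `0`, which is the right value as there is no excess. -/
def optCoupling [Fintype S] (a b : S → ℝ) (x y : S) : ℝ :=
  (if x = y then min (a x) (b x) else 0) + max (a x - b x) 0 * max (b y - a y) 0 / posDist a b

section OptCoupling

variable [Fintype S]

lemma posDist_nonneg (a b : S → ℝ) : 0 ≤ posDist a b :=
  Finset.sum_nonneg fun _ _ => le_max_right _ _

lemma posDist_self (a : S → ℝ) : posDist a a = 0 := by simp [posDist]

lemma posDist_triangle (a b c : S → ℝ) : posDist a c ≤ posDist a b + posDist b c := by
  unfold posDist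
  rw [← Finset.sum_add_distrib]
  refine Finset.sum_le_sum fun x _ => ?_
  refine max_le ?_ (by positivity)
  linarith [le_max_left (a x - b x) 0, le_max_left (b x - c x) 0]

lemma posDist_comm {a b : S → ℝ} (h : ∑ x, a x = ∑ x, b x) : posDist a b = posDist b a := by
  have h1 : posDist a b - posDist b a = ∑ x, (a x - b x) := by
    unfold posDist
    rw [← Finset.sum_sub_distrib]
    refine Finset.sum_congr rfl fun x _ => ?_
    rcases le_total (a x) (b x) with hx | hx
    · rw [max_eq_right (by linarith), max_eq_left (by linarith)]; ring
    · rw [max_eq_left (by linarith), max_eq_right (by linarith)]; ring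
  rw [Finset.sum_sub_distrib, h] at h1
  linarith

lemma excess_mul_div (a b : S → ℝ) (x : S) :
    max (a x - b x) 0 * posDist a b / posDist a b = max (a x - b x) 0 := by
  by_cases h : posDist a b = 0
  · have := (Finset.sum_eq_zero_iff_of_nonneg
      (fun x _ => le_max_right (a x - b x) 0)).1 h x (Finset.mem_univ x)
    simp [this]
  · field_simp

lemma min_add_excess (s t : ℝ) : min s t + max (s - t) 0 = s := by
  rcases le_total s t with h | h
  · rw [min_eq_left h, max_eq_right (by linarith)]; ring
  · rw [min_eq_right h, max_eq_left (by linarith)]; ring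

lemma optCoupling_nonneg {a b : S → ℝ} (ha : ∀ x, 0 ≤ a x) (hb : ∀ x, 0 ≤ b x) (x y : S) :
    0 ≤ optCoupling a b x y := by
  unfold optCoupling
  refine add_nonneg ?_ (div_nonneg (by positivity) (posDist_nonneg a b))
  split_ifs
  · exact le_min (ha x) (hb x)
  · exact le_rfl

lemma sum_optCoupling_right {a b : S → ℝ} (h : ∑ x, a x = ∑ x, b x) (x : S) :
    ∑ y, optCoupling a b x y = a x := by
  classical
  unfold optCoupling
  rw [Finset.sum_add_distrib, Finset.sum_ite_eq, if_pos (Finset.mem_univ x),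
    ← Finset.sum_div, ← Finset.mul_sum]
  change _ + _ * posDist b a / _ = _
  rw [← posDist_comm h, excess_mul_div, min_add_excess]

lemma sum_optCoupling_left {a b : S → ℝ} (h : ∑ x, a x = ∑ x, b x) (y : S) :
    ∑ x, optCoupling a b x y = b y := by
  classical
  unfold optCoupling
  rw [Finset.sum_add_distrib, Finset.sum_ite_eq', if_pos (Finset.mem_univ y),
    ← Finset.sum_div, ← Finset.sum_mul]
  change _ + posDist a b * _ / _ = _
  rw [posDist_comm h, mul_comm, excess_mul_div, min_comm, min_add_excess]

open Classical in
lemma optCoupling_ne_le {a b : S → ℝ} (h : ∑ x, a x = ∑ x, b x) :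
    ∑ x, ∑ y, optCoupling a b x y * (if x ≠ y then 1 else 0) ≤ posDist a b := by
  calc ∑ x, ∑ y, optCoupling a b x y * (if x ≠ y then 1 else 0)
      ≤ ∑ x, ∑ y, max (a x - b x) 0 * max (b y - a y) 0 / posDist a b := by
        refine Finset.sum_le_sum fun x _ => Finset.sum_le_sum fun y _ => ?_
        have : 0 ≤ max (a x - b x) 0 * max (b y - a y) 0 / posDist a b :=
          div_nonneg (by positivity) (posDist_nonneg a b)
        unfold optCoupling
        by_cases hxy : x = y
        · subst hxy; simpa using this
        · simp [hxy]
    _ = posDist a b := by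
        refine Finset.sum_congr rfl fun x _ => ?_
        rw [← Finset.sum_div, ← Finset.mul_sum]
        change _ * posDist b a / _ = _
        rw [← posDist_comm h, excess_mul_div]

end OptCoupling

/-! ### Single-site conditional distributions and influences -/

section Site

variable [Fintype V] [Fintype S] [DecidableEq V]

/-- The conditional distribution of the spin at `v` given that the configuration agrees with `f`
off `v`. The value `f v` plays no role. -/
def site (μ : (V → S) → ℝ) (v : V) (f : V → S) (x : S) : ℝ :=
  μ (Function.update f v x) / ∑ s, μ (Function.update f v s)

lemma site_den_pos {μ : (V → S) → ℝ} (hμ : ∀ f, 0 < μ f) (v : V) (f : V → S) :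
    0 < ∑ s, μ (Function.update f v s) :=
  Finset.sum_pos (fun _ _ => hμ _) ⟨f v, Finset.mem_univ _⟩

lemma site_nonneg {μ : (V → S) → ℝ} (hμ : ∀ f, 0 < μ f) (v : V) (f : V → S) (x : S) :
    0 ≤ site μ v f x :=
  div_nonneg (hμ _).le (site_den_pos hμ v f).le

lemma sum_site {μ : (V → S) → ℝ} (hμ : ∀ f, 0 < μ f) (v : V) (f : V → S) :
    ∑ x, site μ v f x = 1 := by
  unfold site
  rw [← Finset.sum_div]
  exact div_self (site_den_pos hμ v f).ne'

lemma update_eq_of_agree {f g : V → S} {v : V} (h : ∀ w, w ≠ v → f w = g w) (x : S) :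
    Function.update f v x = Function.update g v x := by
  ext w
  by_cases hw : w = v
  · subst hw; simp
  · simp [hw, h w hw]

lemma site_congr (μ : (V → S) → ℝ) {f g : V → S} {v : V} (h : ∀ w, w ≠ v → f w = g w) :
    site μ v f = site μ v g := by
  ext x
  simp only [site, update_eq_of_agree h]

open Classical in
lemma sum_agree_off (F : (V → S) → ℝ) (v : V) (f : V → S) :
    ∑ g, (if ∀ w, w ≠ v → g w = f w then F g else 0) = ∑ s, F (Function.update f v s) := by
  rw [← Finset.sum_filter]
  refine Finset.sum_bij' (fun g _ => g v) (fun s _ => Function.update f v s) ?_ ?_ ?_ ?_ ?_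
  · simp
  · intro s _
    simp only [Finset.mem_filter, Finset.mem_univ, true_and]
    intro w hw
    simp [hw]
  · intro g hg
    simp only [Finset.mem_filter, Finset.mem_univ, true_and] at hg
    rw [← update_eq_of_agree hg]; simp
  · simp
  · intro g hg
    simp only [Finset.mem_filter, Finset.mem_univ, true_and] at hg
    rw [← update_eq_of_agree hg]; simp

lemma prob_compl (μ : (V → S) → ℝ) (v : V) (f : V → S) :
    prob μ {g | Agrees {v}ᶜ f g} = ∑ s, μ (Function.update f v s) := by
  classical
  rw [prob, tsum_fintype, ← sum_agree_off]
  refine Finset.sum_congr rfl fun g _ => ?_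
  simp [Set.indicator_apply, Agrees]

lemma marg_cond_compl (μ : (V → S) → ℝ) (v : V) (f : V → S) (h : ↥({v} : Set V) → S) :
    marg (cond μ {v}ᶜ f) {v} h = site μ v f (h ⟨v, rfl⟩) := by
  classical
  have h1 : marg (cond μ {v}ᶜ f) {v} h = ∑ g, (if ∀ w, w ≠ v → g w = f w then
      (if g v = h ⟨v, rfl⟩ then μ g / ∑ s, μ (Function.update f v s) else 0) else 0) := by
    rw [marg, tsum_fintype]
    refine Finset.sum_congr rfl fun g _ => ?_
    have e1 : (∀ u : ↥({v} : Set V), g u.1 = h u) ↔ g v = h ⟨v, rfl⟩ := by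
      constructor
      · intro H; exact H ⟨v, rfl⟩
      · rintro H ⟨u, rfl⟩; exact H
    simp only [Set.indicator_apply, Set.mem_ofPred_eq, e1, cond, prob_compl]
    by_cases c1 : g v = h ⟨v, rfl⟩ <;> simp [Agrees, c1, ite_div]
  rw [h1, sum_agree_off]
  simp [site]

lemma posDist_site_le_tvDist (μ : (V → S) → ℝ) (v : V) (f g : V → S) :
    posDist (site μ v f) (site μ v g) ≤
      tvDist (marg (cond μ {v}ᶜ f) {v}) (marg (cond μ {v}ᶜ g) {v}) := by
  classical
  let E : Set (↥({v} : Set V) → S) :=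
    {h | site μ v g (h ⟨v, rfl⟩) ≤ site μ v f (h ⟨v, rfl⟩)}
  have hE : posDist (site μ v f) (site μ v g) =
      (∑' x, E.indicator (marg (cond μ {v}ᶜ f) {v}) x)
        - ∑' x, E.indicator (marg (cond μ {v}ᶜ g) {v}) x := by
    rw [tsum_fintype, tsum_fintype, ← Finset.sum_sub_distrib, posDist]
    let e : (↥({v} : Set V) → S) ≃ S := Equiv.funUnique _ _
    rw [← e.sum_comp]
    refine Finset.sum_congr rfl fun h _ => ?_
    have he : e h = h ⟨v, rfl⟩ := rfl
    rw [he]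
    simp only [Set.indicator_apply, marg_cond_compl, E, Set.mem_ofPred_eq]
    split_ifs with c
    · exact max_eq_left (by linarith)
    · rw [sub_zero]; exact max_eq_right (by linarith)
  rw [hE]
  exact (le_abs_self _).trans (le_ciSup (f := fun E : Set (↥({v} : Set V) → S) =>
    |(∑' x, E.indicator (marg (cond μ {v}ᶜ f) {v}) x)
        - ∑' x, E.indicator (marg (cond μ {v}ᶜ g) {v}) x|) (Set.finite_range _).bddAbove E)

lemma posDist_site_le_influence (μ : (V → S) → ℝ) {u v : V} {f g : V → S}
    (h : ∀ w, w ≠ v → w ≠ u → f w = g w) :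
    posDist (site μ v f) (site μ v g) ≤ influence μ u v := by
  classical
  refine (posDist_site_le_tvDist μ v f g).trans ?_
  exact le_ciSup (f := fun p : {p : (V → S) × (V → S) // ∀ w, w ≠ v → w ≠ u → p.1 w = p.2 w} =>
    tvDist (marg (cond μ {v}ᶜ p.1.1) {v}) (marg (cond μ {v}ᶜ p.1.2) {v}))
    (Set.finite_range _).bddAbove ⟨(f, g), h⟩

lemma influence_nonneg (μ : (V → S) → ℝ) (u v : V) : 0 ≤ influence μ u v :=
  Real.iSup_nonneg fun _ => Real.iSup_nonneg fun _ => abs_nonneg _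

lemma sum_influence_le_alpha (μ : (V → S) → ℝ) (v : V) :
    ∑ u ∈ Finset.univ.erase v, influence μ u v ≤ alpha μ :=
  le_ciSup (f := fun v => ∑ u ∈ Finset.univ.erase v, influence μ u v)
    (Set.finite_range _).bddAbove v

lemma alpha_nonneg (μ : (V → S) → ℝ) : 0 ≤ alpha μ :=
  Real.iSup_nonneg fun _ => Finset.sum_nonneg fun _ _ => influence_nonneg _ _ _

/-- Changing the boundary condition one vertex at a time bounds the change of the conditional
distribution at `v` by a sum of influences. -/
lemma posDist_site_le_sum (μ : (V → S) → ℝ) (v : V) (A : Finset V) :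
    ∀ f g : V → S, (∀ w, w ≠ v → w ∉ A → f w = g w) →
      posDist (site μ v f) (site μ v g) ≤ ∑ u ∈ A, influence μ u v := by
  induction A using Finset.induction_on with
  | empty =>
    intro f g h
    rw [site_congr μ fun w hw => h w hw (by simp), posDist_self]
    simp
  | insert u A hu ih =>
    intro f g h
    rw [Finset.sum_insert hu]
    refine (posDist_triangle _ (site μ v (Function.update f u (g u))) _).trans
      (add_le_add ?_ (ih _ _ ?_))
    · refine posDist_site_le_influence μ fun w _ hwu => ?_
      simp [hwu]
    · intro w hwv hwA
      by_cases hwu : w = u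
      · subst hwu; simp
      · simp [hwu, h w hwv (by simp [hwu, hwA])]

end Site

/-! ### Couplings and resampling -/

section Coupling

variable [Fintype V] [Fintype S] [DecidableEq V]

/-- `ν` is a coupling of the weight functions `m₁` and `m₂`. -/
structure IsCoupling (m₁ m₂ : (V → S) → ℝ) (ν : (V → S) × (V → S) → ℝ) : Prop where
  nonneg : ∀ p, 0 ≤ ν p
  left : ∀ f, ∑ g, ν (f, g) = m₁ f
  right : ∀ g, ∑ f, ν (f, g) = m₂ g

open Classical in
/-- The probability under `ν` that the two configurations disagree at `u`. -/
def disProb (ν : (V → S) × (V → S) → ℝ) (u : V) : ℝ :=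
  ∑ p, ν p * (if p.1 u ≠ p.2 u then 1 else 0)

open Classical in
/-- The law of a pair drawn from `ν` after both spins at `v` are resampled, using the optimal
coupling of the two conditional distributions at `v`. -/
def resample (μ : (V → S) → ℝ) (v : V) (ν : (V → S) × (V → S) → ℝ) :
    (V → S) × (V → S) → ℝ := fun q =>
  ∑ p, ν p * ∑ x, ∑ y, optCoupling (site μ v p.1) (site μ v p.2) x y *
    (if (Function.update p.1 v x, Function.update p.2 v y) = q then 1 else 0)

lemma sum_resample (μ : (V → S) → ℝ) (v : V) (ν : (V → S) × (V → S) → ℝ)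
    (φ : (V → S) × (V → S) → ℝ) :
    ∑ q, resample μ v ν q * φ q = ∑ p, ν p * ∑ x, ∑ y,
      optCoupling (site μ v p.1) (site μ v p.2) x y *
        φ (Function.update p.1 v x, Function.update p.2 v y) := by
  classical
  unfold resample
  simp_rw [Finset.sum_mul]
  rw [Finset.sum_comm]
  refine Finset.sum_congr rfl fun p _ => ?_
  simp_rw [mul_assoc, ← Finset.mul_sum, Finset.sum_mul]
  congr 1
  rw [Finset.sum_comm]
  refine Finset.sum_congr rfl fun x _ => ?_
  rw [Finset.sum_comm]
  refine Finset.sum_congr rfl fun y _ => ?_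
  simp_rw [mul_assoc, ← Finset.mul_sum]
  simp

open Classical in
/-- The conditioned measure is stationary under resampling the spin at a vertex off `B`. -/
lemma cond_stationary {μ : (V → S) → ℝ} (hμ : ∀ f, 0 < μ f) {B : Set V} (τ : V → S) {v : V}
    (hv : v ∉ B) (f₀ : V → S) :
    ∑ f, cond μ B τ f * ∑ x, site μ v f x * (if Function.update f v x = f₀ then 1 else 0)
      = cond μ B τ f₀ := by
  have h1 : ∀ f : V → S,
      cond μ B τ f * ∑ x, site μ v f x * (if Function.update f v x = f₀ then 1 else 0)
        = if ∀ w, w ≠ v → f w = f₀ w then cond μ B τ f * site μ v f₀ (f₀ v) else 0 := by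
    intro f
    split_ifs with h
    · rw [site_congr μ h]
      congr 1
      rw [Finset.sum_eq_single (f₀ v)]
      · rw [update_eq_of_agree h]; simp
      · intro x _ hx
        rw [if_neg, mul_zero]
        rintro rfl
        simp at hx
      · simp
    · rw [Finset.sum_eq_zero, mul_zero]
      intro x _
      rw [if_neg, mul_zero]
      rintro rfl
      exact h fun w hw => by simp [hw]
  rw [Finset.sum_congr rfl fun f _ => h1 f,
    sum_agree_off (fun f => cond μ B τ f * site μ v f₀ (f₀ v)), ← Finset.sum_mul]
  have h2 : ∀ s, cond μ B τ (Function.update f₀ v s) =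
      (if Agrees B τ f₀ then (1 : ℝ) else 0) / prob μ {g | Agrees B τ g}
        * μ (Function.update f₀ v s) := by
    intro s
    have : Agrees B τ (Function.update f₀ v s) ↔ Agrees B τ f₀ := by
      refine forall₂_congr fun w hw => ?_
      have : w ≠ v := fun h => hv (h ▸ hw)
      simp [this]
    simp only [cond, Set.indicator_apply, Set.mem_ofPred_eq, this]
    split_ifs <;> ring
  have h3 := h2 (f₀ v)
  rw [Function.update_eq_self] at h3
  simp_rw [h2, ← Finset.mul_sum]
  rw [h3, site, Function.update_eq_self]
  have := (site_den_pos hμ v f₀).ne'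
  field_simp

lemma IsCoupling.resample {μ : (V → S) → ℝ} (hμ : ∀ f, 0 < μ f) {B : Set V} {τ₁ τ₂ : V → S}
    {v : V} (hv : v ∉ B) {ν : (V → S) × (V → S) → ℝ}
    (h : IsCoupling (cond μ B τ₁) (cond μ B τ₂) ν) :
    IsCoupling (cond μ B τ₁) (cond μ B τ₂) (resample μ v ν) := by
  classical
  have hs : ∀ f g : V → S, ∑ x, site μ v f x = ∑ x, site μ v g x := fun f g => by
    rw [sum_site hμ, sum_site hμ]
  refine ⟨fun q => ?_, fun f₀ => ?_, fun g₀ => ?_⟩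
  · refine Finset.sum_nonneg fun p _ => mul_nonneg (h.nonneg p) <|
      Finset.sum_nonneg fun x _ => Finset.sum_nonneg fun y _ => mul_nonneg
        (optCoupling_nonneg (site_nonneg hμ v _) (site_nonneg hμ v _) x y) ?_
    split_ifs <;> norm_num
  · have := sum_resample μ v ν (fun q => if q.1 = f₀ then 1 else 0)
    rw [Fintype.sum_prod_type, Fintype.sum_prod_type] at this
    simp only [mul_ite, mul_one, mul_zero, Finset.sum_ite_irrel, Finset.sum_const_zero,
      Finset.sum_ite_eq', Finset.mem_univ, if_true] at this
    rw [this, ← cond_stationary hμ τ₁ hv f₀]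
    refine Finset.sum_congr rfl fun f _ => ?_
    simp only [sum_optCoupling_right (hs _ _), mul_ite, mul_one, mul_zero]
    rw [← Finset.sum_mul, h.left]
  · have := sum_resample μ v ν (fun q => if q.2 = g₀ then 1 else 0)
    rw [Fintype.sum_prod_type_right, Fintype.sum_prod_type_right] at this
    simp only [mul_ite, mul_one, mul_zero, Finset.sum_ite_irrel, Finset.sum_const_zero,
      Finset.sum_ite_eq', Finset.mem_univ, if_true] at this
    rw [this, ← cond_stationary hμ τ₂ hv g₀]
    refine Finset.sum_congr rfl fun g _ => ?_
    rw [← h.right, Finset.sum_mul]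
    refine Finset.sum_congr rfl fun f _ => ?_
    rw [Finset.sum_comm]
    simp only [Finset.sum_ite_irrel, Finset.sum_const_zero, sum_optCoupling_left (hs _ _), mul_ite,
      mul_one, mul_zero]

lemma disProb_resample_of_ne {μ : (V → S) → ℝ} (hμ : ∀ f, 0 < μ f) {u v : V} (huv : u ≠ v)
    (ν : (V → S) × (V → S) → ℝ) : disProb (resample μ v ν) u = disProb ν u := by
  classical
  unfold disProb
  rw [sum_resample]
  refine Finset.sum_congr rfl fun p _ => ?_
  congr 1
  simp only [Function.update_of_ne huv, ← Finset.sum_mul]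
  rw [Finset.sum_congr rfl fun x _ => sum_optCoupling_right
    (by rw [sum_site hμ, sum_site hμ]) x, sum_site hμ, one_mul]

lemma disProb_resample_self_le {μ : (V → S) → ℝ} (hμ : ∀ f, 0 < μ f) (v : V)
    {ν : (V → S) × (V → S) → ℝ} (hν : ∀ p, 0 ≤ ν p) :
    disProb (resample μ v ν) v ≤ ∑ u ∈ Finset.univ.erase v, influence μ u v * disProb ν u := by
  classical
  have hr : ∑ u ∈ Finset.univ.erase v, influence μ u v * disProb ν u =
      ∑ p, ν p * ∑ u ∈ Finset.univ.erase v, if p.1 u ≠ p.2 u then influence μ u v else 0 := by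
    simp_rw [disProb, Finset.mul_sum]
    rw [Finset.sum_comm]
    refine Finset.sum_congr rfl fun p _ => Finset.sum_congr rfl fun u _ => ?_
    split_ifs <;> ring
  rw [hr, disProb, sum_resample]
  refine Finset.sum_le_sum fun p _ => mul_le_mul_of_nonneg_left ?_ (hν p)
  simp only [Function.update_self]
  refine (optCoupling_ne_le (by rw [sum_site hμ, sum_site hμ])).trans ?_
  rw [← Finset.sum_filter]
  refine posDist_site_le_sum μ v _ _ _ fun w hwv hw => ?_
  simpa [hwv] using hw

lemma sum_cond {μ : (V → S) → ℝ} {B : Set V} {τ : V → S} (h : Feasible μ B τ) :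
    ∑ f, cond μ B τ f = 1 := by
  unfold cond
  rw [← Finset.sum_div, ← tsum_fintype (L := .unconditional _)]
  exact div_self (ne_of_gt h)

lemma cond_nonneg {μ : (V → S) → ℝ} (hμ : ∀ f, 0 < μ f) {B : Set V} {τ : V → S}
    (h : Feasible μ B τ) (f : V → S) : 0 ≤ cond μ B τ f :=
  div_nonneg (Set.indicator_nonneg (fun _ _ => (hμ _).le) _) (le_of_lt h)

lemma cond_eq_zero (μ : (V → S) → ℝ) {B : Set V} {τ f : V → S} {v : V} (hv : v ∈ B)
    (hf : f v ≠ τ v) : cond μ B τ f = 0 := by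
  have : f ∉ {g | Agrees B τ g} := fun H => hf (H v hv)
  simp [cond, Set.indicator_of_notMem this]

lemma IsCoupling.le_left {m₁ m₂ : (V → S) → ℝ} {ν : (V → S) × (V → S) → ℝ}
    (h : IsCoupling m₁ m₂ ν) (p : (V → S) × (V → S)) : ν p ≤ m₁ p.1 := by
  rw [← h.left]
  exact Finset.single_le_sum (f := fun g => ν (p.1, g)) (fun g _ => h.nonneg _)
    (Finset.mem_univ p.2)

lemma IsCoupling.le_right {m₁ m₂ : (V → S) → ℝ} {ν : (V → S) × (V → S) → ℝ}
    (h : IsCoupling m₁ m₂ ν) (p : (V → S) × (V → S)) : ν p ≤ m₂ p.2 := by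
  rw [← h.right]
  exact Finset.single_le_sum (f := fun f => ν (f, p.2)) (fun g _ => h.nonneg _)
    (Finset.mem_univ p.1)

lemma IsCoupling.sum_eq {m₁ m₂ : (V → S) → ℝ} {ν : (V → S) × (V → S) → ℝ}
    (h : IsCoupling m₁ m₂ ν) : ∑ p, ν p = ∑ f, m₁ f := by
  rw [Fintype.sum_prod_type]
  exact Finset.sum_congr rfl fun f _ => h.left f

lemma disProb_nonneg {ν : (V → S) × (V → S) → ℝ} (h : ∀ p, 0 ≤ ν p) (u : V) :
    0 ≤ disProb ν u := by
  classical
  refine Finset.sum_nonneg fun p _ => mul_nonneg (h p) ?_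
  split_ifs <;> norm_num

lemma disProb_le_sum {ν : (V → S) × (V → S) → ℝ} (h : ∀ p, 0 ≤ ν p) (u : V) :
    disProb ν u ≤ ∑ p, ν p := by
  classical
  refine Finset.sum_le_sum fun p _ => mul_le_of_le_one_right (h p) ?_
  split_ifs <;> norm_num

lemma disProb_eq_zero {μ : (V → S) → ℝ} {B : Set V} {τ₁ τ₂ : V → S}
    {ν : (V → S) × (V → S) → ℝ} (h : IsCoupling (cond μ B τ₁) (cond μ B τ₂) ν)
    {u : V} (hu : u ∈ B) (hτ : τ₁ u = τ₂ u) : disProb ν u = 0 := by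
  classical
  refine Finset.sum_eq_zero fun p _ => ?_
  split_ifs with hp
  · rw [mul_one]
    refine le_antisymm ?_ (h.nonneg p)
    by_cases h1 : p.1 u = τ₁ u
    · exact (h.le_right p).trans_eq
        (cond_eq_zero μ hu fun h2 => hp (by rw [h1, h2, hτ]))
    · exact (h.le_left p).trans_eq (cond_eq_zero μ hu h1)
  · exact mul_zero _

/-- A coupling minimising the expected number of disagreements exists by compactness. -/
lemma exists_min_coupling {m₁ m₂ : (V → S) → ℝ} (h₁ : ∀ f, 0 ≤ m₁ f) (h₂ : ∀ f, 0 ≤ m₂ f)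
    (s₁ : ∑ f, m₁ f = 1) (s₂ : ∑ f, m₂ f = 1) :
    ∃ ν, IsCoupling m₁ m₂ ν ∧
      ∀ ν', IsCoupling m₁ m₂ ν' → ∑ u, disProb ν u ≤ ∑ u, disProb ν' u := by
  classical
  let K : Set ((V → S) × (V → S) → ℝ) := {ν | IsCoupling m₁ m₂ ν}
  have hK : K = (⋂ p, {ν | 0 ≤ ν p}) ∩ (⋂ f, {ν | ∑ g, ν (f, g) = m₁ f}) ∩
      (⋂ g, {ν | ∑ f, ν (f, g) = m₂ g}) := by
    ext ν
    simp only [K, Set.mem_ofPred_eq, Set.mem_inter_iff, Set.mem_iInter]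
    exact ⟨fun h => ⟨⟨h.nonneg, h.left⟩, h.right⟩, fun h => ⟨h.1.1, h.1.2, h.2⟩⟩
  have hclosed : IsClosed K := by
    rw [hK]
    refine ((isClosed_iInter fun p => ?_).inter (isClosed_iInter fun f => ?_)).inter
      (isClosed_iInter fun g => ?_)
    · exact isClosed_le (by fun_prop) (by fun_prop)
    · exact isClosed_eq (by fun_prop) (by fun_prop)
    · exact isClosed_eq (by fun_prop) (by fun_prop)
  have hcomp : IsCompact K := by
    refine (isCompact_univ_pi (s := fun p : (V → S) × (V → S) => Set.Icc 0 (m₁ p.1))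
      fun p => isCompact_Icc).of_isClosed_subset hclosed ?_
    intro ν hν p _
    exact ⟨hν.nonneg p, hν.le_left p⟩
  have hne : K.Nonempty := by
    refine ⟨fun p => m₁ p.1 * m₂ p.2, fun p => mul_nonneg (h₁ _) (h₂ _), fun f => ?_, fun g => ?_⟩
    · change ∑ g, m₁ f * m₂ g = m₁ f
      rw [← Finset.mul_sum, s₂, mul_one]
    · change ∑ f, m₁ f * m₂ g = m₂ g
      rw [← Finset.sum_mul, s₁, one_mul]
  have hcont : Continuous fun ν : (V → S) × (V → S) → ℝ => ∑ u, disProb ν u := by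
    unfold disProb; fun_prop
  obtain ⟨ν, hν, hmin⟩ := hcomp.exists_isMinOn hne hcont.continuousOn
  exact ⟨ν, hν, fun ν' h' => hmin h'⟩

/-- Some coupling satisfies Dobrushin's inequality at every vertex off `B`: were it to fail at `v`
for a minimiser of the expected number of disagreements, resampling `v` would decrease it. -/
lemma exists_dobrushin_coupling {μ : (V → S) → ℝ} (hμ : ∀ f, 0 < μ f) {B : Set V}
    {τ₁ τ₂ : V → S} (h₁ : Feasible μ B τ₁) (h₂ : Feasible μ B τ₂) :
    ∃ ν, IsCoupling (cond μ B τ₁) (cond μ B τ₂) ν ∧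
      ∀ v ∉ B, disProb ν v ≤ ∑ u ∈ Finset.univ.erase v, influence μ u v * disProb ν u := by
  obtain ⟨ν, hν, hmin⟩ := exists_min_coupling (cond_nonneg hμ h₁) (cond_nonneg hμ h₂)
    (sum_cond h₁) (sum_cond h₂)
  refine ⟨ν, hν, fun v hv => ?_⟩
  refine le_trans ?_ (disProb_resample_self_le hμ v hν.nonneg)
  have h := hmin _ (hν.resample hμ hv)
  rw [← Finset.add_sum_erase _ _ (Finset.mem_univ v),
    ← Finset.add_sum_erase _ (fun u => disProb (resample μ v ν) u) (Finset.mem_univ v),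
    Finset.sum_congr rfl fun u hu =>
      disProb_resample_of_ne hμ (Finset.ne_of_mem_erase hu) ν] at h
  exact le_of_add_le_add_right h

end Coupling

/-! ### Decay with the graph distance -/

lemma setDist_le {G : SimpleGraph V} {U D : Set V} {u w : V} (hu : u ∈ U) (hw : w ∈ D) :
    setDist G U D ≤ G.dist u w :=
  Nat.sInf_le ⟨u, hu, w, hw, rfl⟩

lemma exists_setDist_singleton (G : SimpleGraph V) (u : V) {D : Set V} (hD : D.Nonempty) :
    ∃ w ∈ D, G.dist u w = setDist G {u} D := by
  obtain ⟨w, hw⟩ := hD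
  obtain ⟨u', hu', w', hw', h⟩ :=
    Nat.sInf_mem (s := {n | ∃ u' ∈ ({u} : Set V), ∃ w ∈ D, G.dist u' w = n})
      ⟨_, u, rfl, w, hw, rfl⟩
  rw [Set.mem_singleton_iff] at hu'
  subst hu'
  exact ⟨w', hw', h⟩

lemma setDist_empty (G : SimpleGraph V) (U : Set V) : setDist G U ∅ = 0 := by
  simp [setDist]

lemma setDist_le_singleton (G : SimpleGraph V) {U D : Set V} {u : V} (hu : u ∈ U) :
    setDist G U D ≤ setDist G {u} D := by
  rcases D.eq_empty_or_nonempty with rfl | hD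
  · simp [setDist_empty]
  · obtain ⟨w, hw, h⟩ := exists_setDist_singleton G u hD
    exact (setDist_le hu hw).trans_eq h

lemma setDist_adj {G : SimpleGraph V} (hG : G.Connected) {D : Set V} (hD : D.Nonempty) {u v : V}
    (h : G.Adj u v) : setDist G {v} D ≤ setDist G {u} D + 1 := by
  obtain ⟨w, hw, e⟩ := exists_setDist_singleton G u hD
  have h1 : setDist G {v} D ≤ G.dist v w := setDist_le rfl hw
  have h2 := hG.dist_triangle (u := v) (v := u) (w := w)
  rw [SimpleGraph.dist_eq_one_iff_adj.2 h.symm] at h2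
  omega

section Decay

variable [Fintype V] [Fintype S] [DecidableEq V]

lemma exists_decay_coupling (G : SimpleGraph V) (hconn : G.Connected) {μ : (V → S) → ℝ}
    (hμ : ∀ f, 0 < μ f) (hnn : ∀ u v : V, u ≠ v → ¬ G.Adj u v → influence μ u v = 0)
    {B : Set V} {τ₁ τ₂ : V → S} (h₁ : Feasible μ B τ₁) (h₂ : Feasible μ B τ₂) :
    ∃ ν, IsCoupling (cond μ B τ₁) (cond μ B τ₂) ν ∧
      ∀ u, disProb ν u ≤ alpha μ ^ setDist G {u} (disag B τ₁ τ₂) := by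
  obtain ⟨ν, hν, hd⟩ := exists_dobrushin_coupling hμ h₁ h₂
  refine ⟨ν, hν, ?_⟩
  have hle : ∀ u, disProb ν u ≤ 1 := fun u =>
    (disProb_le_sum hν.nonneg u).trans_eq (hν.sum_eq.trans (sum_cond h₁))
  rcases (disag B τ₁ τ₂).eq_empty_or_nonempty with hD | hD
  · intro u
    rw [hD, setDist_empty, pow_zero]
    exact hle u
  have key : ∀ k v, k ≤ setDist G {v} (disag B τ₁ τ₂) → disProb ν v ≤ alpha μ ^ k := by
    intro k
    induction k with
    | zero => intro v _; simpa using hle v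
    | succ k ih =>
      intro v hk
      by_cases hv : v ∈ B
      · have hvD : v ∉ disag B τ₁ τ₂ := by
          intro hvD
          have := setDist_le (G := G) (U := {v}) rfl hvD
          rw [SimpleGraph.dist_self] at this
          omega
        have hτ : τ₁ v = τ₂ v := by
          by_contra hne
          exact hvD ⟨hv, hne⟩
        rw [disProb_eq_zero hν hv hτ]
        exact pow_nonneg (alpha_nonneg μ) _
      · calc disProb ν v
            ≤ ∑ u ∈ Finset.univ.erase v, influence μ u v * disProb ν u := hd v hv
          _ ≤ ∑ u ∈ Finset.univ.erase v, influence μ u v * alpha μ ^ k := by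
              refine Finset.sum_le_sum fun u hu => ?_
              by_cases ha : G.Adj u v
              · have := setDist_adj hconn hD ha
                exact mul_le_mul_of_nonneg_left (ih u (by omega)) (influence_nonneg μ u v)
              · rw [hnn u v (Finset.ne_of_mem_erase hu) ha, zero_mul, zero_mul]
          _ ≤ alpha μ ^ (k + 1) := by
              rw [← Finset.sum_mul, pow_succ']
              exact mul_le_mul_of_nonneg_right (sum_influence_le_alpha μ v)
                (pow_nonneg (alpha_nonneg μ) _)
  exact fun u => key _ u le_rfl

open Classical in
lemma sum_indicator_marg (m : (V → S) → ℝ) (U : Set V) (E : Set (↥U → S)) :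
    ∑' h, E.indicator (marg m U) h = ∑ f, m f * (if (fun u : ↥U => f u.1) ∈ E then 1 else 0) := by
  have : ∀ h, E.indicator (marg m U) h =
      ∑ f, if (fun u : ↥U => f u.1) = h then (if h ∈ E then m f else 0) else 0 := by
    intro h
    rw [Set.indicator_apply, marg, tsum_fintype]
    split_ifs with hE
    · refine Finset.sum_congr rfl fun f _ => ?_
      simp [Set.indicator_apply, funext_iff]
    · simp
  rw [tsum_fintype, Finset.sum_congr rfl fun h _ => this h, Finset.sum_comm]
  refine Finset.sum_congr rfl fun f _ => ?_
  simp

/-- The coupling inequality for marginals, with a union bound over `U`. -/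
lemma tvDist_marg_le {m₁ m₂ : (V → S) → ℝ} {ν : (V → S) × (V → S) → ℝ}
    (h : IsCoupling m₁ m₂ ν) (U : Set V) [Fintype ↥U] :
    tvDist (marg m₁ U) (marg m₂ U) ≤ ∑ u ∈ U.toFinset, disProb ν u := by
  classical
  refine ciSup_le fun E => ?_
  let χ : (V → S) → ℝ := fun f => if (fun u : ↥U => f u.1) ∈ E then 1 else 0
  have e1 : ∑' x, E.indicator (marg m₁ U) x = ∑ p, ν p * χ p.1 := by
    rw [sum_indicator_marg, Fintype.sum_prod_type]
    refine Finset.sum_congr rfl fun f _ => ?_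
    rw [← h.left, Finset.sum_mul]
  have e2 : ∑' x, E.indicator (marg m₂ U) x = ∑ p, ν p * χ p.2 := by
    rw [sum_indicator_marg, Fintype.sum_prod_type_right]
    refine Finset.sum_congr rfl fun f _ => ?_
    rw [← h.right, Finset.sum_mul]
  rw [e1, e2, ← Finset.sum_sub_distrib]
  refine (Finset.abs_sum_le_sum_abs _ _).trans ?_
  unfold disProb
  rw [Finset.sum_comm]
  refine Finset.sum_le_sum fun p _ => ?_
  rw [← mul_sub, abs_mul, abs_of_nonneg (h.nonneg p), ← Finset.mul_sum]
  refine mul_le_mul_of_nonneg_left ?_ (h.nonneg p)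
  have hnn : ∀ u ∈ U.toFinset, (0 : ℝ) ≤ if p.1 u ≠ p.2 u then 1 else 0 := by
    intro u _; split_ifs <;> norm_num
  by_cases hU : ∃ u ∈ U, p.1 u ≠ p.2 u
  · obtain ⟨u, hu, hne⟩ := hU
    have h1 := Finset.single_le_sum hnn (Set.mem_toFinset.2 hu)
    rw [if_pos hne] at h1
    refine le_trans ?_ h1
    simp only [χ]
    split_ifs <;> norm_num
  · push Not at hU
    have : (fun u : ↥U => p.1 u.1) = fun u : ↥U => p.2 u.1 := funext fun u => hU u.1 u.2
    simp only [χ, this, sub_self, abs_zero]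
    exact Finset.sum_nonneg hnn

end Decay

/-- **Dobrushin's uniqueness condition implies strong spatial mixing.**
Let `G` be a finite connected simple graph, `S` a finite spin space, and `μ` a fully
supported, nearest-neighbor probability measure on configurations `V → S`. If Dobrushin's
coefficient satisfies `α < 1`, then: (1) `μ` satisfies strong spatial mixing with constants
`C = 1`, `c = -log α`; and (2) for any boundary conditions there is a coupling `ν` of the two
conditioned measures in which the probability of disagreement at `u` is at most
`α ^ dist(u, B_{τ₁,τ₂})`. -/
theorem dobrushin_uniqueness [Fintype V] [Fintype S] [DecidableEq V]
    (G : SimpleGraph V) (hconn : G.Connected)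
    (μ : (V → S) → ℝ) (hsupp : ∀ f, 0 < μ f) (htotal : ∑' f : V → S, μ f = 1)
    (hnn : ∀ u v : V, u ≠ v → ¬ G.Adj u v → influence μ u v = 0)
    (hα : alpha μ < 1) :
    (∀ (B U : Set V) (τ₁ τ₂ : V → S), Feasible μ B τ₁ → Feasible μ B τ₂ →
      tvDist (marg (cond μ B τ₁) U) (marg (cond μ B τ₂) U)
        ≤ (U.ncard : ℝ) * alpha μ ^ setDist G U (disag B τ₁ τ₂)) ∧
    (∀ (B : Set V) (τ₁ τ₂ : V → S), Feasible μ B τ₁ → Feasible μ B τ₂ →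
      ∃ ν : ((V → S) × (V → S)) → ℝ,
        (∀ p, 0 ≤ ν p) ∧ (∑' p : (V → S) × (V → S), ν p = 1) ∧
        (∀ f, ∑' g : V → S, ν (f, g) = cond μ B τ₁ f) ∧
        (∀ g, ∑' f : V → S, ν (f, g) = cond μ B τ₂ g) ∧
        (∀ u : V,
          ∑' p : (V → S) × (V → S), {p : (V → S) × (V → S) | p.1 u ≠ p.2 u}.indicator ν p
            ≤ alpha μ ^ setDist G {u} (disag B τ₁ τ₂))) := by
  constructor
  · intro B U τ₁ τ₂ h₁ h₂
    classical
    obtain ⟨ν, hν, hd⟩ := exists_decay_coupling G hconn hsupp hnn h₁ h₂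
    refine (tvDist_marg_le hν U).trans ?_
    rw [Set.ncard_eq_toFinset_card', ← nsmul_eq_mul]
    refine Finset.sum_le_card_nsmul _ _ _ fun u hu => (hd u).trans ?_
    exact pow_le_pow_of_le_one (alpha_nonneg μ) hα.le
      (setDist_le_singleton G (Set.mem_toFinset.1 hu))
  · intro B τ₁ τ₂ h₁ h₂
    classical
    obtain ⟨ν, hν, hd⟩ := exists_decay_coupling G hconn hsupp hnn h₁ h₂
    refine ⟨ν, hν.nonneg, ?_, fun f => ?_, fun g => ?_, fun u => ?_⟩
    · rw [tsum_fintype, hν.sum_eq, sum_cond h₁]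
    · rw [tsum_fintype, hν.left]
    · rw [tsum_fintype, hν.right]
    · refine le_trans (le_of_eq ?_) (hd u)
      rw [tsum_fintype, disProb]
      refine Finset.sum_congr rfl fun p _ => ?_
      simp [Set.indicator_apply]

end Stmt0
end
end

section
/- Let G=(V,E) be a finite connected simple graph of maximal degree Δ, let q > 2Δ, and let μ be the uniform distribution on proper q-colorings of G. Then for any subsets B, U ⊆ V and any feasible τ₁, τ₂ : B → {1,…,q}, the total variation distance between μ^{τ₁}_U and μ^{τ₂}_U is at most |U|·(Δ/(q−Δ))^{d_G(U, B_{τ₁,τ₂})}. -/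
/-!
The proof is Dobrushin's comparison method, run with observables instead of couplings. Say that a
vector `ρ` is an *estimate* if, for every function `F` of the configuration with oscillation at most
`δ v` in coordinate `v`, the two conditional expectations of `F` differ by at most
`∑ v, ρ v * δ v`. Taking `F` to be the indicator of an event on `U` bounds the total variation
distance by `∑ v ∈ U, ρ v`.

Telescoping over coordinates shows that `ρ = 0` where the boundary conditions agree and `ρ = 1`
elsewhere is an estimate (`estimate_start`). Estimates are improved by heat-bath resampling at a
vertex `v ∉ B`: both conditional measures are stationary under it (`sum_heat`), while `F` averaged
over the color at `v` no longer depends on `v`, and its oscillation at each neighbor of `v` grows by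
at most `δ v / (q - Δ)` (`oscBound_heat`), because changing one neighbor changes the set of available
colors by at most one element each way and this set has at least `q - Δ` elements
(`avg_sub_avg_le`). Hence `ρ v` may be replaced by the sum of `ρ` over the neighbors of `v`, divided
by `q - Δ` (`Estimate.update`).

Set `α = Δ / (q - Δ) ≤ 1`. Since the distance to the disagreement set changes by at most one along
edges, `k` sweeps over all free vertices turn the initial estimate into
`ρ v = α ^ min k (dist(v, disagreement set))` (`estimate_profile`), and `k = dist(U, disagreement
set)` gives the claim. If the disagreement set is empty its distance is `0` by convention, for which
all these inequalities remain true.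
-/

noncomputable section

namespace Stmt2

variable {V : Type*}

/-- The probability of an event under a measure given by a weight function. -/
def prob {S : Type*} (μ : (V → S) → ℝ) (E : Set (V → S)) : ℝ := ∑' f : V → S, E.indicator μ f

/-- Agreement with `τ` on `B`. -/
def Agrees {S : Type*} (B : Set V) (τ : V → S) (f : V → S) : Prop := ∀ v ∈ B, f v = τ v

/-- `τ` (viewed as a partial configuration on `B`) is feasible for `μ`. -/
def Feasible {S : Type*} (μ : (V → S) → ℝ) (B : Set V) (τ : V → S) : Prop :=
  0 < prob μ {f | Agrees B τ f}

/-- `μ` conditioned on agreeing with `τ` on `B`. -/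
def cond {S : Type*} (μ : (V → S) → ℝ) (B : Set V) (τ : V → S) : (V → S) → ℝ :=
  fun f => {g | Agrees B τ g}.indicator μ f / prob μ {g | Agrees B τ g}

/-- The marginal of `ν` on `U`, as a measure on functions `U → S`. -/
def marg {S : Type*} (ν : (V → S) → ℝ) (U : Set V) : (↥U → S) → ℝ :=
  fun g => ∑' f : V → S, {f : V → S | ∀ u : ↥U, f u.1 = g u}.indicator ν f

/-- Total variation distance: the maximal value of `|ν₁(A) - ν₂(A)|` over events `A`. -/
def tvDist {X : Type*} (ν₁ ν₂ : X → ℝ) : ℝ :=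
  ⨆ E : Set X, |(∑' x : X, E.indicator ν₁ x) - (∑' x : X, E.indicator ν₂ x)|

/-- The graph distance between two sets of vertices. -/
def setDist (G : SimpleGraph V) (U D : Set V) : ℕ :=
  sInf {n | ∃ u ∈ U, ∃ w ∈ D, G.dist u w = n}

/-- The disagreement set of two boundary conditions `τ₁, τ₂` on `B`. -/
def disag {S : Type*} (B : Set V) (τ₁ τ₂ : V → S) : Set V := {v | v ∈ B ∧ τ₁ v ≠ τ₂ v}

/-- The set of proper `q`-colorings of `G`. -/
def properColorings (G : SimpleGraph V) (q : ℕ) : Set (V → Fin q) :=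
  {f | ∀ u v : V, G.Adj u v → f u ≠ f v}

/-- The uniform measure on proper `q`-colorings of `G`. -/
def unifColoring (G : SimpleGraph V) (q : ℕ) : (V → Fin q) → ℝ :=
  (properColorings G q).indicator fun _ => ((properColorings G q).ncard : ℝ)⁻¹

section Proof

open Finset

/-- The colors available at `v` given the colors of its neighbors in `σ`. -/
def avail [Fintype V] [DecidableEq V] (G : SimpleGraph V) [DecidableRel G.Adj] {q : ℕ}
    (v : V) (σ : V → Fin q) : Finset (Fin q) :=
  univ.filter fun c => ∀ w, G.Adj v w → σ w ≠ c

/-- The heat-bath operator at `v`: average `F` over a uniformly chosen available color at `v`.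
It is defined on all configurations, proper or not. -/
def heat [Fintype V] [DecidableEq V] (G : SimpleGraph V) [DecidableRel G.Adj] {q : ℕ}
    (v : V) (F : (V → Fin q) → ℝ) (σ : V → Fin q) : ℝ :=
  (∑ c ∈ avail G v σ, F (Function.update σ v c)) / ((avail G v σ).card : ℝ)

/-- `δ v` bounds the oscillation of `F` in the coordinate `v`, over all configurations. -/
def OscBound [DecidableEq V] {S : Type*} (F : (V → S) → ℝ) (δ : V → ℝ) : Prop :=
  ∀ v σ c, |F (Function.update σ v c) - F σ| ≤ δ v

/-- Dobrushin's comparison estimate: `ρ` controls the difference between the uniform averages over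
`Ω₁` and `Ω₂` of any observable, in terms of its coordinate oscillations. -/
def Estimate [Fintype V] [DecidableEq V] {S : Type*} (Ω₁ Ω₂ : Finset (V → S)) (ρ : V → ℝ) : Prop :=
  ∀ F δ, OscBound F δ →
    |(∑ σ ∈ Ω₁, F σ) / (Ω₁.card : ℝ) - (∑ σ ∈ Ω₂, F σ) / (Ω₂.card : ℝ)| ≤ ∑ v, ρ v * δ v

open Classical in
/-- Proper colorings that agree with `τ` on `B`. -/
def extensions [Fintype V] (G : SimpleGraph V) (q : ℕ) (B : Set V) (τ : V → Fin q) :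
    Finset (V → Fin q) :=
  univ.filter fun f => f ∈ properColorings G q ∧ Agrees B τ f

/-! ### Averages over two nearby finite sets -/

section Averages

/-- The case of `avg_sub_avg_le` in which the first set is the larger one and `g` takes values in
`[0, δ]`. -/
lemma avg_sub_avg_le_aux {S : Type*} [DecidableEq S] (A A' : Finset S) (g : S → ℝ) (δ : ℝ)
    (hA' : 0 < A'.card) (hle : A'.card ≤ A.card) (hd : (A \ A').card ≤ 1)
    (hg0 : ∀ x, 0 ≤ g x) (hg1 : ∀ x, g x ≤ δ) (hδ : 0 ≤ δ) :
    (∑ x ∈ A, g x) / (A.card : ℝ) - (∑ x ∈ A', g x) / (A'.card : ℝ) ≤ δ / A.card := by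
  have hA : (0 : ℝ) < A.card := by exact_mod_cast hA'.trans_le hle
  have h1 : ∑ x ∈ A, g x ≤ ∑ x ∈ A', g x + δ := by
    rw [← sum_inter_add_sum_sdiff A A' g]
    have h2 : ∑ x ∈ A ∩ A', g x ≤ ∑ x ∈ A', g x :=
      sum_le_sum_of_subset_of_nonneg inter_subset_right fun x _ _ => hg0 x
    have h3 : ∑ x ∈ A \ A', g x ≤ (A \ A').card • δ := sum_le_card_nsmul _ _ _ fun x _ => hg1 x
    have h4 : ((A \ A').card : ℝ) ≤ 1 := by exact_mod_cast hd
    rw [nsmul_eq_mul] at h3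
    nlinarith
  have h5 : (∑ x ∈ A', g x) / (A.card : ℝ) ≤ (∑ x ∈ A', g x) / (A'.card : ℝ) :=
    div_le_div_of_nonneg_left (sum_nonneg fun x _ => hg0 x) (by exact_mod_cast hA')
      (by exact_mod_cast hle)
  have h6 : (∑ x ∈ A, g x) / (A.card : ℝ) ≤ (∑ x ∈ A', g x + δ) / (A.card : ℝ) := by gcongr
  rw [add_div] at h6
  linarith

lemma avg_sub_const {S : Type*} (A : Finset S) (hA : 0 < A.card) (g : S → ℝ) (m : ℝ) :
    (∑ x ∈ A, (g x - m)) / (A.card : ℝ) = (∑ x ∈ A, g x) / (A.card : ℝ) - m := by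
  have : (A.card : ℝ) ≠ 0 := by exact_mod_cast hA.ne'
  rw [sum_sub_distrib, sum_const, nsmul_eq_mul]
  field_simp

lemma avg_const_sub {S : Type*} (A : Finset S) (hA : 0 < A.card) (g : S → ℝ) (m : ℝ) :
    (∑ x ∈ A, (m - g x)) / (A.card : ℝ) = m - (∑ x ∈ A, g x) / (A.card : ℝ) := by
  have : (A.card : ℝ) ≠ 0 := by exact_mod_cast hA.ne'
  rw [sum_sub_distrib, sum_const, nsmul_eq_mul]
  field_simp

/-- Uniform distributions on two sets of size at least `N`, each with at most one element outside
the other, are at total variation distance at most `1 / N`. -/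
lemma avg_sub_avg_le {S : Type*} [Fintype S] [DecidableEq S] (A A' : Finset S)
    (g : S → ℝ) (δ : ℝ) (N : ℝ) (hN : 0 < N) (hA : N ≤ A.card) (hA' : N ≤ A'.card)
    (hd : (A \ A').card ≤ 1) (hd' : (A' \ A).card ≤ 1) (hg : ∀ x y, g x - g y ≤ δ) :
    (∑ x ∈ A, g x) / (A.card : ℝ) - (∑ x ∈ A', g x) / (A'.card : ℝ) ≤ δ / N := by
  have cA : 0 < A.card := by exact_mod_cast hN.trans_le hA
  have cA' : 0 < A'.card := by exact_mod_cast hN.trans_le hA'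
  obtain ⟨a, _⟩ := card_pos.1 cA
  have hδ : 0 ≤ δ := by simpa using hg a a
  have : Nonempty S := ⟨a⟩
  obtain ⟨y, hy⟩ := Finite.exists_min g
  -- Shift `g` to `[0, δ]`; if the second set is the larger one, reflect `g` and swap the sets.
  rcases le_total A'.card A.card with h | h
  · have := avg_sub_avg_le_aux A A' (fun x => g x - g y) δ cA' h hd
      (fun x => sub_nonneg.2 (hy x)) (fun x => hg x y) hδ
    rw [avg_sub_const A cA, avg_sub_const A' cA'] at this
    have h2 : δ / (A.card : ℝ) ≤ δ / N := by gcongr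
    linarith
  · have := avg_sub_avg_le_aux A' A (fun x => (g y + δ) - g x) δ cA h hd'
      (fun x => by linarith [hg x y]) (fun x => by linarith [hy x]) hδ
    rw [avg_const_sub A cA, avg_const_sub A' cA'] at this
    have h2 : δ / (A'.card : ℝ) ≤ δ / N := by gcongr
    linarith

end Averages

/-! ### Heat-bath resampling -/

section HeatBath

variable [Fintype V] [DecidableEq V] (G : SimpleGraph V) [DecidableRel G.Adj] {q : ℕ}

lemma mem_avail {v : V} {σ : V → Fin q} {c : Fin q} :
    c ∈ avail G v σ ↔ ∀ w, G.Adj v w → σ w ≠ c := by simp [avail]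

lemma avail_update_self (v : V) (σ : V → Fin q) (c : Fin q) :
    avail G v (Function.update σ v c) = avail G v σ := by
  ext x
  simp only [mem_avail]
  refine forall_congr' fun w => imp_congr_right fun h => ?_
  rw [Function.update_of_ne h.ne']

lemma avail_update_of_not_adj {v w : V} (h : ¬ G.Adj v w) (σ : V → Fin q) (c : Fin q) :
    avail G v (Function.update σ w c) = avail G v σ := by
  ext x
  simp only [mem_avail]
  refine forall_congr' fun u => imp_congr_right fun hu => ?_
  rw [Function.update_of_ne (by rintro rfl; exact h hu)]

/-- If `σ` and `σ'` differ at most at `w`, the only color that can be lost is `σ' w`. -/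
lemma card_avail_sdiff (v w : V) (σ σ' : V → Fin q) (h : ∀ u, u ≠ w → σ' u = σ u) :
    (avail G v σ \ avail G v σ').card ≤ 1 := by
  refine (card_le_card (t := {σ' w}) fun c hc => ?_).trans (card_singleton _).le
  rw [mem_sdiff, mem_avail, mem_avail] at hc
  obtain ⟨h1, h2⟩ := hc
  push Not at h2
  obtain ⟨u, hu, rfl⟩ := h2
  by_cases huw : u = w
  · simp [huw]
  · exact absurd (h u huw).symm (h1 u hu)

lemma le_card_avail {Δ : ℕ} (hdeg : ∀ v : V, G.degree v ≤ Δ) (v : V) (σ : V → Fin q) :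
    (q : ℝ) - Δ ≤ (avail G v σ).card := by
  have h : (avail G v σ)ᶜ ⊆ (G.neighborFinset v).image σ := by
    intro c hc
    rw [mem_compl, mem_avail] at hc
    push Not at hc
    obtain ⟨w, hw, rfl⟩ := hc
    exact mem_image_of_mem _ (by simpa using hw)
  have h1 := (card_le_card h).trans card_image_le
  rw [SimpleGraph.card_neighborFinset_eq_degree, card_compl, Fintype.card_fin] at h1
  have h2 : q ≤ (avail G v σ).card + Δ := by have := hdeg v; omega
  have h3 : (q : ℝ) ≤ (avail G v σ).card + Δ := by exact_mod_cast h2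
  linarith

/-- Heat bath at `v` removes the oscillation at `v` and passes a fraction `1 / (q - Δ)` of it on to
each neighbor of `v`. -/
lemma oscBound_heat {Δ : ℕ} (hdeg : ∀ v : V, G.degree v ≤ Δ) (hq : 2 * Δ < q)
    (v : V) (F : (V → Fin q) → ℝ) (δ : V → ℝ) (hF : OscBound F δ) :
    OscBound (heat G v F) fun w =>
      if w = v then 0 else δ w + if G.Adj v w then δ v / ((q : ℝ) - Δ) else 0 := by
  have hN : (0 : ℝ) < (q : ℝ) - Δ := by
    have : ((2 * Δ : ℕ) : ℝ) < q := by exact_mod_cast hq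
    push_cast at this
    have : (0 : ℝ) ≤ Δ := by positivity
    linarith
  have hpos : ∀ σ : V → Fin q, (0 : ℝ) < (avail G v σ).card := fun σ =>
    hN.trans_le (le_card_avail G hdeg v σ)
  -- One-sided form for two configurations that differ at most at `w`.
  have key : ∀ (w : V), w ≠ v → ∀ (σ σ' : V → Fin q), (∀ u, u ≠ w → σ' u = σ u) →
      heat G v F σ - heat G v F σ' ≤
        δ w + if G.Adj v w then δ v / ((q : ℝ) - Δ) else 0 := by
    intro w hw σ σ' h
    have hσ : ∀ c, Function.update σ v c =
        Function.update (Function.update σ' v c) w (σ w) := by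
      intro c
      funext u
      by_cases huw : u = w
      · subst huw; simp [hw]
      · by_cases huv : u = v
        · subst huv; simp [huw]
        · simp [huw, huv, h u huw]
    have h1 : heat G v F σ ≤
        (∑ c ∈ avail G v σ, F (Function.update σ' v c)) / ((avail G v σ).card : ℝ) + δ w := by
      rw [heat, div_add' _ _ _ (hpos σ).ne', div_le_div_iff_of_pos_right (hpos σ), mul_comm,
        ← nsmul_eq_mul, ← sum_const, ← sum_add_distrib]
      refine sum_le_sum fun c _ => ?_
      rw [hσ c]
      linarith [(abs_le.1 (hF w (Function.update σ' v c) (σ w))).2]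
    by_cases hadj : G.Adj v w
    · rw [if_pos hadj]
      have h2 := avg_sub_avg_le (avail G v σ) (avail G v σ')
        (fun c => F (Function.update σ' v c)) (δ v) _ hN (le_card_avail G hdeg v σ)
        (le_card_avail G hdeg v σ') (card_avail_sdiff G v w σ σ' h)
        (card_avail_sdiff G v w σ' σ fun u hu => (h u hu).symm) (by
          intro x y
          have := (abs_le.1 (hF v (Function.update σ' v y) x)).2
          rwa [Function.update_idem] at this)
      have h3 : heat G v F σ' = (∑ c ∈ avail G v σ', F (Function.update σ' v c)) /
        ((avail G v σ').card : ℝ) := rfl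
      linarith
    · rw [if_neg hadj]
      have h2 : σ' = Function.update σ w (σ' w) := by
        funext u
        by_cases huw : u = w
        · subst huw; simp
        · simp [huw, h u huw]
      have h3 : avail G v σ' = avail G v σ := by
        rw [h2, avail_update_of_not_adj G hadj]
      have h4 : heat G v F σ' = (∑ c ∈ avail G v σ, F (Function.update σ' v c)) /
        ((avail G v σ).card : ℝ) := by rw [heat, h3]
      linarith
  intro w σ c
  dsimp only
  by_cases hw : w = v
  · subst hw
    simp [heat, avail_update_self]
  · rw [if_neg hw, abs_sub_le_iff]
    refine ⟨key w hw _ _ fun u hu => ?_, key w hw _ _ fun u hu => ?_⟩ <;> simp [hu]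

/-- The uniform distribution on the colorings extending `τ` is stationary under heat bath at a
vertex outside `B`. -/
lemma sum_heat {Δ : ℕ} (hdeg : ∀ v : V, G.degree v ≤ Δ) (hq : 2 * Δ < q)
    (B : Set V) (τ : V → Fin q) (v : V) (hv : v ∉ B) (F : (V → Fin q) → ℝ) :
    ∑ σ ∈ extensions G q B τ, heat G v F σ = ∑ σ ∈ extensions G q B τ, F σ := by
  have hpos : ∀ σ : V → Fin q, ((avail G v σ).card : ℝ) ≠ 0 := fun σ => by
    have h1 := le_card_avail G hdeg v σ
    have : ((2 * Δ : ℕ) : ℝ) < q := by exact_mod_cast hq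
    push_cast at this
    have : (0 : ℝ) ≤ Δ := by positivity
    exact (by linarith : (0 : ℝ) < (avail G v σ).card).ne'
  have hmem : ∀ σ ∈ extensions G q B τ, ∀ c ∈ avail G v σ,
      Function.update σ v c ∈ extensions G q B τ := by
    intro σ hσ c hc
    simp only [extensions, mem_filter, mem_univ, true_and] at hσ ⊢
    rw [mem_avail] at hc
    refine ⟨fun a b hab => ?_, fun u hu => ?_⟩
    · by_cases ha : a = v
      · subst ha
        rw [Function.update_self, Function.update_of_ne hab.ne']
        exact (hc b hab).symm
      · by_cases hb : b = v
        · subst hb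
          rw [Function.update_self, Function.update_of_ne ha]
          exact hc a hab.symm
        · rw [Function.update_of_ne ha, Function.update_of_ne hb]
          exact hσ.1 a b hab
    · rw [Function.update_of_ne (by rintro rfl; exact hv hu)]
      exact hσ.2 u hu
  have hself : ∀ σ ∈ extensions G q B τ, σ v ∈ avail G v σ := by
    intro σ hσ
    simp only [extensions, mem_filter, mem_univ, true_and] at hσ
    rw [mem_avail]
    exact fun w hw => hσ.1 w v hw.symm
  have h1 : ∑ σ ∈ extensions G q B τ, F σ =
      ∑ σ ∈ extensions G q B τ, ∑ c ∈ avail G v σ, F σ / ((avail G v σ).card : ℝ) := by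
    refine sum_congr rfl fun σ _ => ?_
    rw [sum_const, nsmul_eq_mul, mul_div_cancel₀ _ (hpos σ)]
  rw [h1]
  simp only [heat, sum_div]
  rw [sum_sigma', sum_sigma']
  -- The involution exchanging the current color at `v` with the proposed one.
  refine sum_bij' (fun x _ => ⟨Function.update x.1 v x.2, x.1 v⟩)
    (fun x _ => ⟨Function.update x.1 v x.2, x.1 v⟩) ?_ ?_ ?_ ?_ ?_
  · rintro ⟨σ, c⟩ h
    rw [mem_sigma] at h ⊢
    exact ⟨hmem σ h.1 c h.2, by simpa only [avail_update_self] using hself σ h.1⟩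
  · rintro ⟨σ, c⟩ h
    rw [mem_sigma] at h ⊢
    exact ⟨hmem σ h.1 c h.2, by simpa only [avail_update_self] using hself σ h.1⟩
  · rintro ⟨σ, c⟩ h
    simp
  · rintro ⟨σ, c⟩ h
    simp
  · rintro ⟨σ, c⟩ h
    simp only [avail_update_self]

end HeatBath

/-! ### Comparison estimates -/

section Comparison

variable [DecidableEq V]

lemma OscBound.nonneg {S : Type*} [Nonempty S] {F : (V → S) → ℝ} {δ : V → ℝ}
    (h : OscBound F δ) (v : V) : 0 ≤ δ v := by
  obtain ⟨s⟩ := ‹Nonempty S›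
  exact (abs_nonneg _).trans (h v (fun _ => s) s)

/-- Telescoping: change the coordinates one at a time. -/
lemma abs_sub_le_sum_osc {S : Type*} {F : (V → S) → ℝ} {δ : V → ℝ} (hF : OscBound F δ)
    (s : Finset V) (σ σ' : V → S) : |F (s.piecewise σ' σ) - F σ| ≤ ∑ v ∈ s, δ v := by
  induction s using Finset.induction_on with
  | empty => simp
  | insert v s hv ih =>
    rw [piecewise_insert, sum_insert hv]
    have := hF v (s.piecewise σ' σ) (σ' v)
    calc _ ≤ |F (Function.update (s.piecewise σ' σ) v (σ' v)) - F (s.piecewise σ' σ)| +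
          |F (s.piecewise σ' σ) - F σ| := abs_sub_le _ _ _
      _ ≤ _ := add_le_add this ih

variable [Fintype V]

lemma Estimate.mono {S : Type*} [Nonempty S] {Ω₁ Ω₂ : Finset (V → S)} {ρ ρ' : V → ℝ}
    (h : Estimate Ω₁ Ω₂ ρ) (hle : ∀ v, ρ v ≤ ρ' v) : Estimate Ω₁ Ω₂ ρ' := fun F δ hF =>
  (h F δ hF).trans (sum_le_sum fun v _ => mul_le_mul_of_nonneg_right (hle v) (hF.nonneg v))

/-- The estimate that uses only which coordinates may differ at all. -/
lemma estimate_start {S : Type*} [Nonempty S] (Ω₁ Ω₂ : Finset (V → S)) (h₁ : Ω₁.Nonempty)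
    (h₂ : Ω₂.Nonempty) (ρ : V → ℝ) (hρ : ∀ v, 0 ≤ ρ v)
    (h : ∀ v, (∀ σ ∈ Ω₁, ∀ σ' ∈ Ω₂, σ v = σ' v) ∨ 1 ≤ ρ v) : Estimate Ω₁ Ω₂ ρ := by
  classical
  intro F δ hF
  have hp : ∀ σ ∈ Ω₁, ∀ σ' ∈ Ω₂, |F σ - F σ'| ≤ ∑ v, ρ v * δ v := by
    intro σ hσ σ' hσ'
    have h3 := abs_sub_le_sum_osc hF (univ.filter fun v => σ v ≠ σ' v) σ' σ
    have h4 : (univ.filter fun v => σ v ≠ σ' v).piecewise σ σ' = σ := by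
      funext v
      by_cases hv : σ v = σ' v <;> simp [piecewise, hv]
    rw [h4, sum_filter] at h3
    refine h3.trans (sum_le_sum fun v _ => ?_)
    have hδ := hF.nonneg v
    split_ifs with hv
    · rcases h v with h | h
      · exact absurd (h σ hσ σ' hσ') hv
      · nlinarith
    · exact mul_nonneg (hρ v) hδ
  have c₁ : (0 : ℝ) < Ω₁.card := by exact_mod_cast h₁.card_pos
  have c₂ : (0 : ℝ) < Ω₂.card := by exact_mod_cast h₂.card_pos
  have e : (∑ σ ∈ Ω₁, F σ) / (Ω₁.card : ℝ) - (∑ σ ∈ Ω₂, F σ) / (Ω₂.card : ℝ) =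
      (∑ σ ∈ Ω₁, ∑ σ' ∈ Ω₂, (F σ - F σ')) / (Ω₁.card * Ω₂.card) := by
    simp only [sum_sub_distrib, sum_const, nsmul_eq_mul, ← mul_sum]
    field_simp
  rw [e, abs_div, abs_of_pos (mul_pos c₁ c₂), div_le_iff₀ (mul_pos c₁ c₂)]
  calc |∑ σ ∈ Ω₁, ∑ σ' ∈ Ω₂, (F σ - F σ')|
      ≤ ∑ σ ∈ Ω₁, ∑ σ' ∈ Ω₂, |F σ - F σ'| :=
        (abs_sum_le_sum_abs _ _).trans (sum_le_sum fun σ _ => abs_sum_le_sum_abs _ _)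
    _ ≤ ∑ σ ∈ Ω₁, ∑ σ' ∈ Ω₂, ∑ v, ρ v * δ v :=
        sum_le_sum fun σ hσ => sum_le_sum fun σ' hσ' => hp σ hσ σ' hσ'
    _ = _ := by simp only [sum_const, nsmul_eq_mul]; ring

variable (G : SimpleGraph V) [DecidableRel G.Adj] {q : ℕ}

/-- Heat bath at a free vertex `v` improves `ρ v` to `1 / (q - Δ)` times its sum over the
neighbors of `v`. -/
lemma Estimate.update {Δ : ℕ} (hdeg : ∀ v : V, G.degree v ≤ Δ) (hq : 2 * Δ < q)
    {B : Set V} {τ₁ τ₂ : V → Fin q} {ρ : V → ℝ}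
    (h : Estimate (extensions G q B τ₁) (extensions G q B τ₂) ρ) {v : V} (hv : v ∉ B) :
    Estimate (extensions G q B τ₁) (extensions G q B τ₂)
      (Function.update ρ v ((∑ w ∈ G.neighborFinset v, ρ w) / ((q : ℝ) - Δ))) := by
  intro F δ hF
  have h1 := h _ _ (oscBound_heat G hdeg hq v F δ hF)
  rw [sum_heat G hdeg hq B τ₁ v hv, sum_heat G hdeg hq B τ₂ v hv] at h1
  refine h1.trans (le_of_eq ?_)
  have h2 : (∑ w ∈ G.neighborFinset v, ρ w) / ((q : ℝ) - Δ) * δ v =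
      ∑ w, if G.Adj v w then ρ w * (δ v / ((q : ℝ) - Δ)) else 0 := by
    rw [← sum_filter, ← SimpleGraph.neighborFinset_eq_filter, ← sum_mul]
    ring
  rw [← add_sum_erase univ _ (mem_univ v), ← add_sum_erase univ (fun w =>
    Function.update ρ v ((∑ w ∈ G.neighborFinset v, ρ w) / ((q : ℝ) - Δ)) w * δ w) (mem_univ v),
    Function.update_self, h2, ← add_sum_erase univ (fun w =>
      if G.Adj v w then ρ w * (δ v / ((q : ℝ) - Δ)) else 0) (mem_univ v)]
  simp only [if_true, mul_zero, zero_add, SimpleGraph.irrefl, if_false]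
  rw [← sum_add_distrib]
  refine sum_congr rfl fun w hw => ?_
  have hw' := ne_of_mem_erase hw
  rw [if_neg hw', Function.update_of_ne hw']
  split_ifs <;> ring

end Comparison

/-! ### Distance to the disagreement set -/

section Distance

variable (G : SimpleGraph V)

/-- This holds for empty `D` too, where both distances are `0` by convention. -/
lemma setDist_singleton_le_add_one (hconn : G.Connected) (D : Set V) {v w : V} (h : G.Adj v w) :
    setDist G {v} D ≤ setDist G {w} D + 1 := by
  rcases D.eq_empty_or_nonempty with rfl | ⟨x, hx⟩
  · simp [setDist]
  · obtain ⟨u, hu, y, hy, hn⟩ : setDist G {w} D ∈ {n | ∃ u ∈ ({w} : Set V), ∃ x ∈ D,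
        G.dist u x = n} := Nat.sInf_mem ⟨_, w, rfl, x, hx, rfl⟩
    obtain rfl : u = w := hu
    rw [← hn]
    have hv : setDist G {v} D ≤ G.dist v y := Nat.sInf_le ⟨v, rfl, y, hy, rfl⟩
    refine hv.trans ?_
    have := hconn.dist_triangle (u := v) (v := u) (w := y)
    rw [SimpleGraph.dist_eq_one_iff_adj.2 h] at this
    omega

lemma setDist_singleton_of_mem {D : Set V} {v : V} (h : v ∈ D) : setDist G {v} D = 0 := by
  have : setDist G {v} D ≤ 0 := Nat.sInf_le ⟨v, rfl, v, h, SimpleGraph.dist_self⟩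
  exact Nat.le_zero.1 this

lemma setDist_le_singleton (U D : Set V) {v : V} (h : v ∈ U) :
    setDist G U D ≤ setDist G {v} D := by
  rcases D.eq_empty_or_nonempty with rfl | ⟨x, hx⟩
  · simp [setDist]
  · obtain ⟨u, hu, y, hy, hn⟩ : setDist G {v} D ∈ {n | ∃ u ∈ ({v} : Set V), ∃ x ∈ D,
        G.dist u x = n} := Nat.sInf_mem ⟨_, v, rfl, x, hx, rfl⟩
    obtain rfl : u = v := hu
    exact Nat.sInf_le ⟨u, h, y, hy, hn⟩

end Distance

/-! ### Decay of the estimates -/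

section Iteration

variable (G : SimpleGraph V) {q : ℕ}

open Classical in
/-- The disagreement profile reached after `k` full sweeps of heat bath: no disagreement where the
boundary conditions agree, and otherwise decay in the distance to the disagreement set,
truncated at `k`. -/
def profile (α : ℝ) (B : Set V) (τ₁ τ₂ : V → Fin q) (k : ℕ) (v : V) : ℝ :=
  if v ∈ B ∧ τ₁ v = τ₂ v then 0 else α ^ min k (setDist G {v} (disag B τ₁ τ₂))

lemma profile_le {α : ℝ} (h0 : 0 ≤ α) (B : Set V) (τ₁ τ₂ : V → Fin q) (k : ℕ) (v : V) :
    profile G α B τ₁ τ₂ k v ≤ α ^ min k (setDist G {v} (disag B τ₁ τ₂)) := by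
  unfold profile
  split_ifs
  · positivity
  · exact le_rfl

lemma profile_succ_le {α : ℝ} (h0 : 0 ≤ α) (h1 : α ≤ 1) (B : Set V) (τ₁ τ₂ : V → Fin q) (k : ℕ)
    (v : V) : profile G α B τ₁ τ₂ (k + 1) v ≤ profile G α B τ₁ τ₂ k v := by
  unfold profile
  split_ifs
  · exact le_rfl
  · exact pow_le_pow_of_le_one h0 h1 (by omega)

variable [Fintype V] [DecidableEq V] [DecidableRel G.Adj]

lemma estimate_profile (hconn : G.Connected) {Δ : ℕ} (hdeg : ∀ v : V, G.degree v ≤ Δ)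
    (hq : 2 * Δ < q) (B : Set V) (τ₁ τ₂ : V → Fin q)
    (h₁ : (extensions G q B τ₁).Nonempty) (h₂ : (extensions G q B τ₂).Nonempty) (k : ℕ) :
    Estimate (extensions G q B τ₁) (extensions G q B τ₂)
      (profile G ((Δ : ℝ) / ((q : ℝ) - Δ)) B τ₁ τ₂ k) := by
  have hΔ : (0 : ℝ) ≤ Δ := by positivity
  have hq' : 2 * (Δ : ℝ) < q := by exact_mod_cast hq
  have hN : (0 : ℝ) < (q : ℝ) - Δ := by linarith
  set α : ℝ := (Δ : ℝ) / ((q : ℝ) - Δ) with hα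
  have h0 : 0 ≤ α := by positivity
  have h1 : α ≤ 1 := by rw [hα, div_le_one hN]; linarith
  have : Nonempty (Fin q) := ⟨⟨0, by omega⟩⟩
  induction k with
  | zero =>
    refine estimate_start _ _ h₁ h₂ _ (fun v => ?_) fun v => ?_
    · unfold profile; split_ifs <;> simp
    · by_cases hv : v ∈ B ∧ τ₁ v = τ₂ v
      · left
        intro σ hσ σ' hσ'
        simp only [extensions, mem_filter, mem_univ, true_and] at hσ hσ'
        rw [hσ.2 v hv.1, hσ'.2 v hv.1, hv.2]
      · right
        simp [profile, hv]
  | succ k ih =>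
    -- Improve the vertices one at a time; `s` is the set of vertices already visited.
    have sweep : ∀ s : Finset V, Estimate (extensions G q B τ₁) (extensions G q B τ₂)
        (s.piecewise (profile G α B τ₁ τ₂ (k + 1)) (profile G α B τ₁ τ₂ k)) := by
      intro s
      induction s using Finset.induction_on with
      | empty => simpa using ih
      | insert v s hv ihs =>
        set ρ := s.piecewise (profile G α B τ₁ τ₂ (k + 1)) (profile G α B τ₁ τ₂ k) with hρ
        have hρle : ∀ w, ρ w ≤ profile G α B τ₁ τ₂ k w := by
          intro w
          by_cases hw : w ∈ s
          · simpa [hρ, hw] using profile_succ_le G h0 h1 B τ₁ τ₂ k w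
          · simp [hρ, hw]
        rw [piecewise_insert]
        -- In `B` the profile does not depend on `k`; outside `B` resampling applies.
        by_cases hB : v ∈ B
        · refine ihs.mono fun w => ?_
          by_cases hw : w = v
          · subst hw
            rw [Function.update_self]
            refine (hρle w).trans (le_of_eq ?_)
            by_cases ht : τ₁ w = τ₂ w
            · simp [profile, hB, ht]
            · have : setDist G {w} (disag B τ₁ τ₂) = 0 := setDist_singleton_of_mem G ⟨hB, ht⟩
              simp [profile, ht, this]
          · rw [Function.update_of_ne hw]
        · refine (ihs.update G hdeg hq hB).mono fun w => ?_
          by_cases hw : w = v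
          · subst hw
            rw [Function.update_self, Function.update_self]
            have hp : profile G α B τ₁ τ₂ (k + 1) w =
                α ^ min (k + 1) (setDist G {w} (disag B τ₁ τ₂)) := by simp [profile, hB]
            rw [hp]
            set d := setDist G {w} (disag B τ₁ τ₂) with hd
            have hnb : ∀ x ∈ G.neighborFinset w, ρ x ≤ α ^ min k (d - 1) := by
              intro x hx
              have hx' : G.Adj w x := by simpa using hx
              have := setDist_singleton_le_add_one G hconn (disag B τ₁ τ₂) hx'
              refine ((hρle x).trans (profile_le G h0 B τ₁ τ₂ k x)).trans ?_
              exact pow_le_pow_of_le_one h0 h1 (by omega)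
            have hs := sum_le_card_nsmul _ _ _ hnb
            rw [nsmul_eq_mul, SimpleGraph.card_neighborFinset_eq_degree] at hs
            have hdg : (G.degree w : ℝ) ≤ Δ := by exact_mod_cast hdeg w
            calc (∑ x ∈ G.neighborFinset w, ρ x) / ((q : ℝ) - Δ)
                ≤ (Δ * α ^ min k (d - 1)) / ((q : ℝ) - Δ) := by
                  refine div_le_div_of_nonneg_right (hs.trans ?_) hN.le
                  gcongr
              _ = α ^ (min k (d - 1) + 1) := by rw [pow_succ, hα]; ring
              _ ≤ _ := pow_le_pow_of_le_one h0 h1 (by omega)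
          · rw [Function.update_of_ne hw, Function.update_of_ne hw]
    simpa using sweep univ

end Iteration

/-! ### Conditional measures as uniform averages -/

section Conditioning

variable [Fintype V] (G : SimpleGraph V) {q : ℕ}

open Classical in
lemma indicator_unifColoring (B : Set V) (τ f : V → Fin q) :
    {g | Agrees B τ g}.indicator (unifColoring G q) f =
      if f ∈ extensions G q B τ then ((properColorings G q).ncard : ℝ)⁻¹ else 0 := by
  by_cases h1 : Agrees B τ f <;> by_cases h2 : f ∈ properColorings G q <;>
    simp [unifColoring, extensions, Set.indicator, h1, h2]

lemma prob_agrees [DecidableEq V] (B : Set V) (τ : V → Fin q) :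
    prob (unifColoring G q) {g | Agrees B τ g} =
      (extensions G q B τ).card * ((properColorings G q).ncard : ℝ)⁻¹ := by
  classical
  rw [prob, tsum_fintype]
  simp only [indicator_unifColoring]
  rw [sum_ite_mem, univ_inter, sum_const, nsmul_eq_mul]

lemma extensions_nonempty [DecidableEq V] {B : Set V} {τ : V → Fin q}
    (h : Feasible (unifColoring G q) B τ) : (extensions G q B τ).Nonempty := by
  rw [Feasible, prob_agrees] at h
  rw [nonempty_iff_ne_empty]
  intro h'
  simp [h'] at h

open Classical in
lemma cond_eq {B : Set V} {τ : V → Fin q}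
    (h : Feasible (unifColoring G q) B τ) (f : V → Fin q) :
    cond (unifColoring G q) B τ f =
      if f ∈ extensions G q B τ then ((extensions G q B τ).card : ℝ)⁻¹ else 0 := by
  rw [Feasible, prob_agrees] at h
  rw [cond, indicator_unifColoring, prob_agrees]
  have h1 := left_ne_zero_of_mul h.ne'
  have h2 := right_ne_zero_of_mul h.ne'
  split_ifs
  · rw [div_mul_cancel_right₀ h2]
  · simp

/-- The conditional marginal on `U` of an event is an average over colorings. -/
lemma sum_marg [DecidableEq V] {B : Set V} {τ : V → Fin q}
    (h : Feasible (unifColoring G q) B τ) (U : Set V) (E : Set (↥U → Fin q)) :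
    ∑' x, E.indicator (marg (cond (unifColoring G q) B τ) U) x =
      (∑ σ ∈ extensions G q B τ, E.indicator (fun _ => (1 : ℝ)) (fun u => σ u.1)) /
        ((extensions G q B τ).card : ℝ) := by
  classical
  rw [tsum_fintype]
  have h1 : ∀ x, E.indicator (marg (cond (unifColoring G q) B τ) U) x =
      ∑ f, if x = (fun u : ↥U => f u.1) then
        E.indicator (fun _ => (1 : ℝ)) (fun u : ↥U => f u.1) * cond (unifColoring G q) B τ f
        else 0 := by
    intro x
    by_cases hx : x ∈ E
    · rw [Set.indicator_of_mem hx, marg, tsum_fintype]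
      refine sum_congr rfl fun f _ => ?_
      by_cases hf : x = fun u : ↥U => f u.1
      · subst hf
        simp [hx]
      · have : f ∉ {f : V → Fin q | ∀ u : ↥U, f u.1 = x u} := fun h' => hf (funext fun u => (h' u).symm)
        rw [if_neg hf, Set.indicator_of_notMem this]
    · rw [Set.indicator_of_notMem hx]
      refine (sum_eq_zero fun f _ => ?_).symm
      split_ifs with hf
      · subst hf
        simp [hx]
      · rfl
  simp only [h1]
  rw [sum_comm]
  simp only [sum_ite_eq', mem_univ, if_true, cond_eq G h, mul_ite, mul_zero]
  rw [sum_ite_mem, univ_inter, ← sum_mul, div_eq_mul_inv]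

end Conditioning

end Proof

/-- **Strong spatial mixing for proper colorings with `q > 2Δ`.**
Let `G` be a finite connected simple graph of maximal degree `Δ`, let `q > 2Δ`, and let `μ`
be the uniform distribution on proper `q`-colorings of `G`. Then for any `B, U ⊆ V` and any
feasible boundary conditions `τ₁, τ₂` on `B`, the total variation distance between the
conditional marginals on `U` is at most `|U| (Δ/(q-Δ))^{dist(U, B_{τ₁,τ₂})}`. -/
theorem strong_spatial_mixing_colorings [Fintype V] [DecidableEq V]
    (G : SimpleGraph V) [DecidableRel G.Adj] (hconn : G.Connected)
    (Δ q : ℕ) (hdeg : ∀ v : V, G.degree v ≤ Δ) (hq : 2 * Δ < q)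
    (B U : Set V) (τ₁ τ₂ : V → Fin q)
    (h₁ : Feasible (unifColoring G q) B τ₁) (h₂ : Feasible (unifColoring G q) B τ₂) :
    tvDist (marg (cond (unifColoring G q) B τ₁) U) (marg (cond (unifColoring G q) B τ₂) U)
      ≤ (U.ncard : ℝ) * ((Δ : ℝ) / ((q : ℝ) - (Δ : ℝ))) ^ setDist G U (disag B τ₁ τ₂) := by
  classical
  have hq' : 2 * (Δ : ℝ) < q := by exact_mod_cast hq
  have hΔ : (0 : ℝ) ≤ Δ := by positivity
  have h0 : 0 ≤ (Δ : ℝ) / ((q : ℝ) - Δ) := div_nonneg hΔ (by linarith)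
  have : Nonempty (Fin q) := ⟨⟨0, by omega⟩⟩
  set k := setDist G U (disag B τ₁ τ₂) with hk
  refine ciSup_le fun E => ?_
  rw [sum_marg G h₁, sum_marg G h₂]
  have est := estimate_profile G hconn hdeg hq B τ₁ τ₂ (extensions_nonempty G h₁)
    (extensions_nonempty G h₂) k
  refine (est (fun σ => E.indicator (fun _ => (1 : ℝ)) fun u => σ u.1)
    (fun v => if v ∈ U then 1 else 0) fun v σ c => ?_).trans ?_
  · by_cases hv : v ∈ U
    · simp only [Set.indicator, hv, if_true]
      split_ifs <;> norm_num
    · have : (fun u : ↥U => Function.update σ v c u.1) = fun u : ↥U => σ u.1 := by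
        funext u
        exact Function.update_of_ne (by rintro rfl; exact hv u.2) _ _
      simp [this, hv]
  · have hU : (U.ncard : ℝ) = ∑ v : V, if v ∈ U then (1 : ℝ) else 0 := by
      rw [Finset.sum_boole, Set.ncard_eq_toFinset_card']
      congr 2
      ext v
      simp
    rw [hU, Finset.sum_mul]
    refine Finset.sum_le_sum fun v _ => ?_
    split_ifs with hv
    · rw [mul_one, one_mul]
      have h := profile_le G h0 B τ₁ τ₂ k v
      rwa [min_eq_left (setDist_le_singleton G U _ hv)] at h
    · simp

end Stmt2
end
end

section
/- For each proper 3-coloring f of ℤ^d (with colors in ℤ/3ℤ), there exists a homomorphism height function h : ℤ^d → ℤ such that h(v) ≡ f(v) (mod 3) for every v ∈ ℤ^d. -/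
/-!
On an edge from `u` to `v`, a height function lifting `f` must increase by the representative
`±1` of `f v - f u ≠ 0`. Around a 4-cycle these increments sum to zero: the sum is a multiple
of 3, it is even, and it has absolute value at most 4. So they form a discrete closed 1-form,
and on `ℤ^d` such forms are exact (`exists_potential`): directions are integrated one at a time,
the 1-form remaining after the directions in `S` are treated being invariant under translation
along `S`. After adding a suitable constant to the potential `h`, the residue `h v - f v` modulo 3
and the parity of `h v - ∑ i, v i` vanish at the origin; both are invariant under unit translations
and hence vanish everywhere.
-/

noncomputable section

namespace Stmt3

/-- Two vertices of `ℤ^d` are adjacent when their `ℓ¹`-distance is `1`. -/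
def ZdAdj {d : ℕ} (u v : Fin d → ℤ) : Prop := (∑ i, |u i - v i|) = 1

/-- The discrete antiderivative of `F` vanishing at `0`. -/
def lineSum (F : ℤ → ℤ) (n : ℤ) : ℤ :=
  ∑ k ∈ Finset.range n.toNat, F k - ∑ k ∈ Finset.range (-n).toNat, F (-(k + 1 : ℤ))

lemma lineSum_succ (F : ℤ → ℤ) (n : ℤ) : lineSum F (n + 1) = lineSum F n + F n := by
  unfold lineSum
  rcases le_or_gt 0 n with hn | hn
  · lift n to ℕ using hn
    have h1 : ((n : ℤ) + 1).toNat = n + 1 := by omega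
    have h2 : (-((n : ℤ) + 1)).toNat = 0 := by omega
    have h3 : (-(n : ℤ)).toNat = 0 := by omega
    rw [h1, h2, h3, Int.toNat_natCast, Finset.sum_range_succ]
    simp
  · obtain ⟨m, rfl⟩ : ∃ m : ℕ, n = -((m : ℤ) + 1) := ⟨(-n - 1).toNat, by omega⟩
    have h1 : (-((m : ℤ) + 1) + 1).toNat = 0 := by omega
    have h2 : (-((m : ℤ) + 1)).toNat = 0 := by omega
    have h3 : (-(-((m : ℤ) + 1) + 1)).toNat = m := by omega
    have h4 : (-(-((m : ℤ) + 1))).toNat = m + 1 := by omega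
    rw [h1, h2, h3, h4, Finset.sum_range_succ]
    simp

/-- Discrete Poincaré lemma: a closed 1-form `D` on `ℤ^d` has a potential along any set of
coordinate directions. -/
lemma exists_potential {d : ℕ} (D : Fin d → (Fin d → ℤ) → ℤ)
    (hD : ∀ i j v, D i v + D j (v + Pi.single i 1) = D j v + D i (v + Pi.single j 1))
    (S : Finset (Fin d)) :
    ∃ h : (Fin d → ℤ) → ℤ, ∀ i ∈ S, ∀ v, h (v + Pi.single i 1) = h v + D i v := by
  induction S using Finset.induction_on with
  | empty => exact ⟨0, by simp⟩
  | insert i S hi ih =>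
    obtain ⟨h, hh⟩ := ih
    set F : (Fin d → ℤ) → ℤ := fun v => D i v - (h (v + Pi.single i 1) - h v) with hF
    have hinv : ∀ j ∈ S, ∀ v, F (v + Pi.single j 1) = F v := by
      intro j hj v
      have e1 := hh j hj v
      have e2 := hh j hj (v + Pi.single i 1)
      have e3 := hD i j v
      rw [add_right_comm] at e2
      simp only [hF]
      linarith
    refine ⟨fun v => h v + lineSum (fun n => F (Function.update v i n)) (v i), ?_⟩
    intro j hj v
    rcases Finset.mem_insert.1 hj with rfl | hjS
    · have hup : ∀ n, Function.update (v + Pi.single j 1) j n = Function.update v j n := by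
        intro n
        ext k
        by_cases hk : k = j
        · subst hk; simp
        · simp [hk]
      simp only [hup, Pi.add_apply, Pi.single_eq_same, lineSum_succ, Function.update_eq_self]
      simp only [hF]
      ring
    · have hne : i ≠ j := fun e => hi (e ▸ hjS)
      have hup : ∀ n, Function.update (v + Pi.single j 1) i n
          = Function.update v i n + Pi.single j 1 := by
        intro n
        ext k
        by_cases hk : k = i
        · subst hk; simp [hne]
        · simp [hk]
      simp only [hup, hinv j hjS, hh j hjS, Pi.add_apply, Pi.single_eq_of_ne hne, add_zero]
      ring

/-- A function invariant under all unit translations is constant, because the unit vectors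
generate `ℤ^d`. -/
lemma eq_of_invariant {d : ℕ} {α : Type*} (P : (Fin d → ℤ) → α)
    (hP : ∀ i v, P (v + Pi.single i 1) = P v) (v : Fin d → ℤ) : P v = P 0 := by
  let H : AddSubgroup (Fin d → ℤ) :=
    { carrier := {w | ∀ v, P (v + w) = P v}
      zero_mem' := by simp
      add_mem' := by
        intro a b ha hb v
        rw [← add_assoc, hb, ha]
      neg_mem' := by
        intro a ha v
        have := ha (v + -a)
        rwa [neg_add_cancel_right, eq_comm] at this }
  have hv : v ∈ H := by
    rw [← Finset.univ_sum_single v]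
    refine H.sum_mem fun i _ => ?_
    have h1 : (Pi.single i (v i) : Fin d → ℤ) = v i • Pi.single i 1 := by
      rw [← Pi.single_smul]; simp
    rw [h1]
    exact H.zsmul_mem (hP i) _
  simpa using hv 0

lemma zdAdj_add_single {d : ℕ} (v : Fin d → ℤ) (i : Fin d) :
    ZdAdj v (v + Pi.single i 1) := by
  unfold ZdAdj
  rw [Finset.sum_eq_single i]
  · simp
  · intro j _ hj
    simp [hj]
  · simp

lemma ZdAdj.exists_single {d : ℕ} {u v : Fin d → ℤ} (h : ZdAdj u v) :
    ∃ i, v = u + Pi.single i 1 ∨ u = v + Pi.single i 1 := by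
  unfold ZdAdj at h
  obtain ⟨i, -, hi⟩ : ∃ i ∈ Finset.univ, |u i - v i| ≠ 0 :=
    Finset.exists_ne_zero_of_sum_ne_zero (by rw [h]; exact one_ne_zero)
  have hi1 : 1 ≤ |u i - v i| := by
    have := abs_nonneg (u i - v i)
    omega
  rw [← Finset.add_sum_erase _ _ (Finset.mem_univ i)] at h
  have hnn : ∀ j ∈ Finset.univ.erase i, 0 ≤ |u j - v j| := fun j _ => abs_nonneg _
  have h0 := Finset.sum_nonneg hnn
  have hz := (Finset.sum_eq_zero_iff_of_nonneg hnn).1 (by omega)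
  have hoff : ∀ j, j ≠ i → u j = v j := fun j hj => by
    have := hz j (by simp [hj])
    rwa [abs_eq_zero, sub_eq_zero] at this
  refine ⟨i, ?_⟩
  rcases (abs_eq zero_le_one).1 (show |u i - v i| = 1 by omega) with h1 | h1
  · right
    ext j
    by_cases hj : j = i
    · subst hj; simp; omega
    · simp [hj, hoff j hj]
  · left
    ext j
    by_cases hj : j = i
    · subst hj; simp; omega
    · simp [hj, hoff j hj]

/-- The increments `±1` forced by a proper 3-coloring sum to zero around a 4-cycle. -/
lemma valMinAbs_cycle : ∀ a b c e : ZMod 3, a ≠ b → b ≠ c → a ≠ e → e ≠ c →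
    (b - a).valMinAbs + (c - b).valMinAbs = (e - a).valMinAbs + (c - e).valMinAbs := by
  decide

lemma abs_valMinAbs : ∀ a b : ZMod 3, a ≠ b → |(b - a).valMinAbs| = 1 := by
  decide

lemma exists_even_lift (a : ZMod 3) : ∃ c : ℤ, Even c ∧ (c : ZMod 3) = a := by
  refine ⟨4 * a.val, ⟨2 * a.val, by ring⟩, ?_⟩
  revert a
  decide

/-- **Proper 3-colorings lift to homomorphism height functions.**
For each proper 3-coloring `f` of `ℤ^d` (with colors in `ℤ/3ℤ`), there exists a
homomorphism height function `h : ℤ^d → ℤ` (i.e. `|h u - h v| = 1` for adjacent `u, v`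
and `h` takes even values at even vertices) such that `h ≡ f (mod 3)`. -/
theorem exists_height_function (d : ℕ) (f : (Fin d → ℤ) → ZMod 3)
    (hf : ∀ u v : Fin d → ℤ, ZdAdj u v → f u ≠ f v) :
    ∃ h : (Fin d → ℤ) → ℤ,
      (∀ u v : Fin d → ℤ, ZdAdj u v → |h u - h v| = 1) ∧
      (∀ v : Fin d → ℤ, Even (∑ i, v i) → Even (h v)) ∧
      (∀ v : Fin d → ℤ, (h v : ZMod 3) = f v) := by
  have hne : ∀ i v, f v ≠ f (v + Pi.single i 1) := fun i v => hf _ _ (zdAdj_add_single v i)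
  obtain ⟨g, hg⟩ := exists_potential (fun i v => (f (v + Pi.single i 1) - f v).valMinAbs)
    (fun i j v => by
      have hj := hne i (v + Pi.single j 1)
      simp only [add_right_comm v (Pi.single j 1) (Pi.single i 1)] at hj ⊢
      exact valMinAbs_cycle _ _ _ _ (hne i v) (hne j _) (hne j v) hj)
    Finset.univ
  obtain ⟨c, hc, hcf⟩ := exists_even_lift (f 0)
  set h : (Fin d → ℤ) → ℤ := fun v => g v - g 0 + c with hh
  have hstep : ∀ i v, h (v + Pi.single i 1) = h v + (f (v + Pi.single i 1) - f v).valMinAbs := by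
    intro i v
    simp only [hh, hg i (Finset.mem_univ i) v]
    ring
  have hstep1 : ∀ i v, |h (v + Pi.single i 1) - h v| = 1 := by
    intro i v
    rw [hstep, add_sub_cancel_left]
    exact abs_valMinAbs _ _ (hne i v)
  refine ⟨h, ?_, ?_, ?_⟩
  · intro u v huv
    obtain ⟨i, rfl | rfl⟩ := huv.exists_single
    · rw [abs_sub_comm]; exact hstep1 i u
    · exact hstep1 i v
  · intro v hv
    have key := eq_of_invariant (fun v => (h v - ∑ i, v i) % 2) (fun i v => by
      have h1 := (abs_eq zero_le_one).1 (hstep1 i v)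
      have h2 : ∑ j, (v + Pi.single i 1 : Fin d → ℤ) j = ∑ j, v j + 1 := by
        simp [Finset.sum_add_distrib]
      simp only [h2]
      omega) v
    have h0 : h 0 = c := by simp [hh]
    simp only [h0, Pi.zero_apply, Finset.sum_const_zero] at key
    rw [Int.even_iff] at hc hv ⊢
    omega
  · intro v
    have key := eq_of_invariant (fun v => (h v : ZMod 3) - f v) (fun i v => by
      simp only [hstep, Int.cast_add, ZMod.coe_valMinAbs]
      ring) v
    have h0 : h 0 = c := by simp [hh]
    simp only [h0, hcf, sub_self] at key
    exact sub_eq_zero.1 key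

end Stmt3
end
end

section
/- Let Λ ⊂ ℤ^d be finite and τ : ∂•Λ → ℤ be such that the set of homomorphism height functions on Λ which equal τ on ∂•Λ is nonempty. Let h be sampled uniformly from this set. Then for any v ∈ Λ, any integer j, and any integer i of the same parity as ‖v‖₁, one has P(h(v) = i)² ≥ P(h(v) = i + 2j) · P(h(v) = i − 2j). -/
/-!
Cluster swapping. Take `j > 0` and height functions `f`, `g` with the boundary values `τ`,
`f v = i + 2j` and `g v = i - 2j`, and compare `f` with the lifted function `g + 2j`. At `v` the
former is larger by `2j`, on the boundary the latter is. On every edge both functions have the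
same parity, so `f - (g + 2j)` is even and changes by at most `2` along the edge: it cannot change
sign without vanishing (`diff_step`). Hence the cluster of `v` inside `{f ≠ g + 2j}` does not meet
the boundary, and the two functions agree at every vertex next to the cluster but outside it.
Exchanging `f` and `g + 2j` on the cluster therefore yields two height functions with boundary
values `τ`, both equal to `i` at `v` (`swap_left_mem`, `swap_right_mem`). The exchange leaves the
set `{f ≠ g + 2j}` unchanged, hence also the cluster, so it can be undone; this injection gives
`#{h v = i + 2j} * #{h v = i - 2j} ≤ #{h v = i} ^ 2` (`card_mul_le`).
-/

noncomputable section

namespace Stmt4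

/-- Two vertices of `ℤ^d` are adjacent when their `ℓ¹`-distance is `1`. -/
def ZdAdj {d : ℕ} (u v : Fin d → ℤ) : Prop := (∑ i, |u i - v i|) = 1

/-- The set of homomorphism height functions on `Λ` which equal `τ` on the internal
vertex boundary `∂•Λ` of `Λ`. -/
def HeightFns {d : ℕ} (Λ : Set (Fin d → ℤ)) (τ : (Fin d → ℤ) → ℤ) : Set (↥Λ → ℤ) :=
  {h | (∀ u v : ↥Λ, ZdAdj u.1 v.1 → |h u - h v| = 1) ∧
       (∀ v : ↥Λ, Even (∑ i, v.1 i) → Even (h v)) ∧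
       (∀ v : ↥Λ, (∃ w, w ∉ Λ ∧ ZdAdj v.1 w) → h v = τ v.1)}

theorem ZdAdj.symm {d : ℕ} {u w : Fin d → ℤ} (h : ZdAdj u w) : ZdAdj w u := by
  unfold ZdAdj at *
  simpa only [abs_sub_comm] using h

/-- `ℤ^d` is bipartite. -/
theorem ZdAdj.even_or {d : ℕ} {u w : Fin d → ℤ} (h : ZdAdj u w) :
    Even (∑ i, u i) ∨ Even (∑ i, w i) := by
  unfold ZdAdj at h
  have key : Even (∑ i, (|u i - w i| - (u i - w i))) := by
    -- An integer and its absolute value have the same parity.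
    refine Finset.even_sum _ fun i _ => ?_
    rw [Int.even_sub, even_abs]
  rw [Finset.sum_sub_distrib, Finset.sum_sub_distrib, h] at key
  simp only [Int.even_iff] at *
  omega

section Swap

variable {d : ℕ} {Λ : Set (Fin d → ℤ)} {τ : (Fin d → ℤ) → ℤ}

/-- The vertices joined to `v` by a lattice path in `Λ` all of whose vertices, except possibly
`v` itself, lie in `D`. -/
def cluster (D : Set ↥Λ) (v : ↥Λ) : Set ↥Λ :=
  {w | Relation.ReflTransGen (fun a b : ↥Λ => ZdAdj a.1 b.1 ∧ b ∈ D) v w}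

/-- The cluster of `v` in the set where `f` and the lifted function `g + k` differ. -/
def diffCluster (k : ℤ) (v : ↥Λ) (p : (↥Λ → ℤ) × (↥Λ → ℤ)) : Set ↥Λ :=
  cluster {w | p.1 w ≠ p.2 w + k} v

open Classical in
/-- Exchange `f` and `g + k` on `C`, then lower the second function by `k` again. -/
def swap (C : Set ↥Λ) (k : ℤ) (p : (↥Λ → ℤ) × (↥Λ → ℤ)) : (↥Λ → ℤ) × (↥Λ → ℤ) :=
  (fun w => if w ∈ C then p.2 w + k else p.1 w,
   fun w => if w ∈ C then p.1 w - k else p.2 w)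

theorem swap_swap (C : Set ↥Λ) (k : ℤ) (p : (↥Λ → ℤ) × (↥Λ → ℤ)) :
    swap C k (swap C k p) = p := by
  ext w <;> by_cases hw : w ∈ C <;> simp [swap, hw]

theorem diffCluster_swap (C : Set ↥Λ) (k : ℤ) (v : ↥Λ) (p : (↥Λ → ℤ) × (↥Λ → ℤ)) :
    diffCluster k v (swap C k p) = diffCluster k v p := by
  unfold diffCluster
  congr 1
  ext w
  by_cases hw : w ∈ C
  · simp only [swap, hw, if_true, Set.mem_ofPred_eq]
    omega
  · simp [swap, hw]

/-- The difference between `f` and `g + 2j` cannot change sign along an edge. -/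
theorem diff_step {f g : ↥Λ → ℤ} (hf : f ∈ HeightFns Λ τ) (hg : g ∈ HeightFns Λ τ) (j : ℤ)
    {u w : ↥Λ} (huw : ZdAdj u.1 w.1) (hu : g u + 2 * j < f u) : g w + 2 * j ≤ f w := by
  have h1 := hf.1 u w huw
  have h2 := hg.1 u w huw
  have hp : (Even (f u) ∧ Even (g u)) ∨ (Even (f w) ∧ Even (g w)) :=
    huw.even_or.imp (fun h => ⟨hf.2.1 u h, hg.2.1 u h⟩) (fun h => ⟨hf.2.1 w h, hg.2.1 w h⟩)
  simp only [Int.even_iff] at hp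
  rcases (abs_eq zero_le_one).1 h1 with h1 | h1 <;>
    rcases (abs_eq zero_le_one).1 h2 with h2 | h2 <;> omega

theorem lt_of_mem_cluster {f g : ↥Λ → ℤ} (hf : f ∈ HeightFns Λ τ) (hg : g ∈ HeightFns Λ τ)
    (j : ℤ) {v w : ↥Λ} (hv : g v + 2 * j < f v) (hw : w ∈ diffCluster (2 * j) v (f, g)) :
    g w + 2 * j < f w := by
  change Relation.ReflTransGen _ v w at hw
  induction hw with
  | refl => exact hv
  | tail _ hbc ih => exact lt_of_le_of_ne (diff_step hf hg j hbc.1 ih) (Ne.symm hbc.2)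

theorem eq_of_adj_cluster {f g : ↥Λ → ℤ} (k : ℤ) {v u w : ↥Λ} (huw : ZdAdj u.1 w.1)
    (hu : u ∈ diffCluster k v (f, g)) (hw : w ∉ diffCluster k v (f, g)) : f w = g w + k := by
  by_contra hne
  exact hw (Relation.ReflTransGen.tail hu ⟨huw, hne⟩)

theorem boundary_notMem {f g : ↥Λ → ℤ} (hf : f ∈ HeightFns Λ τ) (hg : g ∈ HeightFns Λ τ)
    {j : ℤ} (hj : 0 < j) {v w : ↥Λ} (hv : g v + 2 * j < f v)
    (hw : ∃ x, x ∉ Λ ∧ ZdAdj w.1 x) : w ∉ diffCluster (2 * j) v (f, g) := by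
  intro hwC
  have h := lt_of_mem_cluster hf hg j hv hwC
  rw [hf.2.2 w hw, hg.2.2 w hw] at h
  omega

theorem swap_left_mem {f g : ↥Λ → ℤ} (hf : f ∈ HeightFns Λ τ) (hg : g ∈ HeightFns Λ τ)
    {j : ℤ} (hj : 0 < j) {v : ↥Λ} (hv : g v + 2 * j < f v) :
    (swap (diffCluster (2 * j) v (f, g)) (2 * j) (f, g)).1 ∈ HeightFns Λ τ := by
  refine ⟨fun u w huw => ?_, fun u hu => ?_, fun u hu => ?_⟩
  · have h1 := hf.1 u w huw
    have h2 := hg.1 u w huw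
    by_cases hu : u ∈ diffCluster (2 * j) v (f, g) <;>
      by_cases hw : w ∈ diffCluster (2 * j) v (f, g) <;>
      simp only [swap, hu, hw, if_true, if_false]
    · simpa using h2
    · rw [eq_of_adj_cluster _ huw hu hw]
      simpa using h2
    · rw [eq_of_adj_cluster _ huw.symm hw hu]
      simpa using h2
    · exact h1
  · have h1 := hf.2.1 u hu
    have h2 := hg.2.1 u hu
    simp only [swap]
    split_ifs
    · exact h2.add (even_two_mul j)
    · exact h1
  · simp only [swap, boundary_notMem hf hg hj hv hu, if_false]
    exact hf.2.2 u hu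

theorem swap_right_mem {f g : ↥Λ → ℤ} (hf : f ∈ HeightFns Λ τ) (hg : g ∈ HeightFns Λ τ)
    {j : ℤ} (hj : 0 < j) {v : ↥Λ} (hv : g v + 2 * j < f v) :
    (swap (diffCluster (2 * j) v (f, g)) (2 * j) (f, g)).2 ∈ HeightFns Λ τ := by
  refine ⟨fun u w huw => ?_, fun u hu => ?_, fun u hu => ?_⟩
  · have h1 := hf.1 u w huw
    have h2 := hg.1 u w huw
    by_cases hu : u ∈ diffCluster (2 * j) v (f, g) <;>
      by_cases hw : w ∈ diffCluster (2 * j) v (f, g) <;>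
      simp only [swap, hu, hw, if_true, if_false]
    · simpa using h1
    · rw [eq_of_adj_cluster _ huw hu hw] at h1
      rwa [sub_sub, add_comm (2 * j)]
    · rw [eq_of_adj_cluster _ huw.symm hw hu] at h1
      rwa [← sub_add, sub_add_eq_add_sub]
    · exact h2
  · have h1 := hf.2.1 u hu
    have h2 := hg.2.1 u hu
    simp only [swap]
    split_ifs
    · exact h1.sub (even_two_mul j)
    · exact h2
  · simp only [swap, boundary_notMem hf hg hj hv hu, if_false]
    exact hg.2.2 u hu

theorem card_mul_le (hfin : (HeightFns Λ τ).Finite) (v : ↥Λ) (i : ℤ) {j : ℤ} (hj : 0 < j) :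
    (HeightFns Λ τ ∩ {h | h v = i + 2 * j}).ncard * (HeightFns Λ τ ∩ {h | h v = i - 2 * j}).ncard
      ≤ (HeightFns Λ τ ∩ {h | h v = i}).ncard ^ 2 := by
  rw [sq, ← Set.ncard_prod, ← Set.ncard_prod]
  have hA : (HeightFns Λ τ ∩ {h | h v = i}).Finite := hfin.subset Set.inter_subset_left
  refine Set.ncard_le_ncard_of_injOn
    (fun p => swap (diffCluster (2 * j) v p) (2 * j) p) ?_ ?_ (hA.prod hA)
  · rintro ⟨f, g⟩ ⟨⟨hf, hfv⟩, hg, hgv⟩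
    simp only [Set.mem_ofPred_eq] at hfv hgv
    have hv : g v + 2 * j < f v := by omega
    have hvC : v ∈ diffCluster (2 * j) v (f, g) := Relation.ReflTransGen.refl
    refine ⟨⟨swap_left_mem hf hg hj hv, ?_⟩, swap_right_mem hf hg hj hv, ?_⟩ <;>
      simp only [swap, hvC, if_true, Set.mem_ofPred_eq] <;> omega
  · intro p _ q _ hpq
    simp only at hpq
    have hC : diffCluster (2 * j) v p = diffCluster (2 * j) v q := by
      rw [← diffCluster_swap (diffCluster (2 * j) v p) (2 * j) v p, hpq, diffCluster_swap]
    rw [← swap_swap (diffCluster (2 * j) v p) (2 * j) p, hpq, hC, swap_swap]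

end Swap

/-- **Log-concavity of the height marginal.**
Let `Λ ⊂ ℤ^d` be finite and `τ : ∂•Λ → ℤ` admit an extension to a homomorphism height
function on `Λ`; let `h` be uniform on the set of such extensions. Then for `v ∈ Λ`, any
integer `j` and any integer `i` of the same parity as `‖v‖₁`,
`P(h(v) = i)² ≥ P(h(v) = i + 2j) ⬝ P(h(v) = i - 2j)`. -/
theorem log_concavity (d : ℕ) (Λ : Set (Fin d → ℤ)) (hΛ : Λ.Finite)
    (τ : (Fin d → ℤ) → ℤ) (hne : (HeightFns Λ τ).Nonempty)
    (v : Fin d → ℤ) (hv : v ∈ Λ) (j i : ℤ)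
    (hpar : i % 2 = (∑ k, |v k|) % 2) :
    (((HeightFns Λ τ ∩ {h | h ⟨v, hv⟩ = i}).ncard : ℝ) / ((HeightFns Λ τ).ncard : ℝ)) ^ 2
      ≥ ((HeightFns Λ τ ∩ {h | h ⟨v, hv⟩ = i + 2 * j}).ncard : ℝ) / ((HeightFns Λ τ).ncard : ℝ)
        * (((HeightFns Λ τ ∩ {h | h ⟨v, hv⟩ = i - 2 * j}).ncard : ℝ)
            / ((HeightFns Λ τ).ncard : ℝ)) := by
  set N := (HeightFns Λ τ).ncard with hN
  rcases Nat.eq_zero_or_pos N with h0 | hpos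
  -- Division by `0` yields `0`, so this case is `0 ≥ 0`; otherwise `N > 0` gives finiteness.
  · simp [h0]
  have hfin : (HeightFns Λ τ).Finite := Set.finite_of_ncard_pos hpos
  have key : (HeightFns Λ τ ∩ {h | h ⟨v, hv⟩ = i + 2 * j}).ncard
      * (HeightFns Λ τ ∩ {h | h ⟨v, hv⟩ = i - 2 * j}).ncard
      ≤ (HeightFns Λ τ ∩ {h | h ⟨v, hv⟩ = i}).ncard ^ 2 := by
    rcases lt_trichotomy j 0 with hj | rfl | hj
    · have h := card_mul_le hfin ⟨v, hv⟩ i (neg_pos.2 hj)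
      rw [mul_neg, sub_neg_eq_add, ← sub_eq_add_neg] at h
      rwa [mul_comm]
    · simp [sq]
    · exact card_mul_le hfin ⟨v, hv⟩ i hj
  rw [ge_iff_le, div_pow, div_mul_div_comm, ← sq (N : ℝ)]
  gcongr
  exact_mod_cast key


end Stmt4
end
end

section
/- Let G = ((V₁,V₂), E) be a finite bipartite graph in which every vertex has degree exactly Δ ≥ 1, and let q ≥ 1. Then the number of proper q-colorings of G is at most the number of proper q-colorings of the complete bipartite graph K_{Δ,Δ} raised to the power |V₁ ∪ V₂|/(2Δ). -/
/-!
Colour the class `V₁` first. Given the colouring `x` on `V₁`, every `v ∈ V₂` may be coloured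
independently, by any of the `g_v(x)` colours that `x` does not use on the neighbourhood `N(v)`. So
the number of proper colourings of `G` is `∑ x, ∏ v ∈ V₂, g_v(x)`, where `g_v` depends only on the
coordinates in `N(v)`, and every `u ∈ V₁` lies in exactly `Δ` of these neighbourhoods.

For such a product, the generalised Hölder inequality of Finner (`lmarginal_prod_rpow_le`) gives
`∑ x, ∏ v ∈ V₂, g_v(x) ≤ ∏ v ∈ V₂, (∑ y : N(v) → [q], g_v(y) ^ Δ) ^ (1 / Δ)`.
By the same colour-one-side-first count in `K_{Δ,Δ}`, each inner sum is the number of proper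
colourings of `K_{Δ,Δ}`. As `|V₂| = |V| / 2` by double counting edges, the bound follows.

Finner's inequality is proved by integrating out one coordinate `u` at a time: the factors not
involving `u` are constant, and the `Δ` remaining ones are handled by Hölder's inequality with equal
weights `1 / Δ`.
-/

noncomputable section

namespace Stmt13

/-- The number of proper `q`-colorings of the graph `G`. -/
def properCount {V : Type*} (G : SimpleGraph V) (q : ℕ) : ℕ :=
  {f : V → Fin q | ∀ u v : V, G.Adj u v → f u ≠ f v}.ncard

open MeasureTheory Finset ENNReal

/-- **Finner's inequality** with equal exponents. If `g j` depends only on the coordinates in `A j`,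
and every coordinate in `s` lies in exactly `Δ` of the sets `A j`, then integrating
`∏ j, g j ^ (1 / Δ)` over the coordinates in `s` is bounded by the product of the separate integrals
to the power `1 / Δ`. The coordinates outside `s` are frozen at the base point `x`. -/
lemma lmarginal_prod_rpow_le {V J X : Type*} [DecidableEq V] [DecidableEq J] [MeasurableSpace X]
    (μ : V → Measure X) [∀ v, SigmaFinite (μ v)] (T : Finset J) (A : J → Finset V)
    (Δ : ℕ) (hΔ : 1 ≤ Δ) (g : J → (V → X) → ℝ≥0∞) (hg : ∀ j, Measurable (g j))
    (hdep : ∀ j x y, (∀ i ∈ A j, x i = y i) → g j x = g j y)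
    (s : Finset V) (hs : ∀ u ∈ s, #{j ∈ T | u ∈ A j} = Δ) (x : V → X) :
    (∫⋯∫⁻_s, (fun z => ∏ j ∈ T, g j z ^ (1 / (Δ : ℝ))) ∂μ) x
      ≤ ∏ j ∈ T, ((∫⋯∫⁻_(s ∩ A j), g j ∂μ) x) ^ (1 / (Δ : ℝ)) := by
  have hΔ0 : (Δ : ℝ) ≠ 0 := by positivity
  induction s using Finset.induction generalizing x with
  | empty => simp
  | insert u s hu ih =>
    have hmeas : Measurable (fun z => ∏ j ∈ T, g j z ^ (1 / (Δ : ℝ))) :=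
      Finset.measurable_fun_prod _ fun j _ => (hg j).pow_const _
    have hT := hs u (mem_insert_self u s)
    rw [lmarginal_insert _ hmeas hu]
    refine (lintegral_mono fun y => ih (fun w hw => hs w (mem_insert_of_mem hw)) _).trans ?_
    simp_rw [← prod_filter_mul_prod_filter_not T (fun j => u ∈ A j)]
    have hconst : ∀ y, ∏ j ∈ T with u ∉ A j,
          ((∫⋯∫⁻_(s ∩ A j), g j ∂μ) (Function.update x u y)) ^ (1 / (Δ : ℝ))
        = ∏ j ∈ T with u ∉ A j, ((∫⋯∫⁻_(insert u s ∩ A j), g j ∂μ) x) ^ (1 / (Δ : ℝ)) := by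
      intro y
      refine prod_congr rfl fun j hj => ?_
      have hj' : u ∉ A j := (mem_filter.1 hj).2
      rw [insert_inter_of_notMem hj',
        lmarginal_update_of_notMem (hg j) (fun h => hu (mem_inter.1 h).1)]
      have hupd : (g j ∘ fun z => Function.update z u y) = g j := by
        funext z
        refine hdep j _ _ fun i hi => ?_
        have : i ≠ u := by rintro rfl; exact hj' hi
        simp [Function.update_of_ne this]
      rw [hupd]
    simp_rw [hconst]
    have hm : ∀ j, Measurable fun y =>
        (∫⋯∫⁻_(s ∩ A j), g j ∂μ) (Function.update x u y) := fun j =>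
      ((hg j).lmarginal μ).comp (measurable_update x)
    rw [lintegral_mul_const _ (Finset.measurable_fun_prod _ fun j _ => (hm j).pow_const _)]
    gcongr
    refine (lintegral_prod_norm_pow_le _ (fun j _ => (hm j).aemeasurable) ?_ ?_).trans_eq ?_
    · rw [sum_const, hT]; simp [hΔ0]
    · intro _ _; positivity
    · refine prod_congr rfl fun j hj => ?_
      rw [insert_inter_of_mem (mem_filter.1 hj).2, lmarginal_insert _ (hg j)
        (fun h => hu (mem_inter.1 h).1)]

lemma lmarginal_count {V X : Type*} [DecidableEq V] [Fintype X] [MeasurableSpace X]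
    [MeasurableSingletonClass X] (s : Finset V) (f : (V → X) → ℝ≥0∞) (x : V → X) :
    (∫⋯∫⁻_s, f ∂(fun _ => Measure.count)) x
      = ∑ y : s → X, f (Function.updateFinset x s y) := by
  rw [lmarginal, lintegral_fintype]
  simp

/-- The number of colours available for `v` when its neighbours are coloured by `x`. -/
def avail {V : Type*} [Fintype V] (G : SimpleGraph V) [DecidableRel G.Adj] {q : ℕ} (v : V)
    (x : V → Fin q) : Finset (Fin q) :=
  {c | ∀ u ∈ G.neighborFinset v, c ≠ x u}

lemma properCount_le_sum {V : Type*} [Fintype V] [DecidableEq V] (G : SimpleGraph V)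
    [DecidableRel G.Adj] (V₁ V₂ : Finset V) (hpart : V₁ ∪ V₂ = Finset.univ)
    (hbip : ∀ v ∈ V₂, ∀ u, G.Adj v u → u ∈ V₁) (q : ℕ) (x₀ : V → Fin q) :
    properCount G q ≤
      ∑ y : V₁ → Fin q, ∏ v ∈ V₂, #(avail G v (Function.updateFinset x₀ V₁ y)) := by
  classical
  set S : Finset (Σ _ : V₁ → Fin q, (V₂ → Fin q)) := univ.sigma fun y =>
    Fintype.piFinset fun v : V₂ => avail G (v : V) (Function.updateFinset x₀ V₁ y) with hS
  have hcard : #S = ∑ y : V₁ → Fin q, ∏ v ∈ V₂, #(avail G v (Function.updateFinset x₀ V₁ y)) := by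
    rw [hS, card_sigma]
    refine sum_congr rfl fun y _ => ?_
    rw [Fintype.card_piFinset]
    exact prod_coe_sort V₂ fun v => #(avail G v (Function.updateFinset x₀ V₁ y))
  rw [← hcard, ← Set.ncard_coe_finset, properCount]
  refine Set.ncard_le_ncard_of_injOn (fun f => ⟨fun v => f v, fun v => f v⟩) ?_ ?_
    (Finset.finite_toSet _)
  · intro f hf
    simp only [Set.mem_ofPred_eq] at hf
    simp only [hS, coe_sigma, Set.mem_sigma_iff, mem_coe, mem_univ, true_and,
      Fintype.mem_piFinset, avail, mem_filter, SimpleGraph.mem_neighborFinset]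
    intro v u huv
    have hu := hbip v v.2 u huv
    simpa [Function.updateFinset, hu] using hf v u huv
  · intro f _ g _ hfg
    simp only [Sigma.mk.injEq, heq_eq_eq] at hfg
    funext v
    have hv : v ∈ V₁ ∪ V₂ := hpart ▸ mem_univ v
    rcases mem_union.1 hv with h | h
    · exact congrFun hfg.1 ⟨v, h⟩
    · exact congrFun hfg.2 ⟨v, h⟩

/-- A colouring of one side of `K_{Δ,Δ}` by `y` extends in `#(avail G v y) ^ Δ` ways, once that side
is identified with the neighbourhood of `v`. -/
lemma sum_avail_pow_le {V : Type*} [Fintype V] [DecidableEq V] (G : SimpleGraph V)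
    [DecidableRel G.Adj] (Δ q : ℕ) (v : V) (hv : G.degree v = Δ) (x₀ : V → Fin q) :
    ∑ y : G.neighborFinset v → Fin q,
        #(avail G v (Function.updateFinset x₀ (G.neighborFinset v) y)) ^ Δ
      ≤ properCount (completeBipartiteGraph (Fin Δ) (Fin Δ)) q := by
  classical
  let e : Fin Δ ≃ G.neighborFinset v := (Finset.equivFinOfCardEq hv).symm
  set S : Finset (Σ _ : G.neighborFinset v → Fin q, (Fin Δ → Fin q)) := univ.sigma fun y =>
    Fintype.piFinset fun _ : Fin Δ =>
      avail G v (Function.updateFinset x₀ (G.neighborFinset v) y) with hS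
  have hcard : #S = ∑ y : G.neighborFinset v → Fin q,
        #(avail G v (Function.updateFinset x₀ (G.neighborFinset v) y)) ^ Δ := by
    rw [hS, card_sigma]
    simp
  rw [← hcard, ← Set.ncard_coe_finset, properCount]
  refine Set.ncard_le_ncard_of_injOn (fun p => Sum.elim (fun i => p.1 (e i)) p.2) ?_ ?_
    (Set.toFinite _)
  · rintro ⟨y, z⟩ hp
    simp only [hS, coe_sigma, Set.mem_sigma_iff, mem_coe, mem_univ, true_and,
      Fintype.mem_piFinset, avail, mem_filter] at hp
    have key : ∀ i j, z i ≠ y (e j) := by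
      intro i j
      simpa [Function.updateFinset] using hp i (e j) (e j).2
    rintro (i | i) (j | j) h
    · simp at h
    · simpa using (key j i).symm
    · simpa using key i j
    · simp at h
  · rintro ⟨y, z⟩ _ ⟨y', z'⟩ _ h
    have h1 : y = y' := by
      funext a
      simpa using congrFun h (Sum.inl (e.symm a))
    have h2 : z = z' := by
      funext i
      simpa using congrFun h (Sum.inr i)
    rw [h1, h2]

/-- **The Galvin–Tetali entropy bound for proper colorings of regular bipartite graphs.**
Let `G` be a finite bipartite graph with bipartition classes `V₁, V₂` in which every
vertex has degree exactly `Δ ≥ 1`, and let `q ≥ 1`. Then the number of proper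
`q`-colorings of `G` is at most the number of proper `q`-colorings of the complete
bipartite graph `K_{Δ,Δ}` raised to the power `|V₁ ∪ V₂|/(2Δ)`. -/
theorem coloring_count_le_complete_bipartite
    {V : Type*} [Fintype V] [DecidableEq V] (G : SimpleGraph V) [DecidableRel G.Adj]
    (V₁ V₂ : Finset V) (hpart : V₁ ∪ V₂ = Finset.univ) (hdisj : Disjoint V₁ V₂)
    (hbip : ∀ u v : V, G.Adj u v → (u ∈ V₁ ∧ v ∈ V₂) ∨ (u ∈ V₂ ∧ v ∈ V₁))
    (Δ : ℕ) (hΔ : 1 ≤ Δ) (hdeg : ∀ v : V, G.degree v = Δ)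
    (q : ℕ) (hq : 1 ≤ q) :
    (properCount G q : ℝ)
      ≤ (properCount (completeBipartiteGraph (Fin Δ) (Fin Δ)) q : ℝ)
          ^ (((V₁ ∪ V₂).card : ℝ) / (2 * (Δ : ℝ))) := by
  have hΔ0 : (Δ : ℝ) ≠ 0 := by positivity
  set K := properCount (completeBipartiteGraph (Fin Δ) (Fin Δ)) q with hK
  have hdisj' := Finset.disjoint_left.1 hdisj
  have hB : G.IsBipartiteWith (V₁ : Set V) (V₂ : Set V) :=
    ⟨by exact_mod_cast hdisj, fun u v h => by simpa using hbip u v h⟩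
  have hnbr : ∀ v ∈ V₂, ∀ u, G.Adj v u → u ∈ V₁ := fun v hv u h =>
    (hbip v u h).elim (fun h' => absurd hv (hdisj' h'.1)) (fun h' => h'.2)
  have hcard : #V₁ = #V₂ := by
    have h := SimpleGraph.isBipartiteWith_sum_degrees_eq hB
    simp only [hdeg, sum_const, smul_eq_mul] at h
    exact Nat.eq_of_mul_eq_mul_right hΔ h
  have hexp : ((V₁ ∪ V₂).card : ℝ) / (2 * (Δ : ℝ)) = 1 / (Δ : ℝ) * (#V₂ : ℕ) := by
    rw [card_union_of_disjoint hdisj, hcard]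
    push_cast
    field_simp
    ring
  let x₀ : V → Fin q := fun _ => ⟨0, hq⟩
  let F : V → (V → Fin q) → ℝ≥0∞ := fun v x => (#(avail G v x) : ℝ≥0∞)
  have hfin := lmarginal_prod_rpow_le (fun _ : V => (Measure.count : Measure (Fin q))) V₂
    (fun v => G.neighborFinset v) Δ hΔ (fun v x => F v x ^ Δ) (fun v => measurable_of_finite _)
    (fun v x y h => by
      have : avail G v x = avail G v y := by
        ext c
        simp only [avail, mem_filter, mem_univ, true_and]
        exact forall₂_congr fun u hu => by rw [h u hu]
      simp only [F, this])
    V₁ (fun u hu => by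
      rw [← hdeg u, ← SimpleGraph.card_neighborFinset_eq_degree]
      congr 1
      ext v
      simp only [mem_filter, SimpleGraph.mem_neighborFinset]
      refine ⟨fun h => h.2.symm, fun h => ⟨?_, h.symm⟩⟩
      exact (hbip u v h).elim (fun h' => h'.2) (fun h' => absurd h'.1 (hdisj' hu))) x₀
  have hpow : ∀ a : ℝ≥0∞, (a ^ Δ) ^ (1 / (Δ : ℝ)) = a := fun a => by
    rw [← ENNReal.rpow_natCast, ← ENNReal.rpow_mul, mul_one_div_cancel hΔ0, ENNReal.rpow_one]
  simp only [hpow] at hfin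
  have hright : ∀ v ∈ V₂,
      (∫⋯∫⁻_(V₁ ∩ G.neighborFinset v), (fun x => F v x ^ Δ) ∂(fun _ => Measure.count)) x₀
        ≤ (K : ℝ≥0∞) := by
    intro v hv
    rw [inter_eq_right.2 fun u hu => hnbr v hv u (by simpa using hu), lmarginal_count]
    simp only [F]
    exact_mod_cast sum_avail_pow_le G Δ q v (hdeg v) x₀
  have hmain : (properCount G q : ℝ≥0∞) ≤ (K : ℝ≥0∞) ^ (1 / (Δ : ℝ) * (#V₂ : ℕ)) := by
    calc (properCount G q : ℝ≥0∞)
        ≤ ∑ y : V₁ → Fin q, ∏ v ∈ V₂, F v (Function.updateFinset x₀ V₁ y) := by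
          simp only [F]
          exact_mod_cast properCount_le_sum G V₁ V₂ hpart hnbr q x₀
      _ ≤ _ := by rw [lmarginal_count] at hfin; exact hfin
      _ ≤ ∏ _v ∈ V₂, (K : ℝ≥0∞) ^ (1 / (Δ : ℝ)) :=
          prod_le_prod' fun v hv => ENNReal.rpow_le_rpow (hright v hv) (by positivity)
      _ = _ := by rw [prod_const, ENNReal.rpow_mul, ENNReal.rpow_natCast]
  rw [hexp]
  have hr := ENNReal.toReal_mono
    (ENNReal.rpow_ne_top_of_nonneg (by positivity) (ENNReal.natCast_ne_top K)) hmain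
  rwa [← ENNReal.toReal_rpow, ENNReal.toReal_natCast, ENNReal.toReal_natCast] at hr

end Stmt13
end
end

section
/- Let d ≥ 2 and let S ⊂ ℤ^d be a regular odd set with finitely many boundary edges, and set ℓ := |∂S|. Then there exists a set U ⊆ (∂•∘S)⁺ of size at most 40·ℓ·d^{−3/2}·√(log d) such that N(U) separates S, i.e., every edge in ∂S has an endpoint in N(U). -/
/-!
Let `h u` be the number of boundary edges at `u` and `s = √(d log d)`. If `u` and `u + e` lie on
different sides of `S`, then parity forces every direction to be a boundary direction at `u` or at
`u + e`, so `h u + h (u + e) ≥ 2 d` (`Setup.two_mul_le`). Hence every boundary edge has an endpoint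
in `H = {u | h u ≥ d}`, a set with `|H| ≤ 2 ℓ / d`, and it suffices that `H ⊆ N(U)`.
If `2 s > d`, then `U = H` already separates `S` and is small enough. Otherwise there are two kinds
of vertices `u ∈ H`.

* The neighbours of `u` across the boundary have total degree at least `d s`. Choosing every
  boundary vertex `v` with probability `h v * s / (2 d ^ 2)` costs `ℓ s / d ^ 2` vertices on
  average, and `u` has no chosen neighbour with probability at most
  `exp (-s ^ 2 / (2 d)) = d ^ (-1 / 2)`; one extra neighbour is added for each such failure. The
  existence of a good outcome is `exists_hitting_set`, proved by the method of conditional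
  expectations.
* Otherwise `u` has a neighbour `w` on its own side that has at least `d` neighbours on that side
  of degree greater than `2 d - 2 s` (`Setup.exists_rich`). All such `w` are put into `U`; a double
  count shows that there are at most `4 ℓ s / d ^ 2` of them (`Setup.card_rich`).

The argument is carried out for a two-colouring `σ` of an abelian group with a symmetric set `D` of
directions, which treats `S` and its complement on an equal footing.
-/

noncomputable section

namespace Stmt15

/-- Two vertices of `ℤ^d` are adjacent when their `ℓ¹`-distance is `1`. -/
def ZdAdj {d : ℕ} (u v : Fin d → ℤ) : Prop := (∑ i, |u i - v i|) = 1

/-- The neighborhood `N(U)` of a set `U ⊆ ℤ^d`. -/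
def nbhd {d : ℕ} (U : Set (Fin d → ℤ)) : Set (Fin d → ℤ) := {v | ∃ u ∈ U, ZdAdj u v}

/-- The 1-extension `U⁺ = U ∪ N(U)`. -/
def plusExt {d : ℕ} (U : Set (Fin d → ℤ)) : Set (Fin d → ℤ) := U ∪ nbhd U

/-- The internal vertex boundary `∂•S = S ∩ N(S^c)`. -/
def intBdry {d : ℕ} (S : Set (Fin d → ℤ)) : Set (Fin d → ℤ) :=
  {v | v ∈ S ∧ ∃ w, w ∉ S ∧ ZdAdj v w}

/-- The external vertex boundary `∂∘S = N(S) \ S`. -/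
def extBdry {d : ℕ} (S : Set (Fin d → ℤ)) : Set (Fin d → ℤ) := nbhd S \ S

/-- The edge boundary `∂S`: the set of (oriented, from inside to outside) edges of `ℤ^d`
with exactly one endpoint in `S`. -/
def edgeBdry {d : ℕ} (S : Set (Fin d → ℤ)) : Set ((Fin d → ℤ) × (Fin d → ℤ)) :=
  {p | p.1 ∈ S ∧ p.2 ∉ S ∧ ZdAdj p.1 p.2}

/-- `S` is an odd set: its internal vertex boundary consists solely of odd vertices. -/
def IsOddSet {d : ℕ} (S : Set (Fin d → ℤ)) : Prop :=
  ∀ v ∈ intBdry S, Odd (∑ i, v i)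

/-- `S` is regular: both `S` and its complement contain no isolated vertices. -/
def IsRegular {d : ℕ} (S : Set (Fin d → ℤ)) : Prop :=
  (∀ v ∈ S, ∃ w ∈ S, ZdAdj v w) ∧ (∀ v ∈ Sᶜ, ∃ w ∈ Sᶜ, ZdAdj v w)

/-! ### A derandomized hitting lemma -/

/-- Include each `v ∈ V` independently with probability `p v`: the right-hand side is the expected
size of the random set plus the expected number of sets `T i` that it misses, so some outcome does
at least as well. The induction decides the elements of `V` one at a time. -/
lemma exists_hitting_set {A ι : Type*} [DecidableEq A] [DecidableEq ι] (p : A → ℝ)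
    (V : Finset A) (hp0 : ∀ v ∈ V, 0 ≤ p v) (hp1 : ∀ v ∈ V, p v ≤ 1) (T : ι → Finset A)
    (I : Finset ι) :
    ∃ U ⊆ V, (U.card : ℝ) + ((I.filter fun i => Disjoint (T i) U).card : ℝ)
      ≤ ∑ v ∈ V, p v + ∑ i ∈ I, ∏ v ∈ T i ∩ V, (1 - p v) := by
  induction V using Finset.induction_on generalizing I with
  | empty => exact ⟨∅, by simp, by simp⟩
  | insert a V ha ih =>
    have hp0' : ∀ v ∈ V, 0 ≤ p v := fun v hv => hp0 v (Finset.mem_insert_of_mem hv)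
    have hp1' : ∀ v ∈ V, p v ≤ 1 := fun v hv => hp1 v (Finset.mem_insert_of_mem hv)
    have ha0 := hp0 a (Finset.mem_insert_self _ _)
    have ha1 := hp1 a (Finset.mem_insert_self _ _)
    obtain ⟨U₁, hU₁, h₁⟩ := ih hp0' hp1' (I.filter fun i => a ∉ T i)
    obtain ⟨U₀, hU₀, h₀⟩ := ih hp0' hp1' I
    set P : ι → ℝ := fun i => ∏ v ∈ T i ∩ V, (1 - p v) with hP
    have hprod : ∀ i, ∏ v ∈ T i ∩ insert a V, (1 - p v)
        = if a ∈ T i then (1 - p a) * P i else P i := by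
      intro i
      split_ifs with h
      · rw [Finset.inter_insert_of_mem h, Finset.prod_insert (by simp [ha])]
      · rw [Finset.inter_insert_of_notMem h]
    have hsplit : ∑ i ∈ I, P i
        = ∑ i ∈ I.filter (fun i => a ∈ T i), P i + ∑ i ∈ I.filter (fun i => a ∉ T i), P i :=
      (Finset.sum_filter_add_sum_filter_not _ _ _).symm
    have hsum : ∑ i ∈ I, ∏ v ∈ T i ∩ insert a V, (1 - p v)
        = (1 - p a) * ∑ i ∈ I.filter (fun i => a ∈ T i), P i
          + ∑ i ∈ I.filter (fun i => a ∉ T i), P i := by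
      simp only [hprod]
      rw [Finset.sum_ite, Finset.mul_sum]
    rw [hsum, Finset.sum_insert ha]
    have hcard₁ : ((insert a U₁).card : ℝ) ≤ U₁.card + 1 := by
      exact_mod_cast Finset.card_insert_le a U₁
    have hfail₁ : (I.filter fun i => Disjoint (T i) (insert a U₁))
        = (I.filter fun i => a ∉ T i).filter fun i => Disjoint (T i) U₁ := by
      ext i
      simp only [Finset.mem_filter, Finset.disjoint_insert_right]
      tauto
    -- The target is the average, with weights `p a` and `1 - p a`, of the two bounds below.
    by_cases hc : (1 : ℝ) + (∑ v ∈ V, p v + ∑ i ∈ I.filter (fun i => a ∉ T i), P i)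
        ≤ ∑ v ∈ V, p v + ∑ i ∈ I, P i
    · refine ⟨insert a U₁, Finset.insert_subset_insert _ hU₁, ?_⟩
      rw [hfail₁]
      nlinarith
    · refine ⟨U₀, hU₀.trans (Finset.subset_insert _ _), ?_⟩
      push Not at hc
      nlinarith

/-! ### Two-colourings of a Cayley graph -/

section Colouring

variable {A : Type*} [AddCommGroup A]

/-- The directions `f ∈ D` for which the edge `{u, u + f}` is bichromatic under `σ`. -/
def across (D : Finset A) (σ : A → Bool) (u : A) : Finset A :=
  D.filter fun f => σ (u + f) ≠ σ u

/-- The number of bichromatic edges at `u`. -/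
def bdeg (D : Finset A) (σ : A → Bool) (u : A) : ℕ := (across D σ u).card

lemma mem_across {D : Finset A} {σ : A → Bool} {u f : A} :
    f ∈ across D σ u ↔ f ∈ D ∧ σ (u + f) ≠ σ u := by simp [across]

/-- `D` is a symmetric set of `2 * d` directions, and a neighbour `u + f` of a boundary vertex `u`
with the same colour as `u` is not itself a boundary vertex. Every vertex has a neighbour of its own
colour, and `bdry` is the set of endpoints of bichromatic edges. -/
structure Setup (D : Finset A) (σ : A → Bool) (d : ℕ) (bdry : Finset A) : Prop where
  neg_mem : ∀ e ∈ D, -e ∈ D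
  card : D.card = 2 * d
  interior : ∀ u, ∀ e ∈ D, ∀ f ∈ D, ∀ g ∈ D,
    σ (u + e) ≠ σ u → σ (u + f) = σ u → σ (u + f + g) = σ u
  regular : ∀ u, ∃ f ∈ D, σ (u + f) = σ u
  mem_bdry : ∀ u, u ∈ bdry ↔ ∃ e ∈ D, σ (u + e) ≠ σ u

variable {D : Finset A} {σ : A → Bool} {d : ℕ} {bdry : Finset A}

/-- If `u + f` has the colour of `u`, then `u + e + f` also has the colour of `u`, which is not
that of `u + e`. So each direction is bichromatic at `u` or at `u + e`. -/
lemma Setup.two_mul_le (h : Setup D σ d bdry) {u e : A} (he : e ∈ D) (hue : σ (u + e) ≠ σ u) :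
    2 * d ≤ bdeg D σ u + bdeg D σ (u + e) := by
  classical
  rw [← h.card]
  refine (Finset.card_le_card ?_).trans (Finset.card_union_le _ _)
  intro f hf
  rw [Finset.mem_union, mem_across, mem_across]
  by_cases hs : σ (u + f) = σ u
  · right
    have := h.interior u e he f hf e he hue hs
    refine ⟨hf, ?_⟩
    rw [show u + e + f = u + f + e by abel, this]
    exact hue.symm
  · exact Or.inl ⟨hf, hs⟩

lemma Setup.bdeg_le (h : Setup D σ d bdry) (u : A) : bdeg D σ u ≤ 2 * d := by
  rw [← h.card]; exact Finset.card_le_card (Finset.filter_subset _ _)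

lemma Setup.card_same (h : Setup D σ d bdry) (u : A) :
    ((D.filter fun f => σ (u + f) = σ u).card : ℝ) = 2 * d - bdeg D σ u := by
  have h1 := Finset.card_filter_add_card_filter_not (s := D) (fun f => σ (u + f) = σ u)
  rw [h.card] at h1
  have h2 : ((D.filter fun f => σ (u + f) = σ u).card : ℝ) + bdeg D σ u = 2 * d := by
    exact_mod_cast h1
  linarith

lemma Setup.mem_bdry_of_pos (h : Setup D σ d bdry) {u : A} (hu : 0 < bdeg D σ u) :
    u ∈ bdry := by
  obtain ⟨f, hf⟩ := Finset.card_pos.mp hu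
  rw [mem_across] at hf
  exact (h.mem_bdry u).2 ⟨f, hf⟩

/-- Markov's inequality for the boundary degrees. -/
lemma card_filter_mul_le {ℓ : ℝ} (hl : ∑ u ∈ bdry, (bdeg D σ u : ℝ) ≤ 2 * ℓ) (P : A → Prop)
    [DecidablePred P] (hP : ∀ u, P u → d ≤ bdeg D σ u) :
    ((bdry.filter P).card : ℝ) * d ≤ 2 * ℓ := by
  refine le_trans ?_ hl
  rw [← nsmul_eq_mul]
  refine (Finset.card_nsmul_le_sum _ (fun u => (bdeg D σ u : ℝ)) _ ?_).trans
    (Finset.sum_le_sum_of_subset_of_nonneg (Finset.filter_subset _ _) fun _ _ _ => by positivity)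
  intro u hu
  exact_mod_cast hP u (Finset.mem_filter.1 hu).2

/-- A vertex `w` is rich if it has at least `d` neighbours of its own colour whose boundary
degree exceeds `2 * d - 2 * s`. -/
def Rich (D : Finset A) (σ : A → Bool) (d : ℕ) (s : ℝ) (w : A) : Prop :=
  d ≤ (D.filter fun f => σ (w + f) = σ w ∧ 2 * (d : ℝ) - 2 * s < bdeg D σ (w + f)).card

/-- A boundary vertex `u` of degree at least `d` whose neighbours of the other colour have small
total degree has a rich neighbour. Indeed nearly all edges at `u` are bichromatic, and most of the
vertices `u + f` of the other colour have small degree. For a neighbour `u + e` of the colour of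
`u`, the vertex `u + e + f` then has large degree because `{u + f, u + e + f}` is bichromatic. -/
lemma Setup.exists_rich (h : Setup D σ d bdry) {s : ℝ} (hs : 0 < s) (hsd : 2 * s ≤ d) {u : A}
    (hu : d ≤ bdeg D σ u) (hw : ∑ f ∈ across D σ u, (bdeg D σ (u + f) : ℝ) < d * s) :
    ∃ e ∈ D, σ (u + e) = σ u ∧ Rich D σ d s (u + e) := by
  have hu' : (d : ℝ) ≤ bdeg D σ u := by exact_mod_cast hu
  have hnear : 2 * (d : ℝ) - s < bdeg D σ u := by
    have h1 : ((across D σ u).card : ℝ) * (2 * d - bdeg D σ u)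
        ≤ ∑ f ∈ across D σ u, (bdeg D σ (u + f) : ℝ) := by
      rw [← nsmul_eq_mul]
      refine Finset.card_nsmul_le_sum _ _ _ fun f hf => ?_
      rw [mem_across] at hf
      have : 2 * (d : ℝ) ≤ bdeg D σ u + bdeg D σ (u + f) := by
        exact_mod_cast h.two_mul_le hf.1 hf.2
      linarith
    change (bdeg D σ u : ℝ) * _ ≤ _ at h1
    by_contra hc
    push Not at hc
    have : (d : ℝ) * s ≤ bdeg D σ u * (2 * d - bdeg D σ u) :=
      mul_le_mul hu' (by linarith) hs.le (by positivity)
    linarith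
  have hbig : (((across D σ u).filter fun f => 2 * s ≤ (bdeg D σ (u + f) : ℝ)).card : ℝ)
      < d / 2 := by
    have h1 : (((across D σ u).filter fun f => 2 * s ≤ (bdeg D σ (u + f) : ℝ)).card : ℝ)
        * (2 * s) ≤ ∑ f ∈ across D σ u, (bdeg D σ (u + f) : ℝ) := by
      rw [← nsmul_eq_mul]
      exact (Finset.card_nsmul_le_sum _ (fun f => (bdeg D σ (u + f) : ℝ)) _
        fun f hf => (Finset.mem_filter.1 hf).2).trans
        (Finset.sum_le_sum_of_subset_of_nonneg (Finset.filter_subset _ _)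
          fun _ _ _ => by positivity)
    by_contra hc
    push Not at hc
    nlinarith
  have hsplit : (((across D σ u).filter fun f => 2 * s ≤ (bdeg D σ (u + f) : ℝ)).card : ℝ)
      + (((across D σ u).filter fun f => ¬ 2 * s ≤ (bdeg D σ (u + f) : ℝ)).card : ℝ)
      = bdeg D σ u := by
    exact_mod_cast Finset.card_filter_add_card_filter_not
      (s := across D σ u) (fun f => 2 * s ≤ (bdeg D σ (u + f) : ℝ))
  obtain ⟨e, he, hue⟩ := h.regular u
  refine ⟨e, he, hue, ?_⟩
  have hle : (d : ℝ) ≤ ((across D σ u).filter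
      fun f => ¬ 2 * s ≤ (bdeg D σ (u + f) : ℝ)).card := by linarith
  refine (Nat.cast_le.1 hle).trans (Finset.card_le_card ?_)
  intro f hf
  rw [Finset.mem_filter, mem_across, not_le] at hf
  obtain ⟨⟨hfD, huf⟩, hlow⟩ := hf
  have hsame := h.interior u f hfD e he f hfD huf hue
  rw [Finset.mem_filter]
  refine ⟨hfD, hsame.trans hue.symm, ?_⟩
  have h2 := h.two_mul_le (u := u + f) (e := e) he (by
    rw [show u + f + e = u + e + f by abel, hsame]; exact huf.symm)
  rw [show u + f + e = u + e + f by abel] at h2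
  have h3 : 2 * (d : ℝ) ≤ bdeg D σ (u + f) + bdeg D σ (u + e + f) := by exact_mod_cast h2
  linarith

/-- Double counting the monochromatic edges between rich vertices and vertices of degree greater
than `2 * d - 2 * s`: a rich vertex lies on at least `d` of them, and a vertex of such
degree on at most `2 * s`. -/
lemma Setup.card_rich (h : Setup D σ d bdry) {s ℓ : ℝ} (hs : 0 < s) (hsd : 2 * s ≤ d)
    (hl : ∑ u ∈ bdry, (bdeg D σ u : ℝ) ≤ 2 * ℓ) (R : Finset A)
    (hR : ∀ w ∈ R, Rich D σ d s w) : (R.card : ℝ) * d ^ 2 ≤ 4 * ℓ * s := by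
  set H := bdry.filter fun x => 2 * (d : ℝ) - 2 * s < bdeg D σ x with hH
  have hHc : (H.card : ℝ) * d ≤ 2 * ℓ := by
    refine card_filter_mul_le hl _ fun u hu => ?_
    have : (d : ℝ) ≤ bdeg D σ u := by linarith
    exact_mod_cast this
  let r : A → A → Prop := fun w x => σ x = σ w ∧ x - w ∈ D
  have hdc : R.card • (d : ℝ) ≤ H.card • (2 * s) := by
    classical
    refine Finset.card_nsmul_le_card_nsmul r (fun w hw => ?_) (fun x hx => ?_)
    · refine Nat.cast_le.2 ((hR w hw).trans (Finset.card_le_card_of_injOn (fun f => w + f) ?_ ?_))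
      · intro f hf
        simp only [Finset.coe_filter, Set.mem_ofPred_eq] at hf
        simp only [Finset.mem_coe, Finset.mem_bipartiteAbove, hH, Finset.mem_filter, r]
        refine ⟨⟨h.mem_bdry_of_pos ?_, hf.2.2⟩, hf.2.1, by simpa using hf.1⟩
        have : (0 : ℝ) < bdeg D σ (w + f) := by linarith [hf.2.2]
        exact_mod_cast this
      · intro a _ b _ hab
        simpa using hab
    · have hx' := (Finset.mem_filter.1 hx).2
      have h1 : ((R.bipartiteBelow r x).card : ℝ)
          ≤ (D.filter fun f => σ (x + f) = σ x).card := by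
        refine Nat.cast_le.2 (Finset.card_le_card_of_injOn (fun w => w - x) ?_ ?_)
        · intro w hw
          simp only [Finset.mem_coe, Finset.mem_bipartiteBelow, r] at hw
          simp only [Finset.coe_filter, Set.mem_ofPred_eq]
          refine ⟨?_, ?_⟩
          · have := h.neg_mem _ hw.2.2
            rwa [neg_sub] at this
          · rw [add_sub_cancel]; exact hw.2.1.symm
        · intro a _ b _ hab
          simpa using hab
      rw [h.card_same] at h1
      linarith
  rw [nsmul_eq_mul, nsmul_eq_mul] at hdc
  have hd0 : (0 : ℝ) ≤ d := by positivity
  nlinarith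

/-- The separating set, for any scale `s` at which the failure probability
`exp (-s ^ 2 / (2 * d))` is of order at most `s / d`. -/
theorem Setup.exists_separating (h : Setup D σ d bdry) (hd : 0 < d) {s ℓ : ℝ} (hs : 0 < s)
    (hexp : Real.exp (-(s ^ 2 / (2 * d))) ≤ 2 * s / d)
    (hl : ∑ u ∈ bdry, (bdeg D σ u : ℝ) ≤ 2 * ℓ) :
    ∃ U : Finset A, (∀ w ∈ U, w ∈ bdry ∨ ∃ f ∈ D, w + f ∈ bdry) ∧
      (U.card : ℝ) * d ^ 2 ≤ 40 * ℓ * s ∧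
      ∀ u, ∀ e ∈ D, σ (u + e) ≠ σ u → (∃ f ∈ D, u + f ∈ U) ∨ ∃ f ∈ D, u + e + f ∈ U := by
  classical
  have hdpos : (0 : ℝ) < d := by exact_mod_cast hd
  have hl0 : 0 ≤ ℓ := by
    have : 0 ≤ ∑ u ∈ bdry, (bdeg D σ u : ℝ) := Finset.sum_nonneg fun _ _ => by positivity
    linarith
  set H := bdry.filter fun u => d ≤ bdeg D σ u with hH
  have hHc : (H.card : ℝ) * d ≤ 2 * ℓ := card_filter_mul_le hl _ fun u hu => hu
  have hmemH : ∀ u, d ≤ bdeg D σ u → u ∈ H := fun u hu =>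
    Finset.mem_filter.2 ⟨h.mem_bdry_of_pos (by omega), hu⟩
  by_cases hsd : 2 * s ≤ d
  swap
  · -- For large `s` the set `H` itself is small enough.
    push Not at hsd
    refine ⟨H, fun w hw => Or.inl (Finset.mem_filter.1 hw).1, ?_, fun u e he hue => ?_⟩
    · have h1 : (H.card : ℝ) * d * d ≤ 2 * ℓ * d := by gcongr
      nlinarith
    · have h2 := h.two_mul_le he hue
      by_cases hu : d ≤ bdeg D σ u
      · exact Or.inr ⟨-e, h.neg_mem e he, by simpa using hmemH u hu⟩
      · exact Or.inl ⟨e, he, hmemH _ (by omega)⟩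
  set p : A → ℝ := fun v => s / (2 * d ^ 2) * bdeg D σ v with hp
  set T : A → Finset A := fun u => (across D σ u).image fun f => u + f with hT
  set G := H.filter fun u => d * s ≤ ∑ f ∈ across D σ u, (bdeg D σ (u + f) : ℝ) with hG
  have hTb : ∀ u, T u ⊆ bdry := by
    intro u v hv
    obtain ⟨f, hf, rfl⟩ := Finset.mem_image.1 hv
    rw [mem_across] at hf
    exact (h.mem_bdry _).2 ⟨-f, h.neg_mem f hf.1, by simpa using hf.2.symm⟩
  have hp0 : ∀ v, 0 ≤ p v := fun v => by positivity
  have hp1 : ∀ v, p v ≤ 1 := by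
    intro v
    have h1 : (bdeg D σ v : ℝ) ≤ 2 * d := by exact_mod_cast h.bdeg_le v
    calc p v ≤ s / (2 * d ^ 2) * (2 * d) := by simp only [hp]; gcongr
      _ = s / d := by field_simp
      _ ≤ 1 := by rw [div_le_one hdpos]; linarith
  obtain ⟨U₁, hU₁, hc⟩ := exists_hitting_set p bdry (fun v _ => hp0 v) (fun v _ => hp1 v) T G
  set F := G.filter fun i => Disjoint (T i) U₁ with hF
  have hprod : ∀ u ∈ G, ∏ v ∈ T u ∩ bdry, (1 - p v) ≤ 2 * s / d := by
    intro u hu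
    have hw := (Finset.mem_filter.1 hu).2
    rw [Finset.inter_eq_left.2 (hTb u)]
    have hsum : s ^ 2 / (2 * d) ≤ ∑ v ∈ T u, p v := by
      simp only [hp, hT]
      rw [← Finset.mul_sum, Finset.sum_image (by intro a _ b _ hab; simpa using hab)]
      calc s ^ 2 / (2 * d) = s / (2 * d ^ 2) * (d * s) := by field_simp
        _ ≤ _ := by gcongr
    calc ∏ v ∈ T u, (1 - p v) ≤ ∏ v ∈ T u, Real.exp (-p v) :=
          Finset.prod_le_prod (fun v _ => by linarith [hp1 v])
            fun v _ => Real.one_sub_le_exp_neg (p v)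
      _ = Real.exp (-∑ v ∈ T u, p v) := by rw [← Real.exp_sum, Finset.sum_neg_distrib]
      _ ≤ Real.exp (-(s ^ 2 / (2 * d))) := Real.exp_le_exp.2 (by linarith)
      _ ≤ _ := hexp
  have hcost : ((U₁.card : ℝ) + F.card) * d ^ 2 ≤ 5 * ℓ * s := by
    have h1 : ∑ v ∈ bdry, p v ≤ s / (2 * d ^ 2) * (2 * ℓ) := by
      simp only [hp]; rw [← Finset.mul_sum]; gcongr
    have h2 : ∑ u ∈ G, ∏ v ∈ T u ∩ bdry, (1 - p v) ≤ H.card * (2 * s / d) := by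
      refine (Finset.sum_le_card_nsmul _ _ _ hprod).trans ?_
      rw [nsmul_eq_mul]
      have : (G.card : ℝ) ≤ H.card := by exact_mod_cast Finset.card_filter_le _ _
      gcongr
    have h3 : (U₁.card : ℝ) + F.card ≤ s / (2 * d ^ 2) * (2 * ℓ) + H.card * (2 * s / d) :=
      hc.trans (add_le_add h1 h2)
    calc ((U₁.card : ℝ) + F.card) * d ^ 2
        ≤ (s / (2 * d ^ 2) * (2 * ℓ) + H.card * (2 * s / d)) * d ^ 2 := by gcongr
      _ = ℓ * s + (H.card * d) * (2 * s) := by field_simp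
      _ ≤ ℓ * s + (2 * ℓ) * (2 * s) := by gcongr
      _ = 5 * ℓ * s := by ring
  have hnb : ∀ u : A, ∃ e : A, u ∈ bdry → e ∈ D ∧ σ (u + e) ≠ σ u := by
    intro u
    by_cases hu : u ∈ bdry
    · obtain ⟨e, he⟩ := (h.mem_bdry u).1 hu
      exact ⟨e, fun _ => he⟩
    · exact ⟨0, fun h' => absurd h' hu⟩
  choose nb hnb using hnb
  set R := ((bdry ×ˢ D).image fun q => q.1 + q.2).filter (Rich D σ d s) with hR
  have hRc := h.card_rich hs hsd hl R fun w hw => (Finset.mem_filter.1 hw).2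
  have hFb : ∀ u ∈ F, u ∈ bdry := fun u hu =>
    (Finset.mem_filter.1 (Finset.mem_filter.1 (Finset.mem_filter.1 hu).1).1).1
  have hcover : ∀ u, d ≤ bdeg D σ u →
      ∃ f ∈ D, u + f ∈ U₁ ∪ F.image (fun u => u + nb u) ∪ R := by
    intro u hu
    have huH := hmemH u hu
    have hub := (Finset.mem_filter.1 huH).1
    by_cases hw : d * s ≤ ∑ f ∈ across D σ u, (bdeg D σ (u + f) : ℝ)
    · have huG : u ∈ G := Finset.mem_filter.2 ⟨huH, hw⟩
      by_cases hdis : Disjoint (T u) U₁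
      · have huF : u ∈ F := Finset.mem_filter.2 ⟨huG, hdis⟩
        refine ⟨nb u, (hnb u hub).1, ?_⟩
        exact Finset.mem_union_left _ (Finset.mem_union_right _
          (Finset.mem_image_of_mem (fun u => u + nb u) huF))
      · obtain ⟨v, hv, hvU⟩ := Finset.not_disjoint_iff.1 hdis
        obtain ⟨f, hf, rfl⟩ := Finset.mem_image.1 hv
        exact ⟨f, (mem_across.1 hf).1, Finset.mem_union_left _ (Finset.mem_union_left _ hvU)⟩
    · obtain ⟨e, he, -, hr⟩ := h.exists_rich hs hsd hu (not_le.1 hw)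
      refine ⟨e, he, Finset.mem_union_right _ (Finset.mem_filter.2 ⟨?_, hr⟩)⟩
      exact Finset.mem_image.2 ⟨(u, e), Finset.mem_product.2 ⟨hub, he⟩, rfl⟩
  refine ⟨U₁ ∪ F.image (fun u => u + nb u) ∪ R, ?_, ?_, fun u e he hue => ?_⟩
  · intro w hw
    rcases Finset.mem_union.1 hw with hw | hw
    · rcases Finset.mem_union.1 hw with hw | hw
      · exact Or.inl (hU₁ hw)
      · obtain ⟨u, hu, rfl⟩ := Finset.mem_image.1 hw
        have := hnb u (hFb u hu)
        exact Or.inl (hTb u (Finset.mem_image_of_mem (fun f => u + f) (mem_across.2 this)))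
    · obtain ⟨⟨u, e⟩, hq, rfl⟩ := Finset.mem_image.1 (Finset.mem_filter.1 hw).1
      rw [Finset.mem_product] at hq
      exact Or.inr ⟨-e, h.neg_mem e hq.2, by simpa using hq.1⟩
  · have h1 : ((U₁ ∪ F.image (fun u => u + nb u) ∪ R).card : ℝ)
        ≤ U₁.card + F.card + R.card := by
      have := Finset.card_union_le (U₁ ∪ F.image (fun u => u + nb u)) R
      have := Finset.card_union_le U₁ (F.image (fun u => u + nb u))
      have := Finset.card_image_le (s := F) (f := fun u => u + nb u)
      exact_mod_cast (by omega :
        (U₁ ∪ F.image (fun u => u + nb u) ∪ R).card ≤ U₁.card + F.card + R.card)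
    have h2 : 0 ≤ ℓ * s := by positivity
    calc ((U₁ ∪ F.image (fun u => u + nb u) ∪ R).card : ℝ) * d ^ 2
        ≤ ((U₁.card : ℝ) + F.card + R.card) * d ^ 2 := by gcongr
      _ = ((U₁.card : ℝ) + F.card) * d ^ 2 + R.card * d ^ 2 := by ring
      _ ≤ 40 * ℓ * s := by linarith
  · have h2 := h.two_mul_le he hue
    by_cases hu : d ≤ bdeg D σ u
    · exact Or.inl (hcover u hu)
    · exact Or.inr (hcover _ (by omega))

end Colouring

/-! ### The lattice -/

/-- The `2 * d` unit vectors `± eᵢ` of `ℤ^d`; `true` stands for the positive sign. -/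
def dirs (d : ℕ) : Finset (Fin d → ℤ) :=
  (Finset.univ : Finset (Fin d × Bool)).image fun q => Pi.single q.1 (if q.2 then 1 else -1)

lemma mem_dirs {d : ℕ} {f : Fin d → ℤ} :
    f ∈ dirs d ↔ ∃ i, f = Pi.single i 1 ∨ f = Pi.single i (-1) := by
  simp only [dirs, Finset.mem_image, Finset.mem_univ, true_and, Prod.exists, Bool.exists_bool]
  constructor
  · rintro ⟨i, h | h⟩
    · exact ⟨i, Or.inr (by simpa using h.symm)⟩
    · exact ⟨i, Or.inl (by simpa using h.symm)⟩
  · rintro ⟨i, h | h⟩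
    · exact ⟨i, Or.inr (by simpa using h.symm)⟩
    · exact ⟨i, Or.inl (by simpa using h.symm)⟩

lemma card_dirs (d : ℕ) : (dirs d).card = 2 * d := by
  rw [dirs, Finset.card_image_of_injective]
  · simp [mul_comm]
  · rintro ⟨i, a⟩ ⟨j, b⟩ hab
    have hij : i = j := by
      by_contra hne
      have := congrFun hab i
      simp only [Pi.single_eq_same, Pi.single_eq_of_ne hne] at this
      split_ifs at this; omega
    subst hij
    have := congrFun hab i
    simp only [Pi.single_eq_same] at this
    cases a <;> cases b <;> simp_all

lemma neg_mem_dirs {d : ℕ} {f : Fin d → ℤ} (hf : f ∈ dirs d) : -f ∈ dirs d := by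
  rw [mem_dirs] at *
  obtain ⟨i, rfl | rfl⟩ := hf
  · exact ⟨i, Or.inr (by rw [Pi.single_neg])⟩
  · exact ⟨i, Or.inl (by rw [← Pi.single_neg, neg_neg])⟩

lemma odd_sum_dirs {d : ℕ} {f : Fin d → ℤ} (hf : f ∈ dirs d) : Odd (∑ i, f i) := by
  rw [mem_dirs] at hf
  obtain ⟨i, rfl | rfl⟩ := hf <;> simp

lemma zdAdj_iff {d : ℕ} {u v : Fin d → ℤ} : ZdAdj u v ↔ v - u ∈ dirs d := by
  rw [mem_dirs]
  constructor
  · intro h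
    unfold ZdAdj at h
    have hne : ∃ i, u i - v i ≠ 0 := by
      by_contra hc
      push Not at hc
      simp [hc] at h
    obtain ⟨i, hi⟩ := hne
    rw [← Finset.add_sum_erase _ _ (Finset.mem_univ i)] at h
    have h0 : 0 ≤ ∑ j ∈ Finset.univ.erase i, |u j - v j| :=
      Finset.sum_nonneg fun _ _ => abs_nonneg _
    have h1 : 1 ≤ |u i - v i| := Int.one_le_abs hi
    have hz : ∑ j ∈ Finset.univ.erase i, |u j - v j| = 0 := by omega
    have hi1 : |u i - v i| = 1 := by omega
    rw [Finset.sum_eq_zero_iff_of_nonneg fun _ _ => abs_nonneg _] at hz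
    have hj : ∀ j, j ≠ i → v j - u j = 0 := by
      intro j hji
      have := abs_eq_zero.1 (hz j (by simp [hji]))
      omega
    refine ⟨i, ?_⟩
    rcases (abs_eq zero_le_one).1 hi1 with h' | h'
    · right
      ext j
      by_cases hji : j = i
      · subst hji; simp; omega
      · simp [hji, hj j hji]
    · left
      ext j
      by_cases hji : j = i
      · subst hji; simp; omega
      · simp [hji, hj j hji]
  · intro h
    have key : ∀ i (c : ℤ), v - u = Pi.single i c → |c| = 1 → ZdAdj u v := by
      intro i c hc h1
      unfold ZdAdj
      rw [Finset.sum_eq_single i]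
      · have := congrFun hc i
        simp only [Pi.sub_apply, Pi.single_eq_same] at this
        rw [abs_sub_comm, this, h1]
      · intro j _ hji
        have := congrFun hc j
        simp only [Pi.sub_apply, Pi.single_eq_of_ne hji] at this
        rw [abs_sub_comm, this, abs_zero]
      · simp
    obtain ⟨i, h | h⟩ := h
    · exact key i 1 h (by simp)
    · exact key i (-1) h (by simp)

lemma zdAdj_add {d : ℕ} {u f : Fin d → ℤ} : ZdAdj u (u + f) ↔ f ∈ dirs d := by
  rw [zdAdj_iff, add_sub_cancel_left]

lemma zdAdj_symm {d : ℕ} {u v : Fin d → ℤ} (h : ZdAdj u v) : ZdAdj v u := by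
  rw [zdAdj_iff] at *
  simpa using neg_mem_dirs h

open Classical in
/-- The membership colouring of `S`. -/
def colour {d : ℕ} (S : Set (Fin d → ℤ)) (x : Fin d → ℤ) : Bool := decide (x ∈ S)

lemma colour_eq_iff {d : ℕ} {S : Set (Fin d → ℤ)} {x y : Fin d → ℤ} :
    colour S x = colour S y ↔ (x ∈ S ↔ y ∈ S) := by
  simp [colour]

/-- All endpoints of boundary edges. -/
def bdryFinset {d : ℕ} {S : Set (Fin d → ℤ)} (hfin : (edgeBdry S).Finite) :
    Finset (Fin d → ℤ) :=
  hfin.toFinset.image Prod.fst ∪ hfin.toFinset.image Prod.snd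

lemma mem_bdryFinset {d : ℕ} {S : Set (Fin d → ℤ)} (hfin : (edgeBdry S).Finite)
    (u : Fin d → ℤ) :
    u ∈ bdryFinset hfin ↔ ∃ e ∈ dirs d, colour S (u + e) ≠ colour S u := by
  simp only [bdryFinset, Finset.mem_union, Finset.mem_image, Set.Finite.mem_toFinset, Prod.exists,
    ne_eq, colour_eq_iff]
  constructor
  · rintro (⟨a, b, ⟨h1, h2, h3⟩, rfl⟩ | ⟨a, b, ⟨h1, h2, h3⟩, rfl⟩)
    · refine ⟨b - a, zdAdj_iff.1 h3, ?_⟩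
      simp only [add_sub_cancel]
      tauto
    · refine ⟨a - b, zdAdj_iff.1 (zdAdj_symm h3), ?_⟩
      simp only [add_sub_cancel]
      tauto
  · rintro ⟨e, he, hne⟩
    by_cases hu : u ∈ S
    · exact Or.inl ⟨u, u + e, ⟨hu, fun h => hne (by tauto), zdAdj_add.2 he⟩, rfl⟩
    · exact Or.inr ⟨u + e, u, ⟨by tauto, hu, zdAdj_symm (zdAdj_add.2 he)⟩, rfl⟩

lemma bdryFinset_subset {d : ℕ} {S : Set (Fin d → ℤ)} (hfin : (edgeBdry S).Finite)
    {u : Fin d → ℤ} (hu : u ∈ bdryFinset hfin) : u ∈ intBdry S ∪ extBdry S := by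
  simp only [bdryFinset, Finset.mem_union, Finset.mem_image, Set.Finite.mem_toFinset,
    Prod.exists] at hu
  rcases hu with ⟨a, b, ⟨h1, h2, h3⟩, rfl⟩ | ⟨a, b, ⟨h1, h2, h3⟩, rfl⟩
  · exact Or.inl ⟨h1, b, h2, h3⟩
  · exact Or.inr ⟨⟨a, h1, h3⟩, h2⟩

lemma sum_bdeg_le {d : ℕ} {S : Set (Fin d → ℤ)} (hfin : (edgeBdry S).Finite) :
    ∑ u ∈ bdryFinset hfin, (bdeg (dirs d) (colour S) u : ℝ) ≤ 2 * ((edgeBdry S).ncard : ℝ) := by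
  classical
  have hcard : ((bdryFinset hfin).sigma fun u => across (dirs d) (colour S) u).card
      ≤ (hfin.toFinset ×ˢ (Finset.univ : Finset Bool)).card := by
    -- Each bichromatic edge is recorded from both of its endpoints; the Boolean tells them apart.
    refine Finset.card_le_card_of_injOn
      (fun q => if q.1 ∈ S then ((q.1, q.1 + q.2), true) else ((q.1 + q.2, q.1), false)) ?_ ?_
    · rintro ⟨u, f⟩ hq
      simp only [Finset.mem_coe, Finset.mem_sigma, mem_across, ne_eq, colour_eq_iff] at hq
      obtain ⟨-, hf, hne⟩ := hq
      simp only [Finset.mem_coe, Finset.mem_product, Finset.mem_univ, and_true,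
        Set.Finite.mem_toFinset]
      by_cases hu : u ∈ S
      · simp only [hu, if_true]
        exact ⟨hu, fun h => hne (by tauto), zdAdj_add.2 hf⟩
      · simp only [hu, if_false]
        exact ⟨by tauto, hu, zdAdj_symm (zdAdj_add.2 hf)⟩
    · rintro ⟨u, f⟩ - ⟨v, g⟩ - hq
      by_cases hu : u ∈ S <;> by_cases hv : v ∈ S <;>
        simp only [hu, hv, if_true, if_false, Prod.mk.injEq] at hq
      · obtain ⟨⟨rfl, h⟩, -⟩ := hq
        rw [add_left_cancel h]
      · simp at hq
      · simp at hq
      · obtain ⟨⟨h, rfl⟩, -⟩ := hq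
        rw [add_left_cancel h]
  rw [Finset.card_sigma, Finset.card_product, ← Set.ncard_eq_toFinset_card _ hfin] at hcard
  have : ∑ u ∈ bdryFinset hfin, bdeg (dirs d) (colour S) u ≤ 2 * (edgeBdry S).ncard := by
    refine hcard.trans (le_of_eq ?_)
    simp [mul_comm]
  exact_mod_cast this

/-- The property `interior` is a parity argument: for a boundary edge, the endpoint in `S` is odd
and the other one even, so two adjacent vertices of equal membership in `S` cannot both be
boundary vertices. -/
lemma setup_colour {d : ℕ} {S : Set (Fin d → ℤ)} (hodd : IsOddSet S) (hreg : IsRegular S)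
    (hfin : (edgeBdry S).Finite) : Setup (dirs d) (colour S) d (bdryFinset hfin) where
  neg_mem _ he := neg_mem_dirs he
  card := card_dirs d
  mem_bdry := mem_bdryFinset hfin
  regular u := by
    by_cases hu : u ∈ S
    · obtain ⟨w, hw, hadj⟩ := hreg.1 u hu
      exact ⟨w - u, zdAdj_iff.1 hadj, by rw [add_sub_cancel, colour_eq_iff]; tauto⟩
    · obtain ⟨w, hw, hadj⟩ := hreg.2 u hu
      refine ⟨w - u, zdAdj_iff.1 hadj, ?_⟩
      rw [add_sub_cancel, colour_eq_iff]
      exact iff_of_false hw hu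
  interior u e he f hf g hg hue huf := by
    by_contra hc
    simp only [ne_eq, colour_eq_iff] at hue huf hc
    have oe := odd_sum_dirs he
    have of := odd_sum_dirs hf
    have og := odd_sum_dirs hg
    by_cases hu : u ∈ S
    · have h1 := hodd u ⟨hu, u + e, fun h => hue (by tauto), zdAdj_add.2 he⟩
      have h2 := hodd (u + f) ⟨by tauto, u + f + g, fun h => hc (by tauto), zdAdj_add.2 hg⟩
      simp only [Pi.add_apply, Finset.sum_add_distrib] at h2
      grind
    · have h1 := hodd (u + e) ⟨by tauto, u, hu, zdAdj_symm (zdAdj_add.2 he)⟩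
      have h2 := hodd (u + f + g) ⟨by tauto, u + f, by tauto, zdAdj_symm (zdAdj_add.2 hg)⟩
      simp only [Pi.add_apply, Finset.sum_add_distrib] at h1 h2
      grind

/-- **A small set whose neighborhood separates a regular odd set.**
Let `d ≥ 2` and let `S ⊆ ℤ^d` be a regular odd set with `ℓ := |∂S|` finite. Then there
exists `U ⊆ (∂•∘S)⁺` of size at most `40 ℓ d^{-3/2} √(log d)` such that `N(U)` separates
`S`, i.e. every edge of `∂S` has an endpoint in `N(U)`. -/
theorem exists_separating_set (d : ℕ) (hd : 2 ≤ d) (S : Set (Fin d → ℤ))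
    (hodd : IsOddSet S) (hreg : IsRegular S) (hfin : (edgeBdry S).Finite) :
    ∃ U : Set (Fin d → ℤ), U ⊆ plusExt (intBdry S ∪ extBdry S) ∧ U.Finite ∧
      (U.ncard : ℝ) ≤ 40 * ((edgeBdry S).ncard : ℝ) * (d : ℝ) ^ (-(3 : ℝ) / 2)
          * Real.sqrt (Real.log d) ∧
      ∀ p ∈ edgeBdry S, p.1 ∈ nbhd U ∨ p.2 ∈ nbhd U := by
  have hdpos : (0 : ℝ) < d := by positivity
  have hlog : (1 : ℝ) / 2 ≤ Real.log d := by
    have h1 : Real.log 2 ≤ Real.log d := Real.log_le_log (by norm_num) (by exact_mod_cast hd)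
    linarith [Real.log_two_gt_d9]
  have hsl : (1 : ℝ) / 2 ≤ √(Real.log d) := by
    refine Real.le_sqrt_of_sq_le ?_
    linarith
  have hsd : 0 < √(d : ℝ) := Real.sqrt_pos.2 hdpos
  set s : ℝ := √(d : ℝ) * √(Real.log d) with hs
  have hs0 : 0 < s := by positivity
  have hs2 : s ^ 2 = d * Real.log d := by
    rw [hs, mul_pow, Real.sq_sqrt hdpos.le, Real.sq_sqrt (by linarith)]
  have hexp : Real.exp (-(s ^ 2 / (2 * d))) ≤ 2 * s / d := by
    have h1 : Real.exp (-(s ^ 2 / (2 * d))) = (√(d : ℝ))⁻¹ := by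
      rw [Real.exp_neg, hs2, Real.sqrt_eq_rpow, Real.rpow_def_of_pos hdpos]
      congr 2
      field_simp
    have h2 : 2 * s / d = 2 * √(Real.log d) * (√(d : ℝ))⁻¹ := by
      rw [hs]
      field_simp
      rw [Real.sq_sqrt hdpos.le]
    rw [h1, h2]
    exact le_mul_of_one_le_left (by positivity) (by linarith)
  obtain ⟨U, hU, hcard, hsep⟩ := (setup_colour hodd hreg hfin).exists_separating (by omega) hs0
    hexp (sum_bdeg_le hfin)
  refine ⟨U, fun w hw => ?_, U.finite_toSet, ?_, ?_⟩
  · rcases hU w hw with hb | ⟨f, hf, hb⟩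
    · exact Or.inl (bdryFinset_subset hfin hb)
    · exact Or.inr ⟨w + f, bdryFinset_subset hfin hb, zdAdj_symm (zdAdj_add.2 hf)⟩
  · rw [Set.ncard_coe_finset]
    have hpow : (d : ℝ) ^ (-(3 : ℝ) / 2) * d ^ 2 = √(d : ℝ) := by
      rw [Real.sqrt_eq_rpow, ← Real.rpow_natCast, ← Real.rpow_add hdpos]
      norm_num
    refine le_of_mul_le_mul_right (hcard.trans (le_of_eq ?_)) (by positivity : (0 : ℝ) < d ^ 2)
    rw [hs, ← hpow]
    ring
  · rintro ⟨a, b⟩ ⟨ha, hb, hadj⟩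
    have hadj' := zdAdj_iff.1 hadj
    have := hsep a (b - a) hadj' (by
      rw [add_sub_cancel, ne_eq, colour_eq_iff]
      exact fun h => hb (h.2 ha))
    rw [add_sub_cancel] at this
    rcases this with ⟨f, hf, hm⟩ | ⟨f, hf, hm⟩
    · exact Or.inl ⟨a + f, hm, zdAdj_symm (zdAdj_add.2 hf)⟩
    · exact Or.inr ⟨b + f, hm, zdAdj_symm (zdAdj_add.2 hf)⟩

end Stmt15
end
end

section
/- Let G = (V,E) be a graph of maximum degree Δ ≥ 2, let A ⊆ V be finite and let t ≥ 1 be a real number. Then there exists a set B ⊆ A of size |B| ≤ ((1 + log Δ)/t)·|A| such that N_t(A) ⊆ N(B). -/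
/-!
The sets `N(a)`, `a ∈ A`, are to cover the set `U` of vertices with at least `t` neighbours in `A`,
and the greedy algorithm achieves this. The analysis uses the potential
`Φ(U) = ∑ a ∈ A, H(|U ∩ N(a)|)`, where `H` is the harmonic number and `U` the uncovered set.
If the greedy choice covers `m` new elements, then every `|U ∩ N(b)|` is at most `m`, so by
`harmonic_add_div_le` the term of `b` drops by at least `1 / m` per newly covered element of `N(b)`.
Each of the `m` new elements lies in at least `t` of the sets, so by double counting `Φ` drops by
at least `t`. Hence at most `Φ / t` sets are chosen (`exists_greedy_cover`), and initially
`Φ ≤ |A| H(Δ) ≤ |A| (1 + log Δ)`.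
-/

noncomputable section

namespace Stmt17

/-- Each of the `j` increments between `H(i)` and `H(i + j)` is at least `1 / m`. -/
lemma harmonic_add_div_le (m i j : ℕ) (h : i + j ≤ m) :
    (harmonic i : ℝ) + (j : ℝ) / m ≤ (harmonic (i + j) : ℝ) := by
  induction j with
  | zero => simp
  | succ j ih =>
    have ih := ih (by omega)
    have hle : (1 : ℝ) / m ≤ ((i + j + 1 : ℕ) : ℝ)⁻¹ := by
      rw [one_div]
      apply inv_anti₀
      · positivity
      · exact_mod_cast h
    rw [← add_assoc, harmonic_succ]
    push_cast at hle ⊢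
    rw [add_div]
    linarith

open Finset in
/-- Greedy set cover: if every element of `U` lies in at least `t` of the sets `S a`, `a ∈ A`,
then `U` is covered by at most `(∑ a ∈ A, H(|U ∩ S a|)) / t` of them. -/
lemma exists_greedy_cover {α β : Type*} [DecidableEq α] [DecidableEq β] (S : α → Finset β)
    (A : Finset α) (t : ℝ) (ht : 0 < t) (U : Finset β)
    (hU : ∀ u ∈ U, t ≤ (#{a ∈ A | u ∈ S a} : ℝ)) :
    ∃ B ⊆ A, t * (#B : ℝ) ≤ ∑ a ∈ A, (harmonic #(U ∩ S a) : ℝ) ∧ U ⊆ B.biUnion S := by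
  induction U using Finset.strongInduction with
  | H U ih =>
    rcases U.eq_empty_or_nonempty with rfl | ⟨u, hu⟩
    · exact ⟨∅, by simp, by simp, by simp⟩
    have hne : ({a ∈ A | u ∈ S a}).Nonempty := by
      rw [← Finset.card_pos]
      exact_mod_cast ht.trans_le (hU u hu)
    obtain ⟨a₀, ha₀⟩ := hne
    rw [Finset.mem_filter] at ha₀
    obtain ⟨a, haA, hmax⟩ := A.exists_max_image (fun a => #(U ∩ S a)) ⟨a₀, ha₀.1⟩
    have hm : 0 < #(U ∩ S a) :=
      (Finset.card_pos.2 ⟨u, Finset.mem_inter.2 ⟨hu, ha₀.2⟩⟩).trans_le (hmax a₀ ha₀.1)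
    obtain ⟨w, hw⟩ := Finset.card_pos.1 hm
    rw [Finset.mem_inter] at hw
    have hss : U \ S a ⊂ U := by
      refine ⟨Finset.sdiff_subset, fun h => ?_⟩
      exact (Finset.mem_sdiff.1 (h hw.1)).2 hw.2
    obtain ⟨B, hBA, hB, hcov⟩ := ih _ hss fun u hu => hU u (Finset.mem_sdiff.1 hu).1
    refine ⟨insert a B, Finset.insert_subset haA hBA, ?_, ?_⟩
    · have hdrop : ∀ b ∈ A, (harmonic #((U \ S a) ∩ S b) : ℝ) +
          (#{x ∈ U ∩ S a | x ∈ S b} : ℝ) / #(U ∩ S a) ≤ (harmonic #(U ∩ S b) : ℝ) := by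
        intro b hb
        have hsplit : #((U \ S a) ∩ S b) + #{x ∈ U ∩ S a | x ∈ S b} = #(U ∩ S b) := by
          rw [← Finset.card_union_of_disjoint]
          · congr 1
            ext x
            simp only [mem_union, mem_inter, mem_sdiff, mem_filter]
            tauto
          · rw [Finset.disjoint_left]
            intro x
            simp only [mem_inter, mem_sdiff, mem_filter]
            tauto
        rw [← hsplit]
        exact harmonic_add_div_le _ _ _ (hsplit.trans_le (hmax b hb))
      have hcount : ∑ b ∈ A, (#{x ∈ U ∩ S a | x ∈ S b} : ℝ) =
          ∑ x ∈ U ∩ S a, (#{b ∈ A | x ∈ S b} : ℝ) := by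
        exact_mod_cast
          Finset.sum_card_bipartiteAbove_eq_sum_card_bipartiteBelow (fun b x => x ∈ S b)
      have htot : (#(U ∩ S a) : ℝ) * t ≤ ∑ x ∈ U ∩ S a, (#{b ∈ A | x ∈ S b} : ℝ) := by
        rw [← nsmul_eq_mul]
        exact Finset.card_nsmul_le_sum _ _ _ fun x hx => hU x (Finset.mem_inter.1 hx).1
      have hsum := Finset.sum_le_sum hdrop
      rw [Finset.sum_add_distrib, ← Finset.sum_div, hcount] at hsum
      have ht' : t ≤ (∑ x ∈ U ∩ S a, (#{b ∈ A | x ∈ S b} : ℝ)) / #(U ∩ S a) := by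
        rw [le_div_iff₀ (by exact_mod_cast hm)]
        linarith
      have hcard : (#(insert a B) : ℝ) ≤ #B + 1 := by
        exact_mod_cast Finset.card_insert_le a B
      have := mul_le_mul_of_nonneg_left hcard ht.le
      linarith
    · intro x hx
      rw [Finset.biUnion_insert, Finset.mem_union]
      by_cases hxa : x ∈ S a
      · exact Or.inl hxa
      · exact Or.inr (hcov (Finset.mem_sdiff.2 ⟨hx, hxa⟩))

/-- **A fractional-cover type lemma (after Lovász).**
Let `G` be a graph of maximum degree `Δ ≥ 2`, let `A ⊆ V` be finite and let `t ≥ 1`.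
Then there exists `B ⊆ A` of size at most `((1 + log Δ)/t)|A|` such that every vertex with
at least `t` neighbors in `A` has a neighbor in `B`. -/
theorem exists_small_cover {V : Type*} (G : SimpleGraph V) (Δ : ℕ) (hΔ : 2 ≤ Δ)
    (hfin : ∀ v : V, (G.neighborSet v).Finite)
    (hdeg : ∀ v : V, (G.neighborSet v).ncard ≤ Δ)
    (A : Set V) (hA : A.Finite) (t : ℝ) (ht : 1 ≤ t) :
    ∃ B : Set V, B ⊆ A ∧
      ((B.ncard : ℝ) ≤ (1 + Real.log Δ) / t * (A.ncard : ℝ)) ∧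
      {v : V | t ≤ ((G.neighborSet v ∩ A).ncard : ℝ)} ⊆ ⋃ b ∈ B, G.neighborSet b := by
  classical
  have ht0 : 0 < t := by linarith
  lift A to Finset V using hA
  let S : V → Finset V := fun a => (hfin a).toFinset
  have hS : ∀ a x, x ∈ S a ↔ G.Adj a x := fun a x => by simp [S]
  have hcnt : ∀ v, (G.neighborSet v ∩ (A : Set V)).ncard = (A.filter (v ∈ S ·)).card := by
    intro v
    rw [← Set.ncard_coe_finset]
    congr 1
    ext x
    simp [hS, G.adj_comm x v, and_comm]
  obtain ⟨B, hBA, hB, hcov⟩ := exists_greedy_cover S A t ht0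
    ((A.biUnion S).filter fun v => t ≤ ((A.filter (v ∈ S ·)).card : ℝ))
    fun u hu => (Finset.mem_filter.1 hu).2
  refine ⟨B, by exact_mod_cast hBA, ?_, ?_⟩
  · rw [Set.ncard_coe_finset, Set.ncard_coe_finset, div_mul_eq_mul_div, le_div_iff₀ ht0]
    have hterm : ∀ T : Finset V, ∀ a ∈ A,
        (harmonic (T ∩ S a).card : ℝ) ≤ 1 + Real.log Δ := by
      intro T a _
      have hle : (T ∩ S a).card ≤ Δ := by
        refine (Finset.card_le_card Finset.inter_subset_right).trans ?_
        have := hdeg a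
        rwa [Set.ncard_eq_toFinset_card _ (hfin a)] at this
      have h := harmonic_add_div_le Δ (T ∩ S a).card (Δ - (T ∩ S a).card) (by omega)
      rw [Nat.add_sub_cancel' hle] at h
      have hnn : (0 : ℝ) ≤ ((Δ - (T ∩ S a).card : ℕ) : ℝ) / Δ := by positivity
      linarith [harmonic_le_one_add_log Δ]
    have hsum := Finset.sum_le_card_nsmul A _ _ (hterm
      ((A.biUnion S).filter fun v => t ≤ ((A.filter (v ∈ S ·)).card : ℝ)))
    rw [nsmul_eq_mul] at hsum
    linarith
  · intro v hv
    rw [Set.mem_setOf_eq, hcnt] at hv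
    -- Since `t > 0`, such a vertex has a neighbour in `A`, so it lies in the finite set covered.
    have hpos : 0 < (A.filter (v ∈ S ·)).card := by exact_mod_cast ht0.trans_le hv
    obtain ⟨a, ha⟩ := Finset.card_pos.1 hpos
    rw [Finset.mem_filter] at ha
    have hx := hcov (Finset.mem_filter.2 ⟨Finset.mem_biUnion.2 ⟨a, ha.1, ha.2⟩, hv⟩)
    obtain ⟨b, hb, hvb⟩ := Finset.mem_biUnion.1 hx
    exact Set.mem_iUnion₂.2 ⟨b, hb, (hS b v).1 hvb⟩

end Stmt17
end
end

section
/- Let S ⊆ ℤ^d be an odd set and let {u,v} ∈ ∂S be a boundary edge. Then for any standard unit vector e ∈ ℤ^d, either {u, u+e} ∈ ∂S or {v, v+e} ∈ ∂S. In particular, |∂u ∩ ∂S| + |∂v ∩ ∂S| ≥ 2d, where ∂w denotes the set of 2d edges of ℤ^d incident to the vertex w. -/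
/-!
Say `u ∈ S` and `v ∉ S`, so that `u` lies in the internal boundary of `S` and is odd. If
`u + e ∉ S`, then `{u, u + e}` is a boundary edge. If `u + e ∈ S`, this vertex is even, hence not
in the internal boundary, so its neighbour `v + e` lies in `S` and `{v, v + e}` is a boundary edge
(`bdryEdge_translate`). Each of the `2d` directions `± eᵢ` therefore contributes a boundary edge at
`u` or at `v`, and distinct directions give distinct edges at a given vertex
(`ncard_directions_le`), which gives the degree bound.
-/

noncomputable section

namespace Stmt18

/-- Two vertices of `ℤ^d` are adjacent when their `ℓ¹`-distance is `1`. -/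
def ZdAdj {d : ℕ} (u v : Fin d → ℤ) : Prop := (∑ i, |u i - v i|) = 1

/-- The internal vertex boundary `∂•S = S ∩ N(S^c)`. -/
def intBdry {d : ℕ} (S : Set (Fin d → ℤ)) : Set (Fin d → ℤ) :=
  {v | v ∈ S ∧ ∃ w, w ∉ S ∧ ZdAdj v w}

/-- `S` is an odd set: its internal vertex boundary consists solely of odd vertices. -/
def IsOddSet {d : ℕ} (S : Set (Fin d → ℤ)) : Prop :=
  ∀ v ∈ intBdry S, Odd (∑ i, v i)

/-- The (unordered) pair `{a, b}` is an edge of the edge boundary `∂S`: `a` and `b` are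
adjacent and exactly one of them lies in `S`. -/
def BdryEdge {d : ℕ} (S : Set (Fin d → ℤ)) (a b : Fin d → ℤ) : Prop :=
  ZdAdj a b ∧ ((a ∈ S ∧ b ∉ S) ∨ (b ∈ S ∧ a ∉ S))

/-- A unit step flips the parity of the coordinate sum, since `|x| ≡ x` modulo `2`. -/
theorem odd_sum_of_unit {d : ℕ} (e : Fin d → ℤ) (he : (∑ i, |e i|) = 1) :
    Odd (∑ i, e i) := by
  have h : (2 : ℤ) ∣ ∑ i, (|e i| - e i) := by
    refine Finset.dvd_sum fun i _ => ?_
    rcases abs_choice (e i) with h | h <;> rw [h] <;> omega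
  rw [Finset.sum_sub_distrib, he] at h
  rw [Int.odd_iff]
  omega

theorem BdryEdge.symm {d : ℕ} {S : Set (Fin d → ℤ)} {a b : Fin d → ℤ}
    (h : BdryEdge S a b) : BdryEdge S b a :=
  ⟨by simpa only [ZdAdj, abs_sub_comm] using h.1, h.2.symm⟩

theorem zdAdj_add_unit {d : ℕ} (u e : Fin d → ℤ) (he : (∑ i, |e i|) = 1) :
    ZdAdj u (u + e) := by
  simpa [ZdAdj] using he

/-- The four-cycle property for an edge whose endpoint in `S` is named first. -/
theorem bdryEdge_translate {d : ℕ} {S : Set (Fin d → ℤ)} (hodd : IsOddSet S)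
    {u v : Fin d → ℤ} (huv : ZdAdj u v) (hu : u ∈ S) (hv : v ∉ S)
    (e : Fin d → ℤ) (he : (∑ i, |e i|) = 1) :
    BdryEdge S u (u + e) ∨ BdryEdge S v (v + e) := by
  by_cases hue : u + e ∈ S
  · refine Or.inr ⟨zdAdj_add_unit v e he, Or.inr ⟨?_, hv⟩⟩
    -- Otherwise `u + e` would be an even vertex of the internal boundary.
    by_contra hve
    have h1 := hodd u ⟨hu, v, hv, huv⟩
    have h2 := hodd (u + e) ⟨hue, v + e, hve, by simpa [ZdAdj] using huv⟩
    have h3 := odd_sum_of_unit e he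
    simp only [Pi.add_apply, Finset.sum_add_distrib] at h2
    rw [Int.odd_iff] at h1 h2 h3
    omega
  · exact Or.inl ⟨zdAdj_add_unit u e he, Or.inl ⟨hu, hue⟩⟩

theorem finite_bdryEdge {d : ℕ} (S : Set (Fin d → ℤ)) (u : Fin d → ℤ) :
    {w | BdryEdge S u w}.Finite := by
  refine (Set.finite_Icc (u - 1) (u + 1)).subset fun w hw => ?_
  have h (i : Fin d) : |u i - w i| ≤ 1 :=
    (Finset.single_le_sum (f := fun i => |u i - w i|) (fun i _ => abs_nonneg _)
      (Finset.mem_univ i)).trans_eq hw.1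
  constructor <;> intro i <;> have := abs_le.1 (h i) <;> simp <;> omega

/-- The `2d` signed standard unit vectors; the Boolean selects the sign. -/
def unitVec {d : ℕ} (p : Fin d × Bool) : Fin d → ℤ :=
  Pi.single p.1 (if p.2 then 1 else -1)

theorem sum_abs_unitVec {d : ℕ} (p : Fin d × Bool) : (∑ i, |unitVec p i|) = 1 := by
  rw [Finset.sum_eq_single p.1]
  · rw [unitVec, Pi.single_eq_same]; split_ifs <;> simp
  · intro i _ hi; simp [unitVec, hi]
  · simp

theorem unitVec_injective {d : ℕ} : Function.Injective (unitVec (d := d)) := by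
  rintro ⟨i, s⟩ ⟨j, t⟩ h
  have hi := congrFun h i
  by_cases hij : i = j
  · subst hij
    cases s <;> cases t <;> simp_all [unitVec]
  · cases s <;> simp [unitVec, hij] at hi

/-- Translation by `u` embeds the directions `p` with `{u, u + unitVec p} ∈ ∂S` into the
boundary edges at `u`. -/
theorem ncard_directions_le {d : ℕ} (S : Set (Fin d → ℤ)) (u : Fin d → ℤ) :
    {p | BdryEdge S u (u + unitVec p)}.ncard ≤ {w | BdryEdge S u w}.ncard :=
  Set.ncard_le_ncard_of_injOn (fun p => u + unitVec p) (fun _ hp => hp)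
    (fun _ _ _ _ h => unitVec_injective (add_left_cancel h)) (finite_bdryEdge S u)

/-- **The four-cycle property of odd sets.**
Let `S ⊆ ℤ^d` be an odd set and `{u,v} ∈ ∂S`. Then for any unit vector `e ∈ ℤ^d`, either
`{u, u+e} ∈ ∂S` or `{v, v+e} ∈ ∂S`. In particular
`|∂u ∩ ∂S| + |∂v ∩ ∂S| ≥ 2d`. -/
theorem four_cycle_property (d : ℕ) (S : Set (Fin d → ℤ)) (hodd : IsOddSet S)
    (u v : Fin d → ℤ) (huv : BdryEdge S u v) :
    (∀ e : Fin d → ℤ, (∑ i, |e i|) = 1 →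
      (BdryEdge S u (u + e) ∨ BdryEdge S v (v + e))) ∧
    2 * d ≤ {w | BdryEdge S u w}.ncard + {w | BdryEdge S v w}.ncard := by
  have key (e : Fin d → ℤ) (he : (∑ i, |e i|) = 1) :
      BdryEdge S u (u + e) ∨ BdryEdge S v (v + e) := by
    rcases huv.2 with ⟨hu, hv⟩ | ⟨hv, hu⟩
    · exact bdryEdge_translate hodd huv.1 hu hv e he
    · exact (bdryEdge_translate hodd huv.symm.1 hv hu e he).symm
  refine ⟨key, ?_⟩
  have hcover : {p | BdryEdge S u (u + unitVec p)} ∪ {p | BdryEdge S v (v + unitVec p)}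
      = Set.univ :=
    Set.eq_univ_of_forall fun p => key _ (sum_abs_unitVec p)
  calc 2 * d = (Set.univ : Set (Fin d × Bool)).ncard := by
        simp [Set.ncard_univ, mul_comm]
    _ ≤ _ := hcover ▸ Set.ncard_union_le _ _
    _ ≤ _ := add_le_add (ncard_directions_le S u) (ncard_directions_le S v)

end Stmt18
end
end

section
/- Let S ⊆ ℤ^d be an odd set and define the set of revealed vertices S^rev := {v ∈ ℤ^d : |∂v ∩ ∂S| ≥ d}. Then S^rev separates S, i.e., every edge in ∂S has an endpoint in S^rev. -/
/-!
Write the boundary edge as `{u, v}` with `u ∈ S`, `v ∉ S`; then `u` is odd. Take any of the `2d`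
signed unit vectors `f`. If `u + f ∈ S`, then `u + f` is even, hence not in the internal boundary
of the odd set `S`, so its neighbour `v + f` also lies in `S`. Thus for every `f`, either
`{u, u + f}` or `{v, v + f}` is a boundary edge (`bdryEdge_or_bdryEdge_translate`), and by pigeonhole one of
`u`, `v` is incident to at least `d` of them.
-/

noncomputable section

namespace Stmt19

/-- Two vertices of `ℤ^d` are adjacent when their `ℓ¹`-distance is `1`. -/
def ZdAdj {d : ℕ} (u v : Fin d → ℤ) : Prop := (∑ i, |u i - v i|) = 1

/-- The internal vertex boundary `∂•S = S ∩ N(S^c)`. -/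
def intBdry {d : ℕ} (S : Set (Fin d → ℤ)) : Set (Fin d → ℤ) :=
  {v | v ∈ S ∧ ∃ w, w ∉ S ∧ ZdAdj v w}

/-- `S` is an odd set: its internal vertex boundary consists solely of odd vertices. -/
def IsOddSet {d : ℕ} (S : Set (Fin d → ℤ)) : Prop :=
  ∀ v ∈ intBdry S, Odd (∑ i, v i)

/-- The (unordered) pair `{a, b}` is an edge of the edge boundary `∂S`: `a` and `b` are
adjacent and exactly one of them lies in `S`. -/
def BdryEdge {d : ℕ} (S : Set (Fin d → ℤ)) (a b : Fin d → ℤ) : Prop :=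
  ZdAdj a b ∧ ((a ∈ S ∧ b ∉ S) ∨ (b ∈ S ∧ a ∉ S))

/-- The set of revealed vertices of `S`: vertices `v` with `|∂v ∩ ∂S| ≥ d`, i.e. incident
to at least `d` boundary edges of `S`. -/
def revealed {d : ℕ} (S : Set (Fin d → ℤ)) : Set (Fin d → ℤ) :=
  {v | d ≤ {w | BdryEdge S v w}.ncard}

/-- The signed standard basis vectors `± eᵢ`, indexed by a coordinate and a sign. -/
def unitVec {d : ℕ} (p : Fin d × Bool) : Fin d → ℤ := Pi.single p.1 (if p.2 then 1 else -1)

lemma unitVec_injective {d : ℕ} : Function.Injective (unitVec (d := d)) := by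
  rintro ⟨i, b⟩ ⟨j, c⟩ h
  have hi := congrFun h i
  by_cases hij : i = j
  · subst hij
    cases b <;> cases c <;> simp [unitVec] at hi ⊢
  · cases b <;> simp [unitVec, hij] at hi

lemma zdAdj_symm {d : ℕ} {u v : Fin d → ℤ} (h : ZdAdj u v) : ZdAdj v u := by
  unfold ZdAdj at *
  simpa only [abs_sub_comm] using h

lemma zdAdj_add_right {d : ℕ} {u v : Fin d → ℤ} (h : ZdAdj u v) (f : Fin d → ℤ) :
    ZdAdj (u + f) (v + f) := by
  simpa [ZdAdj] using h

lemma zdAdj_add_unitVec {d : ℕ} (u : Fin d → ℤ) (p : Fin d × Bool) :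
    ZdAdj u (u + unitVec p) := by
  obtain ⟨i, b⟩ := p
  unfold ZdAdj
  rw [Finset.sum_eq_single i]
  · cases b <;> simp [unitVec]
  · intro j _ hj
    simp [unitVec, hj]
  · simp

/-- The lattice is bipartite: adjacent vertices have opposite parities. -/
lemma not_odd_of_zdAdj {d : ℕ} {u v : Fin d → ℤ} (h : ZdAdj u v) (hu : Odd (∑ i, u i)) :
    ¬ Odd (∑ i, v i) := by
  have key : Even (∑ i, (|u i - v i| - (u i - v i))) := by
    refine Finset.even_sum _ fun i _ => ?_
    rcases abs_choice (u i - v i) with h | h <;> rw [h]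
    · simp
    · exact ⟨-(u i - v i), by ring⟩
  unfold ZdAdj at h
  rw [Finset.sum_sub_distrib, Finset.sum_sub_distrib, h] at key
  grind

lemma finite_bdryEdge {d : ℕ} (S : Set (Fin d → ℤ)) (v : Fin d → ℤ) :
    {w | BdryEdge S v w}.Finite := by
  refine (Set.finite_Icc (v - 1) (v + 1)).subset fun w hw => ?_
  have h : ∀ i, |v i - w i| ≤ 1 := fun i =>
    (Finset.single_le_sum (f := fun i => |v i - w i|) (fun i _ => abs_nonneg _)
      (Finset.mem_univ i)).trans hw.1.le
  constructor <;> intro i <;> have := abs_le.1 (h i) <;> simp <;> linarith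

lemma card_le_ncard_bdryEdge {d : ℕ} (S : Set (Fin d → ℤ)) (v : Fin d → ℤ)
    (T : Finset (Fin d × Bool)) (hT : ∀ p ∈ T, BdryEdge S v (v + unitVec p)) :
    T.card ≤ {w | BdryEdge S v w}.ncard := by
  rw [← Set.ncard_coe_finset]
  exact Set.ncard_le_ncard_of_injOn (fun p => v + unitVec p) hT
    (fun p _ q _ h => unitVec_injective (add_left_cancel h)) (finite_bdryEdge S v)

/-- In each direction, one of the two endpoints of a boundary edge of an odd set is incident to a
boundary edge. -/
lemma bdryEdge_or_bdryEdge_translate {d : ℕ} {S : Set (Fin d → ℤ)} (hodd : IsOddSet S)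
    {u v : Fin d → ℤ} (hu : u ∈ S) (hv : v ∉ S) (h : ZdAdj u v) (p : Fin d × Bool) :
    BdryEdge S u (u + unitVec p) ∨ BdryEdge S v (v + unitVec p) := by
  have hau := zdAdj_add_unitVec u p
  by_cases huS : u + unitVec p ∈ S
  · refine Or.inr ⟨zdAdj_add_unitVec v p, Or.inr ⟨?_, hv⟩⟩
    by_contra hvS
    exact not_odd_of_zdAdj hau (hodd u ⟨hu, v, hv, h⟩)
      (hodd _ ⟨huS, _, hvS, zdAdj_add_right h _⟩)
  · exact Or.inl ⟨hau, Or.inl ⟨hu, huS⟩⟩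

lemma revealed_of_mem_of_notMem {d : ℕ} {S : Set (Fin d → ℤ)} (hodd : IsOddSet S)
    {u v : Fin d → ℤ} (hu : u ∈ S) (hv : v ∉ S) (h : ZdAdj u v) :
    u ∈ revealed S ∨ v ∈ revealed S := by
  classical
  have h1 := card_le_ncard_bdryEdge S u
    (Finset.univ.filter fun p => BdryEdge S u (u + unitVec p)) (by simp)
  have h2 := card_le_ncard_bdryEdge S v
    (Finset.univ.filter fun p => ¬ BdryEdge S u (u + unitVec p)) fun p hp =>
      (bdryEdge_or_bdryEdge_translate hodd hu hv h p).resolve_left (Finset.mem_filter.1 hp).2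
  have h3 := Finset.card_filter_add_card_filter_not (s := (Finset.univ : Finset (Fin d × Bool)))
    (fun p => BdryEdge S u (u + unitVec p))
  simp only [Finset.card_univ, Fintype.card_prod, Fintype.card_fin, Fintype.card_bool] at h3
  simp only [revealed, Set.mem_ofPred_eq]
  omega

/-- **Revealed vertices separate an odd set.**
Let `S ⊆ ℤ^d` be an odd set. Then `S^rev` separates `S`: every edge of `∂S` has an
endpoint in `S^rev`. -/
theorem revealed_separates (d : ℕ) (S : Set (Fin d → ℤ)) (hodd : IsOddSet S)
    (u v : Fin d → ℤ) (huv : BdryEdge S u v) :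
    u ∈ revealed S ∨ v ∈ revealed S := by
  rcases huv with ⟨h, ⟨hu, hv⟩ | ⟨hv, hu⟩⟩
  · exact revealed_of_mem_of_notMem hodd hu hv h
  · exact (revealed_of_mem_of_notMem hodd hv hu (zdAdj_symm h)).symm

end Stmt19
end
end
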